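/- arXiv:1308.3055 — 8 statements merged into one kernel-verified Lean document; each statement's English description precedes it below -/
import Mathlib

section
/- Let K be a (nontrivial) commutative integral domain, n a natural number, and a an n×n matrix over K. Let ã denote the K-linear endomorphism of the K-module of n×n matrices over K given by left multiplication x ↦ a·x. Then the characteristic polynomial of the linear map ã equals the n-th power of the characteristic polynomial of the matrix a: charpoly(ã) = (charpoly(a))^n. -/
/-!
Left multiplication by `a` acts on each column of `x` separately, as `a` itself. Hence in the
basis of matrix units it is represented by the block diagonal matrix with `n` blocks equal to `a`,
and its characteristic matrix is block diagonal with `n` blocks equal to that of `a`; take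
determinants.
-/

theorem toMatrix_mulLeft_stdBasis {K : Type*} [CommRing K] {n : ℕ}
    (a : Matrix (Fin n) (Fin n) K) :
    LinearMap.toMatrix (Matrix.stdBasis K (Fin n) (Fin n)) (Matrix.stdBasis K (Fin n) (Fin n))
      (LinearMap.mulLeft K a) = Matrix.blockDiagonal fun _ : Fin n => a := by
  ext ⟨i, k⟩ ⟨j, l⟩
  have repr_apply (x : Matrix (Fin n) (Fin n) K) :
      (Matrix.stdBasis K (Fin n) (Fin n)).repr x (i, k) = x i k := by
    simp [Matrix.stdBasis, Pi.basis_repr]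
  rw [LinearMap.toMatrix_apply, repr_apply, Matrix.blockDiagonal_apply,
    LinearMap.mulLeft_apply, Matrix.stdBasis_eq_single]
  by_cases h : k = l
  · subst h
    simp
  · simp [h]

theorem charmatrix_blockDiagonal_const {K : Type*} [CommRing K] {n : ℕ}
    (a : Matrix (Fin n) (Fin n) K) :
    (Matrix.blockDiagonal fun _ : Fin n => a).charmatrix =
      Matrix.blockDiagonal fun _ : Fin n => a.charmatrix := by
  ext1 ⟨i, k⟩ ⟨j, l⟩
  by_cases h : k = l <;> by_cases hij : i = j <;>
    simp [Matrix.blockDiagonal_apply, h, hij]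

/-- Over a (nontrivial) commutative integral domain `K`, the characteristic polynomial
of the left-multiplication operator `ã : x ↦ a * x` on `n × n` matrices equals the `n`-th
power of the characteristic polynomial of the matrix `a`. -/
theorem stmt1 (K : Type*) [CommRing K] [IsDomain K] (n : ℕ)
    (a : Matrix (Fin n) (Fin n) K) :
    (LinearMap.mulLeft K a).charpoly = a.charpoly ^ n := by
  rw [← LinearMap.charpoly_toMatrix _ (Matrix.stdBasis K (Fin n) (Fin n)),
    toMatrix_mulLeft_stdBasis, Matrix.charpoly, charmatrix_blockDiagonal_const,
    Matrix.det_blockDiagonal, Finset.prod_const, Finset.card_univ, Fintype.card_fin,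
    Matrix.charpoly]
end

section
/- Let F be a field of characteristic p > 0, let a be an n×n matrix over F with characteristic polynomial charpoly(a) = ∑_i α_i λ^i, and let q̄ = p^m be any power of p. Then the characteristic polynomial of the matrix a^q̄ is ∑_i α_i^q̄ λ^i; that is, for every i, the i-th coefficient of charpoly(a^(p^m)) equals the (p^m)-th power of the i-th coefficient of charpoly(a). -/
/-!
With `q = p ^ m`, in characteristic `p` one has `X ^ q - a ^ q = (X - a) ^ q`, because `X` commutes
with `a`. Taking determinants gives `charpoly (a ^ q) (X ^ q) = charpoly a (X) ^ q`
(`expand_charpoly_pow_char_pow`). The right-hand side is `∑ αᵢ ^ q X ^ (q i)` by Frobenius, so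
comparing coefficients of `X ^ (q i)` yields the claim.
-/

open Polynomial in
/-- Substituting `X ^ q` in the characteristic polynomial of `a ^ q` gives `det (X ^ q - a ^ q)`, which is
`det (X - a) ^ q`. -/
theorem expand_charpoly_pow_char_pow {F : Type*} [Field F] (p : ℕ) [Fact p.Prime] [CharP F p]
    (n m : ℕ) (a : Matrix (Fin n) (Fin n) F) :
    expand F (p ^ m) (a ^ p ^ m).charpoly = a.charpoly ^ p ^ m := by
  cases isEmpty_or_nonempty (Fin n)
  · simp [Matrix.charpoly]
  · unfold Matrix.charpoly
    rw [AlgHom.map_det, ← Matrix.det_pow]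
    apply congr_arg Matrix.det
    -- In `(Matrix (Fin n) (Fin n) F)[X]` the image `X - C a` of the
    -- characteristic matrix is a difference of commuting elements.
    refine matPolyEquiv.injective ?_
    rw [map_pow, Matrix.matPolyEquiv_charmatrix, sub_pow_char_pow_of_commute, ← C_pow]
    · exact (id (matPolyEquiv_eq_X_pow_sub_C (p ^ m) a) :)
    · exact (C a).commute_X

/-- Over a field `F` of characteristic `p > 0`, if `charpoly a = ∑ αᵢ λ^i`, then
`charpoly (a ^ p^m) = ∑ αᵢ^(p^m) λ^i`: each coefficient of the characteristic polynomial
of `a ^ q̄` is the `q̄`-th power of the corresponding coefficient of `charpoly a`,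
where `q̄ = p^m`. -/
theorem stmt2 (F : Type*) [Field F] (p : ℕ) [Fact p.Prime] [CharP F p]
    (n m : ℕ) (a : Matrix (Fin n) (Fin n) F) (i : ℕ) :
    (Matrix.charpoly (a ^ p ^ m)).coeff i = ((Matrix.charpoly a).coeff i) ^ p ^ m := by
  have hq : 0 < p ^ m := pow_pos (Fact.out : p.Prime).pos m
  have h := congr_arg (fun f => Polynomial.coeff f (i * p ^ m))
    (expand_charpoly_pow_char_pow p n m a)
  simp only [← Polynomial.map_iterateFrobenius_expand p, Polynomial.coeff_map,
    Polynomial.coeff_expand_mul hq, iterateFrobenius_def] at h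
  exact h
end

section
/- Let F be a field, n a natural number, and a an n×n matrix over F. Let ã denote the F-linear endomorphism of the space of n×n matrices over F given by left multiplication x ↦ a·x. Then every coefficient of the characteristic polynomial of the matrix a is integral over the subring of F generated by the coefficients of the characteristic polynomial of the linear map ã. -/
/-!
In the basis of matrix units, `ã` is block diagonal with `n` copies of `a` on the diagonal, since
left multiplication acts on each column separately. Hence the characteristic polynomial of `ã` is
the `n`-th power of that of `a` (`charpoly_mulLeft`), and for `n ≠ 0` the latter divides the former.
A monic divisor of a monic polynomial over a subring has coefficients integral over that subring
(`Polynomial.isIntegral_coeff_of_dvd`). For `n = 0` the characteristic polynomial of `a` is `1`.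
-/

theorem charpoly_blockDiagonal_const {R : Type*} [CommRing R] {m o : Type*} [Fintype m]
    [DecidableEq m] [Fintype o] [DecidableEq o] (a : Matrix m m R) :
    (Matrix.blockDiagonal fun _ : o => a).charpoly = a.charpoly ^ Fintype.card o := by
  have h : (Matrix.blockDiagonal fun _ : o => a).charmatrix =
      Matrix.blockDiagonal fun _ : o => a.charmatrix := by
    ext1 ⟨i, k⟩ ⟨j, l⟩
    by_cases hkl : k = l <;> by_cases hij : i = j <;>
      simp [Matrix.blockDiagonal_apply, hkl, hij]
  rw [Matrix.charpoly, h, Matrix.det_blockDiagonal, Finset.prod_const, Finset.card_univ,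
    Matrix.charpoly]

theorem charpoly_mulLeft {R : Type*} [CommRing R] {m : Type*} [Fintype m] [DecidableEq m]
    (a : Matrix m m R) :
    (LinearMap.mulLeft R a).charpoly = a.charpoly ^ Fintype.card m := by
  have h : LinearMap.toMatrix (Matrix.stdBasis R m m) (Matrix.stdBasis R m m)
      (LinearMap.mulLeft R a) = Matrix.blockDiagonal fun _ : m => a := by
    ext ⟨i, k⟩ ⟨j, l⟩
    have hrepr (x : Matrix m m R) : (Matrix.stdBasis R m m).repr x (i, k) = x i k := by
      simp [Matrix.stdBasis]
    rw [LinearMap.toMatrix_apply, hrepr, Matrix.stdBasis_eq_single, LinearMap.mulLeft_apply,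
      Matrix.blockDiagonal_apply]
    by_cases hkl : k = l
    · subst hkl
      simp
    · simp [hkl]
  rw [← LinearMap.charpoly_toMatrix _ (Matrix.stdBasis R m m), h, charpoly_blockDiagonal_const]

/-- The characteristic coefficients of a matrix `a` over a field `F` are integral over the
subring of `F` generated by the characteristic coefficients of the left-multiplication
operator `ã = LinearMap.mulLeft F a` on `n × n` matrices. -/
theorem stmt3 (F : Type*) [Field F] (n : ℕ) (a : Matrix (Fin n) (Fin n) F) (i : ℕ) :
    IsIntegral (Subring.closure (Set.range (LinearMap.mulLeft F a).charpoly.coeff))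
      ((Matrix.charpoly a).coeff i) := by
  rcases Nat.eq_zero_or_pos n with rfl | hn
  · rw [Matrix.charpoly, Matrix.det_isEmpty, Polynomial.coeff_one]
    split_ifs
    · exact isIntegral_one
    · exact isIntegral_zero
  · set p := (LinearMap.mulLeft F a).charpoly with hp
    have hcoeff : (p.coeffs : Set F) ⊆ Subring.closure (Set.range p.coeff) := by
      intro x hx
      obtain ⟨k, -, rfl⟩ := Polynomial.mem_coeffs_iff.mp hx
      exact Subring.subset_closure ⟨k, rfl⟩
    refine Polynomial.isIntegral_coeff_of_dvd (p.toSubring _ hcoeff) _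
      ((Polynomial.monic_toSubring _ _ _).mpr (LinearMap.charpoly_monic _))
      (Matrix.charpoly_monic a) ?_ i
    have hmap : (p.toSubring _ hcoeff).map
        (algebraMap (Subring.closure (Set.range p.coeff)) F) = p := by
      ext k
      rw [Polynomial.coeff_map]
      exact Polynomial.coeff_toSubring _ _ _
    rw [hmap, hp, charpoly_mulLeft, Fintype.card_fin]
    exact dvd_pow_self _ hn.ne'
end

section
/- Let F be a field of characteristic p > 0, and let n, m be natural numbers with n ≤ p^m. Then for every n×n matrix a over F, the F-linear endomorphism of F^n determined by the matrix a^(p^m) is semisimple: every subspace of F^n invariant under this endomorphism has an invariant complement. -/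
/-!
Let `q = p ^ m`. Any endomorphism annihilated by a squarefree polynomial is semisimple, so it is
enough to find a squarefree `Q` with `Q (X ^ q)` divisible by the characteristic polynomial of `a`.

For a power `f ^ e` of an irreducible polynomial of degree at most `q`, write
`f = g (X ^ (p ^ k))` with `g` separable. Since `e * p ^ k ≤ p ^ m`, either `e = 0` or `k ≤ m`
and `e ≤ p ^ (m - k)`, so `f ^ e` divides `f ^ (p ^ (m - k)) = G (X ^ q)`, where `G` is obtained
from `g` by raising all coefficients to the power `p ^ (m - k)`; `G` is again separable. Coprime
factors are combined by taking the radical of a product.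
-/

open Polynomial in
lemma exists_squarefree_dvd_expand_of_irreducible_pow {F : Type*} [Field F] (p : ℕ)
    [Fact p.Prime] [CharP F p] (m : ℕ) {f : F[X]} (hf : Irreducible f) (e : ℕ)
    (h : (f ^ e).natDegree ≤ p ^ m) :
    ∃ Q : F[X], Squarefree Q ∧ f ^ e ∣ expand F (p ^ m) Q := by
  have hp : p.Prime := Fact.out
  rcases Nat.eq_zero_or_pos e with rfl | he
  · exact ⟨1, squarefree_one, by simp⟩
  obtain ⟨k, g, hg, hgf⟩ := exists_separable_of_irreducible p hf hp.ne_zero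
  have hgpos : 0 < g.natDegree := by
    have h1 := hf.natDegree_pos
    rw [← hgf, natDegree_expand] at h1
    exact Nat.pos_of_mul_pos_right h1
  have hle : e * p ^ k ≤ p ^ m := by
    rw [natDegree_pow, ← hgf, natDegree_expand] at h
    calc e * p ^ k ≤ e * (g.natDegree * p ^ k) := by
          gcongr; exact Nat.le_mul_of_pos_left _ hgpos
      _ ≤ p ^ m := h
  have hkm : k ≤ m := (Nat.pow_le_pow_iff_right hp.one_lt).1
    ((Nat.le_mul_of_pos_left _ he).trans hle)
  obtain ⟨j, rfl⟩ := Nat.exists_eq_add_of_le hkm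
  have hej : e ≤ p ^ j := by
    rw [pow_add, mul_comm (p ^ k)] at hle
    exact Nat.le_of_mul_le_mul_right hle (pow_pos hp.pos k)
  refine ⟨g.map (iterateFrobenius F p j), hg.map.squarefree, ?_⟩
  have key : expand F (p ^ (k + j)) (g.map (iterateFrobenius F p j)) = f ^ p ^ j := by
    rw [← hgf, ← map_pow, pow_add, expand_mul, ← map_expand,
      map_iterateFrobenius_expand]
  rw [key]
  exact pow_dvd_pow _ hej

open Polynomial in
lemma exists_squarefree_dvd_expand {F : Type*} [Field F] (p : ℕ)
    [Fact p.Prime] [CharP F p] (m : ℕ) (f : F[X]) (hf : f ≠ 0) (h : f.natDegree ≤ p ^ m) :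
    ∃ Q : F[X], Squarefree Q ∧ f ∣ expand F (p ^ m) Q := by
  induction f using UniqueFactorizationMonoid.induction_on_coprime with
  | h0 => exact absurd rfl hf
  | h1 hu => exact ⟨1, squarefree_one, hu.dvd⟩
  | hpr e hq => exact exists_squarefree_dvd_expand_of_irreducible_pow p m hq.irreducible e h
  | @hcp x y hxy ihx ihy =>
    have hx : x ≠ 0 := left_ne_zero_of_mul hf
    have hy : y ≠ 0 := right_ne_zero_of_mul hf
    rw [natDegree_mul hx hy] at h
    obtain ⟨A, hA, hxA⟩ := ihx hx (by omega)
    obtain ⟨B, hB, hyB⟩ := ihy hy (by omega)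
    have hAB : A * B ≠ 0 := mul_ne_zero hA.ne_zero hB.ne_zero
    obtain ⟨r, hr, hAr, hBr⟩ : ∃ r : F[X], Squarefree r ∧ A ∣ r ∧ B ∣ r := by
      classical
      exact ⟨UniqueFactorizationMonoid.radical (A * B),
        UniqueFactorizationMonoid.squarefree_radical,
        (UniqueFactorizationMonoid.dvd_radical_iff hA.isRadical hAB).2 (dvd_mul_right A B),
        (UniqueFactorizationMonoid.dvd_radical_iff hB.isRadical hAB).2 (dvd_mul_left B A)⟩
    have hexp : ∀ C : F[X], C ∣ r → expand F (p ^ m) C ∣ expand F (p ^ m) r := by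
      rintro C ⟨D, hD⟩
      exact ⟨expand F (p ^ m) D, by rw [hD, map_mul]⟩
    exact ⟨r, hr, hxy.mul_dvd (hxA.trans (hexp A hAr)) (hyB.trans (hexp B hBr))⟩

/-- Over a field `F` of characteristic `p > 0`, if `n ≤ p^m`, then for every `n × n` matrix
`a` over `F` the linear endomorphism of `F^n` determined by `a ^ p^m` is semisimple: every
invariant subspace has an invariant complement. -/
theorem stmt5 (F : Type*) [Field F] (p : ℕ) [Fact p.Prime] [CharP F p]
    (n m : ℕ) (h : n ≤ p ^ m) (a : Matrix (Fin n) (Fin n) F) :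
    Module.End.IsSemisimple (Matrix.toLin' (a ^ p ^ m)) := by
  obtain ⟨Q, hQ, R, hR⟩ := exists_squarefree_dvd_expand p m a.charpoly
    a.charpoly_monic.ne_zero (by simpa [Matrix.charpoly_natDegree_eq_dim] using h)
  refine Module.End.isSemisimple_of_squarefree_aeval_eq_zero hQ ?_
  have h0 : Polynomial.aeval (a ^ p ^ m) Q = 0 := by
    rw [← Polynomial.expand_aeval, hR, map_mul, Matrix.aeval_self_charpoly, zero_mul]
  change Polynomial.aeval ((Matrix.toLinAlgEquiv' : _ ≃ₐ[F] _).toAlgHom (a ^ p ^ m)) Q = 0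
  rw [Polynomial.aeval_algHom_apply, h0, map_zero]
end

section
/- Let C be a commutative ring, z ∈ C, and f : M → N a C-linear map of C-modules. Suppose M has z-torsion index at most k, i.e., for all a ∈ M and all j, z^(k+j) • a = 0 implies z^k • a = 0. Let S be the multiplicative submonoid of C generated by z, and suppose the induced map of localized modules f' : S⁻¹M → S⁻¹N is injective. Then the restriction of f to z^k·M is injective: for every a ∈ M, if f(z^k • a) = 0 then z^k • a = 0. -/
/-- Suppose `M` has `z`-torsion index at most `k`, and the induced map on localizations at
the powers of `z` is injective. Then the restriction of `f` to `z^k·M` is injective: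
`f (z^k • a) = 0` implies `z^k • a = 0`. -/
theorem stmt9 (C : Type*) [CommRing C] (M N : Type*) [AddCommGroup M] [Module C M]
    [AddCommGroup N] [Module C N] (z : C) (k : ℕ) (f : M →ₗ[C] N)
    (htor : ∀ (a : M) (j : ℕ), z ^ (k + j) • a = 0 → z ^ k • a = 0)
    (hinj : Function.Injective (LocalizedModule.map (Submonoid.powers z) f)) :
    ∀ a : M, f (z ^ k • a) = 0 → z ^ k • a = 0 := by
  intro a ha
  -- `z ^ k • a` vanishes in the localization of `M`, since its image under the induced map does.
  have h0 : LocalizedModule.mk (z ^ k • a) (1 : Submonoid.powers z) = 0 := by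
    apply hinj
    rw [LocalizedModule.map_mk, ha, LocalizedModule.zero_mk, map_zero]
  -- Hence some `z ^ j` kills `z ^ k • a`, and the bound on the torsion index applies.
  rw [← LocalizedModule.mkLinearMap_apply,
    IsLocalizedModule.eq_zero_iff (Submonoid.powers z)] at h0
  obtain ⟨⟨_, j, rfl⟩, hj⟩ := h0
  refine htor a j ?_
  rw [add_comm, pow_add, mul_smul]
  exact hj
end

section
/- Let C be a commutative ring, z ∈ C, and f : M → N a C-linear map of C-modules. Suppose M has z-torsion index at most k, i.e., for all a ∈ M and all j, z^(k+j) • a = 0 implies z^k • a = 0. Suppose the induced map M/z^k·M → N/z^k·N is injective (explicitly: for every a ∈ M, f(a) ∈ z^k·N implies a ∈ z^k·M), and that the induced map of localized modules f' : S⁻¹M → S⁻¹N is injective, where S is the multiplicative submonoid generated by z. Then f itself is injective. -/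
/-- Suppose `M` has `z`-torsion index at most `k`, the induced map `M/z^k·M → N/z^k·N` is
injective, and the induced map of modules localized at the powers of `z` is injective.
Then `f` itself is injective. -/
theorem stmt10 (C : Type*) [CommRing C] (M N : Type*) [AddCommGroup M] [Module C M]
    [AddCommGroup N] [Module C N] (z : C) (k : ℕ) (f : M →ₗ[C] N)
    (htor : ∀ (a : M) (j : ℕ), z ^ (k + j) • a = 0 → z ^ k • a = 0)
    (hquot : ∀ a : M, (∃ c : N, f a = z ^ k • c) → ∃ b : M, a = z ^ k • b)
    (hinj : Function.Injective (LocalizedModule.map (Submonoid.powers z) f)) :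
    Function.Injective f := by
  rw [injective_iff_map_eq_zero]
  intro a ha
  -- `a` dies in the localization, hence is killed by some power of `z`.
  have hloc : LocalizedModule.mk a (1 : Submonoid.powers z) = 0 := by
    apply hinj
    rw [map_zero, LocalizedModule.map_mk, ha, LocalizedModule.zero_mk]
  rw [← LocalizedModule.zero_mk (1 : Submonoid.powers z), LocalizedModule.mk_eq] at hloc
  obtain ⟨⟨_, n, rfl⟩, hn⟩ := hloc
  simp only [one_smul, smul_zero, Submonoid.smul_def] at hn
  -- Since `f a = 0` lies in `z ^ k • N`, `a = z ^ k • b`, and `z ^ (k + n) • b = 0`.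
  obtain ⟨b, rfl⟩ := hquot a ⟨0, by rw [ha, smul_zero]⟩
  exact htor b n (by rwa [add_comm, pow_add, mul_smul])
end

section
/- (Shirshov-type finiteness theorem) Let C be a commutative ring and A a unital associative C-algebra generated as a C-algebra by elements a_1, …, a_ℓ, and suppose A satisfies a proper multilinear identity of degree d. Let M be a (left) A-module and C_1 a commutative C-subalgebra of A such that: (a) for each i, each c ∈ C_1, and each m ∈ M, (a_i·c − c·a_i) • m = 0; and (b) every word w = a_{i_1}⋯a_{i_s} in the generators of length 1 ≤ s ≤ d is integral over C_1 with respect to M, i.e., there exist n ≥ 1 and c_0, …, c_{n−1} ∈ C_1 such that (w^n + c_{n−1}·w^{n−1} + ⋯ + c_1·w + c_0) • m = 0 for all m ∈ M. Then A modulo the annihilator of M is a finitely generated C_1-module: there exist finitely many b_1, …, b_t ∈ A such that for every x ∈ A there are c_1, …, c_t ∈ C_1 with (x − (c_1·b_1 + ⋯ + c_t·b_t)) • m = 0 for all m ∈ M. -/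
/-!
Words in the generators are ordered by length and then lexicographically. Modulo the annihilator
of `M`, the subring `C₁` is central (`commutator_mem_ann`), and two kinds of words are
`C₁`-combinations of smaller ones:

* words with a factor `w₁ ⋯ w_d` that strictly decreases under every nontrivial permutation of
  the `w_i`, by the multilinear identity (`decomposable_mem`);
* words with a factor `uⁿ`, where `1 ≤ |u| ≤ d` and `n` is the degree of integrality of `u`
  (`power_mem`).

Shirshov's lemma (`shirshov`) says that every sufficiently long word is of one of these kinds, so
the finitely many shorter words span. To prove it, cut a long word into blocks of a fixed length;
by the pigeonhole principle some block `v` occurs `d` times. If `v` has `d` distinct factors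
`u₁ > ⋯ > u_d` of length `d`, locate `u_i` in the `i`-th occurrence of `v` and cut the word at the
beginnings of the `u_i`: the pieces start with `u₁ > ⋯ > u_d`, which gives a factor of the first
kind. Otherwise `v` has at most `d` factors of length `d`, and the Morse–Hedlund argument on factor
complexity gives `v` a period at most `d` (`exists_power_of_few_factors`), hence a large power.
-/

/-! ### The ordering of words -/

/-- The value of a word, read as a numeral in base `ℓ + 1` with digits `1, …, ℓ`, most significant
letter first. It orders words first by length and then lexicographically. -/
def wordVal {ℓ : ℕ} : List (Fin ℓ) → ℕ
  | [] => 0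
  | x :: w => ((x : ℕ) + 1) * (ℓ + 1) ^ w.length + wordVal w

theorem wordVal_append {ℓ : ℕ} (u v : List (Fin ℓ)) :
    wordVal (u ++ v) = wordVal u * (ℓ + 1) ^ v.length + wordVal v := by
  induction u with
  | nil => simp [wordVal]
  | cons x u ih => simp only [List.cons_append, wordVal, ih, List.length_append, pow_add]; ring

theorem wordVal_lt {ℓ : ℕ} (u : List (Fin ℓ)) : wordVal u < (ℓ + 1) ^ u.length := by
  induction u with
  | nil => simp [wordVal]
  | cons x u ih =>
    have hx : (x : ℕ) + 1 ≤ ℓ := x.2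
    have := Nat.mul_le_mul_right ((ℓ + 1) ^ u.length) hx
    simp only [wordVal, List.length_cons, pow_succ]
    linarith

/-- Same-length prefixes decide the comparison of two words of equal length. -/
theorem wordVal_append_lt {ℓ : ℕ} {u v p q : List (Fin ℓ)} (hpq : p.length = q.length)
    (h : wordVal u < wordVal v) : wordVal (u ++ p) < wordVal (v ++ q) := by
  rw [wordVal_append, wordVal_append, hpq]
  have h1 := wordVal_lt p
  rw [hpq] at h1
  have := Nat.mul_le_mul_right ((ℓ + 1) ^ q.length) (Nat.succ_le_of_lt h)
  rw [Nat.succ_mul] at this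
  linarith

theorem wordVal_lt_of_length_lt {ℓ : ℕ} {u v : List (Fin ℓ)} (h : u.length < v.length) :
    wordVal u < wordVal v := by
  cases v with
  | nil => simp at h
  | cons x v =>
    have h1 := wordVal_lt u
    have h2 : (ℓ + 1) ^ u.length ≤ (ℓ + 1) ^ v.length :=
      Nat.pow_le_pow_right (by omega) (by simpa [Nat.lt_succ_iff] using h)
    have h3 := Nat.mul_le_mul_right ((ℓ + 1) ^ v.length) (show 1 ≤ (x : ℕ) + 1 by omega)
    simp only [wordVal]
    linarith

theorem wordVal_injective {ℓ : ℕ} : ∀ {u v : List (Fin ℓ)}, u.length = v.length →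
    wordVal u = wordVal v → u = v
  | [], [], _, _ => rfl
  | x :: u, y :: v, hl, h => by
    have hl' : u.length = v.length := by simpa using hl
    have key : ∀ {x y : Fin ℓ} {u v : List (Fin ℓ)}, u.length = v.length →
        wordVal (x :: u) = wordVal (y :: v) → ¬ x < y := by
      intro x y u v hl h hxy
      have : wordVal ([x] ++ u) < wordVal ([y] ++ v) :=
        wordVal_append_lt hl (by simpa [wordVal] using hxy)
      exact absurd h (ne_of_lt this)
    have hxy : x = y := le_antisymm (not_lt.1 (key hl'.symm h.symm)) (not_lt.1 (key hl' h))
    subst hxy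
    rw [wordVal_injective hl' (by simpa [wordVal, hl'] using h)]

/-- `x` dominates `y`: both have at least `d` letters, and the length-`d` prefix of `x` is
lexicographically larger than that of `y`. -/
def Dominates {ℓ : ℕ} (d : ℕ) (x y : List (Fin ℓ)) : Prop :=
  d ≤ x.length ∧ d ≤ y.length ∧ wordVal (y.take d) < wordVal (x.take d)

theorem Dominates.append_lt {ℓ d : ℕ} {x y p q : List (Fin ℓ)} (h : Dominates d x y)
    (hl : (y ++ p).length = (x ++ q).length) : wordVal (y ++ p) < wordVal (x ++ q) := by
  obtain ⟨hx, hy, hlt⟩ := h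
  rw [← List.take_append_drop d y, ← List.take_append_drop d x, List.append_assoc,
    List.append_assoc]
  refine wordVal_append_lt ?_ hlt
  simp only [List.length_append, List.length_drop] at hl ⊢
  omega

/-- Any nontrivial rearrangement of a list of words decreasing for `Dominates` concatenates to a
smaller word: at the first place of difference the original list has the dominating word. -/
theorem flatten_lt_of_perm {ℓ d : ℕ} : ∀ {L L' : List (List (Fin ℓ))},
    L.Pairwise (Dominates d) → L'.Perm L → L' ≠ L → wordVal L'.flatten < wordVal L.flatten
  | [], L', _, hp, hne => absurd hp.eq_nil hne
  | x :: T, [], _, hp, _ => absurd hp.symm.eq_nil (by simp)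
  | x :: T, y :: T', hd, hp, hne => by
    rw [List.pairwise_cons] at hd
    rw [List.flatten_cons, List.flatten_cons]
    have hlen : (y ++ T'.flatten).length = (x ++ T.flatten).length := by
      simpa using hp.flatten.length_eq
    by_cases hxy : y = x
    · subst hxy
      have hp' : T'.Perm T := hp.cons_inv
      have ih := flatten_lt_of_perm hd.2 hp' (fun h => hne (by rw [h]))
      rw [wordVal_append, wordVal_append, hp'.flatten.length_eq]
      omega
    · have hy : y ∈ x :: T := hp.subset (by simp)
      have hyT : y ∈ T := by simpa [hxy] using hy
      exact (hd.1 y hyT).append_lt hlen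

/-! ### Shirshov's lemma -/

/-- If a block `v` occurs at least `us.length` times in `L`, the factors `us` of `v` can be found
in the given order, without overlap, in `L.flatten`; cutting at their beginnings yields `Ws`. -/
theorem exists_cut {α : Type*} [DecidableEq α] (v : List α) : ∀ (us : List (List α))
    (L : List (List α)), (∀ u ∈ us, u <:+: v) → us.length ≤ L.count v →
    ∃ P Ws, L.flatten = P ++ List.flatten Ws ∧ List.Forall₂ (fun u W => u <+: W) us Ws
  | [], L, _, _ => ⟨L.flatten, [], by simp, List.Forall₂.nil⟩
  | u :: us, L, hf, hc => by
    have hv : v ∈ L := List.count_pos_iff.1 (lt_of_lt_of_le (by simp) hc)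
    obtain ⟨L₁, L₂, rfl, hn⟩ := List.eq_append_cons_of_mem hv
    have hc2 : us.length ≤ L₂.count v := by
      simpa [List.count_append, List.count_eq_zero_of_not_mem hn] using hc
    obtain ⟨P, Ws, h1, h2⟩ := exists_cut v us L₂ (fun u hu => hf u (by simp [hu])) hc2
    obtain ⟨p, q, hpq⟩ := hf u (by simp)
    refine ⟨L₁.flatten ++ p, (u ++ (q ++ P)) :: Ws, ?_, List.Forall₂.cons ⟨_, rfl⟩ h2⟩
    simp [h1, ← hpq]

/-- A word agreeing with its shift by `p` on `k * p` letters begins with a `(k + 1)`-st power. -/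
theorem exists_power_prefix {α : Type*} (p : ℕ) : ∀ (k : ℕ) (s : List α),
    (s.drop p).take (k * p) = s.take (k * p) →
    ∃ q, s = (List.replicate (k + 1) (s.take p)).flatten ++ q
  | 0, s, _ => ⟨s.drop p, by simp⟩
  | k + 1, s, h => by
    have h1 : (s.drop p).take p = s.take p := by
      have := congrArg (List.take p) h
      rwa [List.take_take, List.take_take, min_eq_left (by nlinarith)] at this
    have h2 : ((s.drop p).drop p).take (k * p) = (s.drop p).take (k * p) := by
      have := congrArg (List.drop p) h
      rw [List.drop_take, List.drop_take] at this
      have e : (k + 1) * p - p = k * p := by rw [Nat.succ_mul]; omega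
      rwa [e] at this
    obtain ⟨q, hq⟩ := exists_power_prefix p k (s.drop p) h2
    refine ⟨q, ?_⟩
    rw [h1] at hq
    rw [List.replicate_succ, List.flatten_cons, List.append_assoc, ← hq, List.take_append_drop]

/-- Finite Morse–Hedlund: a word with at most `d` distinct factors of length `d` (starting at the
first `T` positions) has, near its beginning, a period `p ≤ d`, hence a large power. -/
theorem exists_power_of_few_factors {α : Type*} [DecidableEq α] (d k T : ℕ) (v : List α)
    (hT : d + (k + 1) * d < T) (hv : T ≤ v.length)
    (hF : ((Finset.range T).image fun i => (v.drop i).take d).card ≤ d) :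
    ∃ u : List α, 1 ≤ u.length ∧ u.length ≤ d ∧ (List.replicate (k + 1) u).flatten <:+: v := by
  set f : ℕ → ℕ → List α := fun j i => (v.drop i).take j with hf
  set D : ℕ → ℕ := fun j => ((Finset.range T).image (f j)).card with hD
  have htake : ∀ j, ((Finset.range T).image (f (j + 1))).image (List.take j) =
      (Finset.range T).image (f j) := by
    intro j
    rw [Finset.image_image]
    congr 1
    funext i
    simp [hf, List.take_take]
  have hmono : Monotone D := monotone_nat_of_le_succ fun j => by
    simp only [hD]
    rw [← htake j]
    exact Finset.card_image_le
  -- the factor complexity cannot grow strictly at each of the first `d` steps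
  obtain ⟨j, hjd, hj⟩ : ∃ j < d, D (j + 1) ≤ D j := by
    by_contra! hcon
    have : ∀ j ≤ d, j + 1 ≤ D j := by
      intro j
      induction j with
      | zero =>
        intro _
        exact Finset.card_pos.2 ⟨f 0 0, Finset.mem_image_of_mem _ (Finset.mem_range.2 (by omega))⟩
      | succ j ih =>
        intro hj
        have := ih (by omega)
        have := hcon j (by omega)
        omega
    have := this d le_rfl
    have : D d ≤ d := hF
    omega
  have hinj : Set.InjOn (List.take j) ((Finset.range T).image (f (j + 1)) : Set (List α)) := by
    have hle : D j = D (j + 1) := le_antisymm (hmono (by omega)) hj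
    rw [← Finset.card_image_iff, htake]
    exact hle
  have hext : ∀ i i', i < T → i' < T → f j i = f j i' → f (j + 1) i = f (j + 1) i' := by
    intro i i' hi hi' h
    refine hinj ?_ ?_ ?_
    · exact Finset.mem_coe.2 (Finset.mem_image_of_mem _ (Finset.mem_range.2 hi))
    · exact Finset.mem_coe.2 (Finset.mem_image_of_mem _ (Finset.mem_range.2 hi'))
    · simpa [hf, List.take_take] using h
  have hDj : D j ≤ d := (hmono hjd.le).trans hF
  obtain ⟨i, hi, i', hi', hne, heq⟩ : ∃ i ∈ Finset.range (d + 1), ∃ i' ∈ Finset.range (d + 1),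
      i ≠ i' ∧ f j i = f j i' := by
    refine Finset.exists_ne_map_eq_of_card_lt_of_maps_to
      (t := (Finset.range T).image (f j)) (by rw [Finset.card_range]; exact Nat.lt_succ_of_le hDj)
      fun i hi => ?_
    have := Finset.mem_range.1 hi
    exact Finset.mem_coe.2 (Finset.mem_image_of_mem _ (Finset.mem_range.2 (by omega)))
  rw [Finset.mem_range] at hi hi'
  wlog hlt : i < i' generalizing i i'
  · exact this i' hi' i hi hne.symm heq.symm (by omega)
  have hshift : ∀ m, i' + m < T → f j (i + m) = f j (i' + m) := by
    intro m
    induction m with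
    | zero => intro _; exact heq
    | succ m ih =>
      intro hm
      have h := congrArg (List.drop 1) (hext (i + m) (i' + m) (by omega) (by omega) (ih (by omega)))
      simpa only [hf, List.drop_take, List.drop_drop, add_assoc, Nat.add_sub_cancel] using h
  have hletter : ∀ m, i' + m < T → v[i + m]? = v[i' + m]? := by
    intro m hm
    have h := congrArg (fun l => l[0]?) (hext (i + m) (i' + m) (by omega) hm (hshift m hm))
    simpa [hf, List.getElem?_take] using h
  obtain ⟨p, rfl⟩ := Nat.exists_eq_add_of_lt hlt
  have hkp : k * (p + 1) ≤ (k + 1) * d := by nlinarith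
  obtain ⟨q, hq⟩ := exists_power_prefix (p + 1) k (v.drop i) (by
    apply List.ext_getElem?
    intro m
    rw [List.getElem?_take, List.getElem?_take]
    split_ifs with hm
    · have := hletter m (by omega)
      rw [List.drop_drop, List.getElem?_drop, List.getElem?_drop, this, add_assoc i p 1]
    · rfl)
  refine ⟨(v.drop i).take (p + 1), ?_, ?_, v.take i, q, ?_⟩
  · simp only [List.length_take, List.length_drop]; omega
  · simp only [List.length_take, List.length_drop]; omega
  · rw [List.append_assoc, ← hq, List.take_append_drop]

/-- A block with at least `d` distinct length-`d` factors, repeated `d` times, gives `d` consecutive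
words forming a decreasing chain for `Dominates`. -/
theorem exists_dominating_of_many_factors {ℓ : ℕ} (d T : ℕ) (v : List (Fin ℓ))
    (hv : T + d ≤ v.length)
    (hF : d ≤ ((Finset.range T).image fun i => (v.drop i).take d).card)
    (L : List (List (Fin ℓ))) (hL : d ≤ L.count v) :
    ∃ (P : List (Fin ℓ)) (Ws : List (List (Fin ℓ))), L.flatten = P ++ Ws.flatten ∧
      Ws.length = d ∧ Ws.Pairwise (Dominates d) := by
  set F := (Finset.range T).image fun i => (v.drop i).take d with hFdef
  have hmem : ∀ u ∈ F, u <:+: v ∧ u.length = d := by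
    intro u hu
    obtain ⟨i, hi, rfl⟩ := Finset.mem_image.1 hu
    rw [Finset.mem_range] at hi
    refine ⟨(List.take_prefix _ _).isInfix.trans (List.drop_suffix _ _).isInfix, ?_⟩
    simp only [List.length_take, List.length_drop]; omega
  obtain ⟨G, hGF, hG⟩ := Finset.exists_subset_card_eq hF
  have hinj : Set.InjOn (wordVal (ℓ := ℓ)) (G : Set (List (Fin ℓ))) := fun x hx y hy h =>
    wordVal_injective (by rw [(hmem x (hGF hx)).2, (hmem y (hGF hy)).2]) h
  have hg : ∀ n : ℕ, ∃ u : List (Fin ℓ), n ∈ G.image wordVal → u ∈ G ∧ wordVal u = n := by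
    intro n
    by_cases hn : n ∈ G.image wordVal
    · obtain ⟨u, hu, rfl⟩ := Finset.mem_image.1 hn
      exact ⟨u, fun _ => ⟨hu, rfl⟩⟩
    · exact ⟨[], fun h => absurd h hn⟩
  choose g hg using hg
  set S := (G.image wordVal).sort (· ≥ ·) with hS
  have hSmem : ∀ n ∈ S, n ∈ G.image wordVal := fun n hn => (Finset.mem_sort _).1 hn
  have hSlen : S.length = d := by
    rw [hS, Finset.length_sort, Finset.card_image_iff.2 hinj, hG]
  obtain ⟨P, Ws, h1, h2⟩ := exists_cut v (S.map g) L (by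
    intro u hu
    obtain ⟨n, hn, rfl⟩ := List.mem_map.1 hu
    exact (hmem _ (hGF (hg n (hSmem n hn)).1)).1) (by simpa [hSlen] using hL)
  refine ⟨P, Ws, h1, ?_, ?_⟩
  · rw [← h2.length_eq, List.length_map, hSlen]
  · have hpw : S.Pairwise (· > ·) := Finset.sortedGT_sort _ |>.pairwise
    rw [List.forall₂_iff_get] at h2
    obtain ⟨hlen, h2⟩ := h2
    rw [List.pairwise_iff_getElem] at hpw ⊢
    have key : ∀ i (hi : i < Ws.length) (hi' : i < S.length),
        d ≤ Ws[i].length ∧ wordVal (Ws[i].take d) = S[i] := by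
      intro i hi hi'
      have hp := h2 i (by simpa using hi') hi
      simp only [List.get_eq_getElem, List.getElem_map] at hp
      have hgi := hg _ (hSmem _ (List.getElem_mem hi'))
      have hl := (hmem _ (hGF hgi.1)).2
      refine ⟨hl ▸ hp.length_le, ?_⟩
      have := List.prefix_iff_eq_take.1 hp
      rw [hl] at this
      rw [← this, hgi.2]
    intro i j hi hj hij
    have hi' : i < S.length := by rw [List.length_map] at hlen; omega
    have hj' : j < S.length := by rw [List.length_map] at hlen; omega
    obtain ⟨a1, a2⟩ := key i hi hi'
    obtain ⟨b1, b2⟩ := key j hj hj'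
    exact ⟨a1, b1, by rw [a2, b2]; exact hpw i j hi' hj' hij⟩

theorem exists_blocks {α : Type*} (B : ℕ) : ∀ (n : ℕ) (w : List α), n * B ≤ w.length →
    ∃ (L : List (List α)) (r : List α), w = L.flatten ++ r ∧ L.length = n ∧ ∀ v ∈ L, v.length = B
  | 0, w, _ => ⟨[], w, by simp⟩
  | n + 1, w, h => by
    rw [Nat.succ_mul] at h
    obtain ⟨L, r, h1, h2, h3⟩ := exists_blocks B n (w.drop B) (by rw [List.length_drop]; omega)
    refine ⟨w.take B :: L, r, ?_, by simp [h2], ?_⟩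
    · rw [List.flatten_cons, List.append_assoc, ← h1, List.take_append_drop]
    · intro v hv
      rcases List.mem_cons.1 hv with rfl | hv
      · rw [List.length_take]; omega
      · exact h3 v hv

/-- Shirshov's lemma: a long word over a finite alphabet contains a factor that is a product of `d`
words decreasing for `Dominates`, or a `(k + 1)`-st power of a nonempty word of length at most `d`. -/
theorem shirshov (ℓ d k : ℕ) : ∃ N : ℕ, ∀ w : List (Fin ℓ), N ≤ w.length →
    (∃ (P Q : List (Fin ℓ)) (Ws : List (List (Fin ℓ))), w = P ++ (Ws.flatten ++ Q) ∧
      Ws.length = d ∧ Ws.Pairwise (Dominates d)) ∨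
    (∃ u : List (Fin ℓ), 1 ≤ u.length ∧ u.length ≤ d ∧
      (List.replicate (k + 1) u).flatten <:+: w) := by
  set T := d + (k + 1) * d + 1 with hT
  set B := T + d with hB
  have hfin : {v : List (Fin ℓ) | v.length = B}.Finite := List.finite_length_eq _ _
  set X := hfin.toFinset with hX
  refine ⟨(X.card * d + 1) * B, fun w hw => ?_⟩
  obtain ⟨L, r, rfl, hLn, hLB⟩ := exists_blocks B _ w hw
  -- there are only `X.card` possible blocks, so one of them is repeated `d` times
  obtain ⟨v, hvL, hv⟩ : ∃ v ∈ L, d ≤ L.count v := by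
    by_contra! hcon
    have h1 : ∑ v ∈ L.toFinset, L.count v ≤ L.toFinset.card * d :=
      Finset.sum_le_card_nsmul _ _ _ fun v hv => (hcon v (List.mem_toFinset.1 hv)).le
    have h3 : ∑ v ∈ L.toFinset, L.count v = L.length := by
      convert List.sum_toFinset_count_eq_length L
    rw [h3, hLn] at h1
    have h2 : L.toFinset.card ≤ X.card := Finset.card_le_card fun v hv => by
      rw [hX, Set.Finite.mem_toFinset]
      exact hLB v (List.mem_toFinset.1 hv)
    have := Nat.mul_le_mul_right d h2
    omega
  have hvB : v.length = B := hLB v hvL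
  rcases le_total d ((Finset.range T).image fun i => (v.drop i).take d).card with hF | hF
  · obtain ⟨P, Ws, h1, h2, h3⟩ := exists_dominating_of_many_factors d T v (by omega) hF L hv
    exact Or.inl ⟨P, r, Ws, by rw [h1, List.append_assoc], h2, h3⟩
  · obtain ⟨u, h1, h2, h3⟩ := exists_power_of_few_factors d k T v (by omega) (by omega) hF
    refine Or.inr ⟨u, h1, h2, h3.trans ?_⟩
    obtain ⟨L₁, L₂, rfl⟩ := List.append_of_mem hvL
    exact ⟨L₁.flatten, L₂.flatten ++ r, by simp⟩

/-! ### Reduction of words modulo the annihilator -/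

/-- The annihilator of `M` in `A`, as a module over the subring `C₁` acting by left
multiplication. -/
def annSubmodule {C A : Type*} [CommRing C] [Ring A] [Algebra C A] (C₁ : Subalgebra C A)
    (M : Type*) [AddCommGroup M] [Module A M] : Submodule C₁ A where
  carrier := {x | ∀ m : M, x • m = 0}
  zero_mem' m := zero_smul A m
  add_mem' hx hy m := by rw [add_smul, hx m, hy m, add_zero]
  smul_mem' r x hx m := by
    rw [Subalgebra.smul_def, smul_eq_mul, mul_smul, hx m, smul_zero]

theorem mem_annSubmodule {C A : Type*} [CommRing C] [Ring A] [Algebra C A] {C₁ : Subalgebra C A}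
    {M : Type*} [AddCommGroup M] [Module A M] {x : A} :
    x ∈ annSubmodule C₁ M ↔ ∀ m : M, x • m = 0 := Iff.rfl

theorem annSubmodule_mul_mul {C A : Type*} [CommRing C] [Ring A] [Algebra C A]
    {C₁ : Subalgebra C A} {M : Type*} [AddCommGroup M] [Module A M] (p q : A) {x : A}
    (hx : x ∈ annSubmodule C₁ M) : p * x * q ∈ annSubmodule C₁ M := fun m => by
  rw [mul_smul, mul_smul, hx, smul_zero]

/-- If the generators commute with `C₁` modulo the annihilator of `M`, so does all of `A`. -/
theorem commutator_mem_ann {C A : Type*} [CommRing C] [Ring A] [Algebra C A]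
    {S : Set A} (hgen : Algebra.adjoin C S = ⊤) {M : Type*} [AddCommGroup M] [Module A M]
    {C₁ : Subalgebra C A} (ha : ∀ y ∈ S, ∀ x ∈ C₁, y * x - x * y ∈ annSubmodule C₁ M)
    (y x : A) (hx : x ∈ C₁) : y * x - x * y ∈ annSubmodule C₁ M := by
  have hy : y ∈ Algebra.adjoin C S := by rw [hgen]; trivial
  induction hy using Algebra.adjoin_induction with
  | mem y hy => exact ha y hy x hx
  | algebraMap r => rw [Algebra.commutes, sub_self]; exact zero_mem _
  | add y z _ _ h1 h2 =>
    have e : (y + z) * x - x * (y + z) = (y * x - x * y) + (z * x - x * z) := by noncomm_ring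
    rw [e]
    exact add_mem h1 h2
  | mul y z _ _ h1 h2 =>
    have e : y * z * x - x * (y * z) = y * (z * x - x * z) * 1 + 1 * (y * x - x * y) * z := by
      noncomm_ring
    rw [e]
    exact add_mem (annSubmodule_mul_mul _ _ h2) (annSubmodule_mul_mul _ _ h1)

theorem prod_map_flatten {ℓ : ℕ} {A : Type*} [Ring A] (a : Fin ℓ → A)
    (L : List (List (Fin ℓ))) :
    (L.flatten.map a).prod = (L.map fun w => (w.map a).prod).prod := by
  induction L with
  | nil => simp
  | cons x L ih =>
    rw [List.flatten_cons, List.map_append, List.prod_append, ih, List.map_cons, List.prod_cons]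

/-- By the multilinear identity, a word with a factor that is a product of `d` words
decreasing for `Dominates` lies in every `C₁`-submodule containing all smaller words. -/
theorem decomposable_mem {C A : Type*} [CommRing C] [Ring A] [Algebra C A] {ℓ : ℕ}
    (a : Fin ℓ → A) (d : ℕ) (c : Equiv.Perm (Fin d) → C) (hc1 : c 1 = 1)
    (hPI : ∀ v : Fin d → A,
      ∑ σ : Equiv.Perm (Fin d), c σ • ((List.finRange d).map fun i => v (σ i)).prod = 0)
    (C₁ : Subalgebra C A) (Q : Submodule C₁ A) (P R : List (Fin ℓ)) (Ws : List (List (Fin ℓ)))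
    (hlen : Ws.length = d) (hW : Ws.Pairwise (Dominates d))
    (ih : ∀ w, wordVal w < wordVal (P ++ (Ws.flatten ++ R)) → (w.map a).prod ∈ Q) :
    ((P ++ (Ws.flatten ++ R)).map a).prod ∈ Q := by
  subst hlen
  set p := (P.map a).prod with hp
  set r := (R.map a).prod with hr
  -- the factors, permuted by `σ`
  set W : Equiv.Perm (Fin Ws.length) → List (List (Fin ℓ)) :=
    fun σ => (List.finRange Ws.length).map fun i => Ws.get (σ i) with hWdef
  have hW1 : W 1 = Ws := by simp [hWdef]
  have hprod : ∀ σ, ((P ++ ((W σ).flatten ++ R)).map a).prod =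
      p * ((List.finRange Ws.length).map fun i => ((Ws.get (σ i)).map a).prod).prod * r := by
    intro σ
    simp only [List.map_append, List.prod_append, prod_map_flatten, hWdef, List.map_map, hp, hr,
      mul_assoc]
    rfl
  have hsum : ∑ σ, c σ • ((P ++ ((W σ).flatten ++ R)).map a).prod = 0 := by
    have h := congrArg (fun x => p * x * r) (hPI fun i => ((Ws.get i).map a).prod)
    simp only [mul_zero, zero_mul, Finset.mul_sum, Finset.sum_mul, mul_smul_comm,
      smul_mul_assoc] at h
    rw [← h]
    exact Finset.sum_congr rfl fun σ _ => by rw [hprod]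
  rw [← Finset.add_sum_erase _ _ (Finset.mem_univ 1), hc1, one_smul, hW1] at hsum
  rw [eq_neg_of_add_eq_zero_left hsum]
  refine neg_mem (sum_mem fun σ hσ => ?_)
  have hσ1 : σ ≠ 1 := (Finset.mem_erase.1 hσ).1
  have hperm : (W σ).Perm Ws := by
    have h := (Equiv.Perm.map_finRange_perm σ).map Ws.get
    simpa [hWdef, List.map_map, Function.comp_def] using h
  have hne : W σ ≠ Ws := by
    intro h
    apply hσ1
    have hinj : Function.Injective Ws.get := by
      have hnd : Ws.Nodup := hW.imp fun h e => by
        subst e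
        exact lt_irrefl _ h.2.2
      exact List.nodup_iff_injective_get.1 hnd
    ext i : 1
    apply hinj
    rw [← hW1] at h
    have := List.map_inj_left.1 h i (List.mem_finRange i)
    simpa using this
  have hlt := flatten_lt_of_perm hW hperm hne
  have hmem := ih (P ++ ((W σ).flatten ++ R)) (by
    rw [wordVal_append P, wordVal_append P]
    have h1 := wordVal_append_lt (p := R) (q := R) rfl hlt
    have h2 : ((W σ).flatten ++ R).length = (Ws.flatten ++ R).length := by
      rw [List.length_append, List.length_append, hperm.flatten.length_eq]
    rw [h2]
    omega)
  have := Q.smul_mem (algebraMap C C₁ (c σ)) hmem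
  rwa [algebraMap_smul] at this

/-- By integrality of `u`, a word with the factor `u ^ n` lies in every `C₁`-submodule containing
the annihilator and all smaller words. -/
theorem power_mem {C A : Type*} [CommRing C] [Ring A] [Algebra C A] {ℓ : ℕ}
    (a : Fin ℓ → A) {M : Type*} [AddCommGroup M] [Module A M] (C₁ : Subalgebra C A)
    (hcom : ∀ y x : A, x ∈ C₁ → y * x - x * y ∈ annSubmodule C₁ M)
    (Q : Submodule C₁ A) (hQ : annSubmodule C₁ M ≤ Q) (P u R : List (Fin ℓ)) (hu : 1 ≤ u.length)
    (n : ℕ) (co : Fin n → A) (hco : ∀ j, co j ∈ C₁)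
    (hint : (u.map a).prod ^ n + ∑ j : Fin n, co j * (u.map a).prod ^ (j : ℕ) ∈
      annSubmodule C₁ M)
    (ih : ∀ w, wordVal w < wordVal (P ++ ((List.replicate n u).flatten ++ R)) →
      (w.map a).prod ∈ Q) :
    ((P ++ ((List.replicate n u).flatten ++ R)).map a).prod ∈ Q := by
  set p := (P.map a).prod with hp
  set r := (R.map a).prod with hr
  set y := (u.map a).prod with hy
  have hprod : ∀ j, ((P ++ ((List.replicate j u).flatten ++ R)).map a).prod = p * y ^ j * r := by
    intro j
    simp only [List.map_append, List.prod_append, prod_map_flatten, List.map_replicate,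
      List.prod_replicate, hp, hr, hy, mul_assoc]
  have hlow : ∀ j : Fin n, p * y ^ (j : ℕ) * r ∈ Q := by
    intro j
    rw [← hprod]
    apply ih
    apply wordVal_lt_of_length_lt
    have : (j : ℕ) * u.length < n * u.length := Nat.mul_lt_mul_of_pos_right j.2 hu
    simpa using this
  have h1 := annSubmodule_mul_mul p r hint
  have e : p * y ^ n * r = p * (y ^ n + ∑ j : Fin n, co j * y ^ (j : ℕ)) * r -
      ∑ j : Fin n, (1 * (p * co j - co j * p) * (y ^ (j : ℕ) * r) +
        co j * (p * y ^ (j : ℕ) * r)) := by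
    have : ∀ j : Fin n, 1 * (p * co j - co j * p) * (y ^ (j : ℕ) * r) +
        co j * (p * y ^ (j : ℕ) * r) = p * (co j * y ^ (j : ℕ)) * r := fun j => by noncomm_ring
    rw [Finset.sum_congr rfl fun j _ => this j, mul_add, add_mul, Finset.mul_sum,
      Finset.sum_mul, add_sub_cancel_right]
  rw [hprod, e]
  refine sub_mem (hQ h1) (sum_mem fun j _ => add_mem ?_ ?_)
  · exact hQ (annSubmodule_mul_mul _ _ (hcom _ _ (hco j)))
  · exact Q.smul_mem ⟨co j, hco j⟩ (hlow j)

/-- (Shirshov-type finiteness theorem) Let `A` be a unital associative `C`-algebra generated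
by `a_1, …, a_ℓ` satisfying a proper multilinear identity of degree `d`, let `M` be a left
`A`-module, and let `C₁` be a commutative `C`-subalgebra of `A` such that (a) the generators
commute with `C₁` modulo the annihilator of `M`, and (b) every word in the generators of
length `1 ≤ s ≤ d` is integral over `C₁` with respect to `M`.  Then `A` modulo the
annihilator of `M` is a finitely generated `C₁`-module. -/
theorem stmt12 (C : Type*) [CommRing C] (A : Type*) [Ring A] [Algebra C A]
    (ℓ : ℕ) (a : Fin ℓ → A) (hgen : Algebra.adjoin C (Set.range a) = ⊤)
    (d : ℕ) (c : Equiv.Perm (Fin d) → C) (hc1 : c 1 = 1)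
    (hPI : ∀ v : Fin d → A,
      ∑ σ : Equiv.Perm (Fin d), c σ • ((List.finRange d).map fun i => v (σ i)).prod = 0)
    (M : Type*) [AddCommGroup M] [Module A M]
    (C₁ : Subalgebra C A) (hcomm : ∀ x ∈ C₁, ∀ y ∈ C₁, x * y = y * x)
    (ha : ∀ (i : Fin ℓ), ∀ x ∈ C₁, ∀ m : M, (a i * x - x * a i) • m = 0)
    (hint : ∀ s : ℕ, 1 ≤ s → s ≤ d → ∀ w : Fin s → Fin ℓ,
      ∃ n : ℕ, 1 ≤ n ∧ ∃ co : Fin n → A, (∀ j, co j ∈ C₁) ∧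
        ∀ m : M,
          ((((List.finRange s).map fun j => a (w j)).prod) ^ n +
            ∑ j : Fin n, co j * (((List.finRange s).map fun j => a (w j)).prod) ^ (j : ℕ))
            • m = 0) :
    ∃ (t : ℕ) (b : Fin t → A), ∀ x : A, ∃ cc : Fin t → A,
      (∀ j, cc j ∈ C₁) ∧ ∀ m : M, (x - ∑ j : Fin t, cc j * b j) • m = 0 := by
  have hcom : ∀ y x : A, x ∈ C₁ → y * x - x * y ∈ annSubmodule C₁ M :=
    commutator_mem_ann hgen (by rintro _ ⟨i, rfl⟩ x hx; exact ha i x hx)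
  have hint' : ∀ u : List (Fin ℓ), ∃ n : ℕ, 1 ≤ u.length → u.length ≤ d →
      ∃ co : Fin n → A, (∀ j, co j ∈ C₁) ∧
        (u.map a).prod ^ n + ∑ j : Fin n, co j * (u.map a).prod ^ (j : ℕ) ∈
          annSubmodule C₁ M := by
    intro u
    by_cases hu : 1 ≤ u.length ∧ u.length ≤ d
    · obtain ⟨n, -, co, h1, h2⟩ := hint u.length hu.1 hu.2 u.get
      have e : (List.finRange u.length).map (fun j => a (u.get j)) = u.map a := by
        apply List.ext_getElem <;> simp
      rw [e] at h2
      exact ⟨n, fun _ _ => ⟨co, h1, h2⟩⟩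
    · exact ⟨0, fun h1 h2 => absurd ⟨h1, h2⟩ hu⟩
  choose n hn using hint'
  -- a common bound for the degrees of integrality of the finitely many short words
  obtain ⟨k, hk⟩ : ∃ k, ∀ u : List (Fin ℓ), u.length ≤ d → n u ≤ k := by
    obtain ⟨k, hk⟩ := ((List.finite_length_le (Fin ℓ) d).image n).bddAbove
    exact ⟨k, fun u hu => hk ⟨u, hu, rfl⟩⟩
  obtain ⟨N, hN⟩ := shirshov ℓ d k
  obtain ⟨t, b, hb⟩ : ∃ (t : ℕ) (b : Fin t → A),
      Set.range b = (fun w : List (Fin ℓ) => (w.map a).prod) '' {w | w.length < N} := by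
    have hfin := (List.finite_length_lt (Fin ℓ) N).image fun w => (w.map a).prod
    obtain ⟨t, b, -, hb⟩ := hfin.fin_param
    exact ⟨t, b, hb⟩
  set Q : Submodule C₁ A := Submodule.span C₁ (Set.range b) ⊔ annSubmodule C₁ M with hQ
  have hword : ∀ w : List (Fin ℓ), (w.map a).prod ∈ Q := by
    intro w
    induction h : wordVal w using Nat.strong_induction_on generalizing w with
    | _ x ih =>
      subst h
      have ih' : ∀ w', wordVal w' < wordVal w → (w'.map a).prod ∈ Q :=
        fun w' hw' => ih _ hw' w' rfl
      rcases lt_or_ge w.length N with hw | hw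
      · refine Submodule.mem_sup_left (Submodule.subset_span ?_)
        rw [hb]
        exact ⟨w, hw, rfl⟩
      · rcases hN w hw with ⟨P, R, Ws, rfl, h1, h2⟩ | ⟨u, h1, h2, P, R, hPR⟩
        · exact decomposable_mem a d c hc1 hPI C₁ Q P R Ws h1 h2 ih'
        · obtain ⟨e, he⟩ := Nat.exists_eq_add_of_le ((hk u h2).trans (Nat.le_succ k))
          obtain ⟨co, hco, hco'⟩ := hn u h1 h2
          have hw' : w = P ++ ((List.replicate (n u) u).flatten ++
              ((List.replicate e u).flatten ++ R)) := by
            rw [← hPR, ← Nat.succ_eq_add_one, he, List.replicate_add, List.flatten_append]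
            simp only [List.append_assoc]
          rw [hw'] at ih' ⊢
          exact power_mem a C₁ hcom Q le_sup_right P u _ h1 _ co hco hco' ih'
  have htop : ∀ x : A, x ∈ Q := by
    intro x
    have hx : x ∈ Algebra.adjoin C (Set.range a) := by rw [hgen]; trivial
    rw [← Subalgebra.mem_toSubmodule, Algebra.adjoin_eq_span] at hx
    induction hx using Submodule.span_induction with
    | mem x hx =>
      obtain ⟨l, hl, rfl⟩ := Submonoid.exists_list_of_mem_closure hx
      obtain ⟨w, rfl⟩ : ∃ w : List (Fin ℓ), w.map a = l := by
        have : l ∈ Set.range (List.map a) := by rw [Set.range_list_map]; exact hl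
        exact this
      exact hword w
    | zero => exact zero_mem _
    | add x y _ _ h1 h2 => exact add_mem h1 h2
    | smul r x _ h =>
      have := Q.smul_mem (algebraMap C C₁ r) h
      rwa [algebraMap_smul] at this
  refine ⟨t, b, fun x => ?_⟩
  obtain ⟨y, hy, z, hz, rfl⟩ := Submodule.mem_sup.1 (htop x)
  obtain ⟨cc, rfl⟩ := (Submodule.mem_span_range_iff_exists_fun C₁).1 hy
  refine ⟨fun j => cc j, fun j => (cc j).2, fun m => ?_⟩
  have e : ∑ j, cc j • b j = ∑ j, (cc j : A) * b j := rfl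
  rw [e, add_sub_cancel_left]
  exact hz m
end

section
/- Let C be a commutative Noetherian ring, ℓ a natural number, I a T-ideal of FreeAlgebra C (Fin ℓ), and let A = FreeAlgebra C (Fin ℓ) / I be the corresponding relatively free affine algebra. Then A has a unique maximal nilpotent T-ideal: there exists a T-ideal N of A which is nilpotent (N^m = 0 for some m, i.e., every product of m elements of N is zero) and which contains every nilpotent T-ideal of A. -/
/-!
Write `SN` for the elements of `A` generating a nilpotent two-sided ideal. Every nilpotent ideal
consists of such elements, so it suffices to find `q` such that all products of `q` elements of
`SN` vanish (`NB A`); then the supremum of all nilpotent T-ideals is nilpotent, and it is clearly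
a T-ideal.

`NB A` is proved by Noetherian induction on an ideal `𝔞` of `C` annihilating `A`
(`RelFree.NB.of_rf`). If `𝔞` is not prime, it contains a product of two larger ideals `𝔟`, `𝔟'`, and
the induction hypothesis for `A/𝔟A` and `A/𝔟'A` gives the claim. If `𝔞` is prime and the generators
satisfy no relation with a coefficient outside `𝔞`, then `A` is a free algebra over the domain `C/𝔞`
and has no nilpotent elements. Otherwise some relation has a coefficient outside `𝔞`; since `A` is
relatively free, the relation is a polynomial identity, and it can be made multilinear
(`exists_multilinear`).

A multilinear identity lets one rewrite monomials in terms of permutations without long decreasing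
subsequences. As in Regev's codimension theorem (with Latyshev's Dilworth-type count) there are so
few of these that a linear system whose solutions are strong identities
`∑ α_ρ ∏ x_{ρ π j} y_j = 0`, holding for all `π`, has more unknowns than equations;
`exists_strongId` provides one with a coefficient outside `𝔞`. The coefficients of strong identities
form an ideal `𝔠 ⊄ 𝔞`, and they kill a Capelli polynomial of large degree
(`exists_strongIdeal_smul_cap`). Hence `A / ann(𝔠)` satisfies a Capelli identity, while
`A / (𝔞 + 𝔠)A` is covered by the induction hypothesis, and `ann(𝔠) · (𝔞 + 𝔠)A = 0`.

It remains to treat finitely generated algebras with a Capelli identity over a Noetherian ring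
(`NB.of_cap`), by induction on the Capelli degree. Modulo the ideal generated by the Capelli values of
one degree less the induction hypothesis applies. On products of such values there are commuting
operators playing the role of coefficients of characteristic polynomials; a Cayley–Hamilton relation
makes the words in the generators integral over them, Shirshov's height theorem then gives a
finitely generated module over a commutative Noetherian ring, and strongly nilpotent elements act
on it with uniformly bounded nilpotency.
-/

/-- A T-ideal of a unital associative `C`-algebra `A` is a two-sided ideal stable under
every `C`-algebra endomorphism of `A`. -/
def IsTIdeal (C : Type*) [CommSemiring C] (A : Type*) [Ring A] [Algebra C A]
    (I : TwoSidedIdeal A) : Prop :=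
  ∀ φ : A →ₐ[C] A, ∀ x ∈ I, φ x ∈ I

/-- A two-sided ideal `N` of `A` is nilpotent if for some `m` every product of `m`
elements of `N` is zero. -/
def IsNilpotentTwoSidedIdeal {A : Type*} [Ring A] (N : TwoSidedIdeal A) : Prop :=
  ∃ m : ℕ, ∀ f : Fin m → A, (∀ i, f i ∈ N) → (List.ofFn f).prod = 0

namespace RelFree

/-! ### Combinatorics of words -/

/-- `LexLt l₁ l₂`: at the first place where the two words differ, both have a letter, and the letter
of `l₁` is the smaller one. Unlike the lexicographic order, this excludes proper prefixes, and so it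
is preserved by appending arbitrary words. -/
def LexLt {X : Type*} [LinearOrder X] (l₁ l₂ : List X) : Prop :=
  ∃ (p : List X) (a b : X) (s₁ s₂ : List X), a < b ∧ l₁ = p ++ a :: s₁ ∧ l₂ = p ++ b :: s₂

section Words

variable {X : Type*} [LinearOrder X]

lemma LexLt.append_left {l₁ l₂ : List X} (h : LexLt l₁ l₂) (u : List X) :
    LexLt (u ++ l₁) (u ++ l₂) := by
  obtain ⟨p, a, b, s₁, s₂, hab, rfl, rfl⟩ := h
  exact ⟨u ++ p, a, b, s₁, s₂, hab, by simp, by simp⟩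

lemma LexLt.append_right {l₁ l₂ : List X} (h : LexLt l₁ l₂) (v₁ v₂ : List X) :
    LexLt (l₁ ++ v₁) (l₂ ++ v₂) := by
  obtain ⟨p, a, b, s₁, s₂, hab, rfl, rfl⟩ := h
  exact ⟨p, a, b, s₁ ++ v₁, s₂ ++ v₂, hab, by simp, by simp⟩

lemma LexLt.of_lt : ∀ {l₁ l₂ : List X}, l₁ < l₂ → l₁.length = l₂.length → LexLt l₁ l₂
  | [], [], h, _ => absurd h (lt_irrefl _)
  | [], _ :: _, _, hl => by simp at hl
  | _ :: _, [], _, hl => by simp at hl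
  | a :: l₁, b :: l₂, h, hl => by
    rcases List.cons_lt_cons_iff.1 h with hab | ⟨rfl, h'⟩
    · exact ⟨[], a, b, l₁, l₂, hab, rfl, rfl⟩
    · exact (LexLt.of_lt h' (by simpa using hl)).append_left [a]

lemma LexLt.shortlex {l₁ l₂ : List X} (h : LexLt l₁ l₂) (hl : l₁.length = l₂.length) :
    List.Shortlex (· < ·) l₁ l₂ := by
  rw [List.shortlex_def]
  refine Or.inr ⟨hl, ?_⟩
  obtain ⟨p, a, b, s₁, s₂, hab, rfl, rfl⟩ := h
  exact List.Lex.append_left _ (List.Lex.rel hab) p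

/-- If each block of a list of blocks beats, in `LexLt`, every later block, then any nontrivial
rearrangement of the blocks makes the concatenated word smaller. -/
lemma flatten_lexLt : ∀ {l l' : List (List X)},
    l.Pairwise (fun b c => ∀ s t, LexLt (c ++ s) (b ++ t)) → l'.Perm l → l' ≠ l →
      LexLt l'.flatten l.flatten
  | [], l', _, hp, hne => absurd (List.perm_nil.1 hp) hne
  | b :: t, [], _, hp, _ => absurd hp.length_eq (by simp)
  | b :: t, b' :: t', hl, hp, hne => by
    rw [List.pairwise_cons] at hl
    by_cases hb : b' = b
    · subst hb
      have hp' : t'.Perm t := (List.perm_cons b').1 hp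
      have := flatten_lexLt hl.2 hp' (fun h => hne (by rw [h]))
      simpa using this.append_left b'
    · have hmem : b' ∈ t := by
        have : b' ∈ b :: t := hp.subset (by simp)
        simpa [hb] using this
      simpa using hl.1 b' hmem t'.flatten t.flatten

/-- A word is `m`-decomposable if it ends in `m` consecutive blocks such that every nontrivial
permutation of the blocks makes the word smaller. -/
def Decomposable (m : ℕ) (w : List X) : Prop :=
  ∃ (u : List X) (B : Fin m → List X), w = u ++ (List.ofFn B).flatten ∧
    ∀ σ : Equiv.Perm (Fin m), σ ≠ 1 → LexLt (u ++ (List.ofFn (B ∘ σ)).flatten) w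

lemma exists_cut {X : Type*} (h : ℕ) : ∀ (m : ℕ) (w : List X) (p : Fin m → ℕ),
    (∀ i j, i < j → p i + h ≤ p j) → (∀ i, p i + h ≤ w.length) →
    ∃ (u : List X) (B : Fin m → List X), w = u ++ (List.ofFn B).flatten ∧
      ∀ i, ∃ t, B i = (w.drop (p i)).take h ++ t
  | 0, w, p, _, _ => ⟨w, Fin.elim0, by simp, fun i => i.elim0⟩
  | m + 1, w, p, hgap, hend => by
    obtain ⟨u, B, hu, hB⟩ := exists_cut h m (w.take (p (Fin.last m))) (fun i => p i.castSucc)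
      (fun i j hij => hgap _ _ (by simpa using hij))
      (fun i => by
        have h1 := hgap i.castSucc (Fin.last m) (Fin.castSucc_lt_last i)
        have h2 := hend (Fin.last m)
        rw [List.length_take]
        omega)
    refine ⟨u, Fin.snoc B (w.drop (p (Fin.last m))), ?_, ?_⟩
    · rw [List.ofFn_succ']
      simp only [Fin.snoc_castSucc, Fin.snoc_last, List.concat_eq_append, List.flatten_append,
        List.flatten_cons, List.flatten_nil, List.append_nil]
      rw [← List.append_assoc, ← hu, List.take_append_drop]
    · intro i
      refine Fin.lastCases ?_ (fun i => ?_) i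
      · exact ⟨(w.drop (p (Fin.last m))).drop h, by simp⟩
      · obtain ⟨t, ht⟩ := hB i
        refine ⟨t, ?_⟩
        rw [Fin.snoc_castSucc, ht, List.drop_take, List.take_take, min_eq_left]
        have h1 := hgap i.castSucc (Fin.last m) (Fin.castSucc_lt_last i)
        omega

/-- A word with `m` disjoint windows of equal length, strictly decreasing from left to right, is
`m`-decomposable: cut it at the beginnings of the windows. -/
lemma decomposable_of_windows {m h : ℕ} {w : List X} (p : Fin m → ℕ)
    (hgap : ∀ i j, i < j → p i + h ≤ p j) (hend : ∀ i, p i + h ≤ w.length)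
    (hdec : ∀ i j, i < j → LexLt ((w.drop (p j)).take h) ((w.drop (p i)).take h)) :
    Decomposable m w := by
  obtain ⟨u, B, hu, hB⟩ := exists_cut h m w p hgap hend
  have key : ∀ i j, i < j → ∀ s t, LexLt (B j ++ s) (B i ++ t) := by
    intro i j hij s t
    obtain ⟨ti, hti⟩ := hB i
    obtain ⟨tj, htj⟩ := hB j
    rw [hti, htj, List.append_assoc, List.append_assoc]
    exact (hdec i j hij).append_right _ _
  have hlt_irrefl : ∀ l : List X, ¬ LexLt l l := by
    rintro l ⟨p, a, b, s₁, s₂, hab, h1, h2⟩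
    rw [h1] at h2
    have := List.append_cancel_left h2
    simp at this
    exact hab.ne this.1
  have hinj : Function.Injective B := by
    intro i j hij
    by_contra hne
    rcases lt_or_gt_of_ne hne with h1 | h1
    · have := key _ _ h1 [] []
      rw [hij] at this
      exact hlt_irrefl _ this
    · have := key _ _ h1 [] []
      rw [hij] at this
      exact hlt_irrefl _ this
  refine ⟨u, B, hu, fun σ hσ => ?_⟩
  rw [hu]
  refine LexLt.append_left (flatten_lexLt ?_ ?_ ?_) u
  · exact List.pairwise_ofFn.2 fun i j hij => key i j hij
  · exact Equiv.Perm.ofFn_comp_perm σ B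
  · intro h
    apply hσ
    ext i
    have := congrFun (List.ofFn_injective h) i
    exact congrArg Fin.val (hinj this)

/-- A word that agrees with its shift by `q` on a stretch of length `q * k` begins with a `k`-th
power of a word of length `q`. -/
lemma exists_power {X : Type*} (q : ℕ) : ∀ (k : ℕ) (x : List X), q * k + q ≤ x.length →
    x.take (q * k) = (x.drop q).take (q * k) →
    ∃ t, x = (List.replicate k (x.take q)).flatten ++ t
  | 0, x, _, _ => ⟨x, by simp⟩
  | k + 1, x, hlen, h => by
    have hsub : (q * (k + 1)) - q = q * k := by rw [Nat.mul_succ]; omega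
    have hy : (x.drop q).take (q * k) = ((x.drop q).drop q).take (q * k) := by
      have := congrArg (List.drop q) h
      rwa [List.drop_take, List.drop_take, hsub] at this
    have htake : (x.drop q).take q = x.take q := by
      have := congrArg (List.take q) h
      rw [List.take_take, List.take_take] at this
      have hm : min q (q * (k + 1)) = q := by rw [Nat.mul_succ]; omega
      rw [hm] at this
      exact this.symm
    obtain ⟨t, ht⟩ := exists_power q k (x.drop q) (by
      rw [List.length_drop]; rw [Nat.mul_succ] at hlen; omega) hy
    refine ⟨t, ?_⟩
    rw [htake] at ht
    rw [List.replicate_succ, List.flatten_cons, List.append_assoc, ← ht, List.take_append_drop]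

end Words

/-- Shirshov's combinatorial lemma: a long word over a finite alphabet is `m`-decomposable or
contains a `k`-th power of a nonempty word of length less than `m`.

The word is split into long segments. If some segment has two equal windows of length `m * k` at
distance less than `m`, a power appears. Otherwise `m` of the segments coincide, by the pigeonhole
principle, and one picks from the `i`-th of them its `i`-th largest window. -/
lemma shirshov_word (ℓ m k : ℕ) : ∃ L : ℕ, ∀ w : List (Fin ℓ), L ≤ w.length →
    Decomposable m w ∨ ∃ v₁ u v₂ : List (Fin ℓ), u ≠ [] ∧ u.length < m ∧
      w = v₁ ++ (List.replicate k u).flatten ++ v₂ := by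
  classical
  set T := m * k + m with hT
  set V := List.Vector (Fin ℓ) T with hV
  set M := Fintype.card V * m + 1 with hM
  refine ⟨T * M, fun w hw => ?_⟩
  have hseg : ∀ i : Fin M, T * i + T ≤ w.length := by
    intro i
    calc T * i + T = T * (i + 1) := by ring
      _ ≤ T * M := Nat.mul_le_mul_left _ i.2
      _ ≤ _ := hw
  let f : Fin M → V := fun i => ⟨(w.drop (T * i)).take T, by
    have := hseg i
    rw [List.length_take, List.length_drop]; omega⟩
  obtain ⟨s, hs⟩ : ∃ s : V, m < (Finset.univ.filter fun i => f i = s).card :=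
    Fintype.exists_lt_card_fiber_of_mul_lt_card f (by simp [hM])
  set S := Finset.univ.filter fun i => f i = s with hS
  let e : Fin S.card ↪o Fin M := S.orderEmbOfFin rfl
  have he : ∀ i, f (e i) = s := fun i =>
    (Finset.mem_filter.1 (S.orderEmbOfFin_mem rfl i)).2
  have hslen : s.1.length = T := s.2
  let win : Fin m → List (Fin ℓ) := fun o => (s.1.drop o).take (m * k)
  have hwinlen : ∀ o, (win o).length = m * k := by
    intro o
    have := o.2
    simp only [win, List.length_take, List.length_drop, hslen]
    omega
  have hdrop : ∀ (i : Fin S.card) (o : Fin m),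
      (w.drop (T * (e i : ℕ) + o)).take (m * k) = win o := by
    intro i o
    have h1 : s.1 = (w.drop (T * (e i : ℕ))).take T := by
      rw [← he i]
    simp only [win]
    rw [h1, List.drop_take, List.take_take, List.drop_drop, min_eq_left]
    have := o.2
    omega
  by_cases hinj : Function.Injective win
  · left
    set W := Finset.univ.image win with hW
    have hWcard : W.card = m := by
      rw [hW, Finset.card_image_of_injective _ hinj, Finset.card_univ, Fintype.card_fin]
    let v : Fin m ↪o List (Fin ℓ) := W.orderEmbOfFin hWcard
    have hv : ∀ i, ∃ o, win o = v i := by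
      intro i
      obtain ⟨o, -, ho⟩ := Finset.mem_image.1 (W.orderEmbOfFin_mem hWcard i)
      exact ⟨o, ho⟩
    choose o ho using hv
    have ho' : ∀ i, ((o i : Fin m) : ℕ) < m := fun i => (o i).2
    let c : Fin m → Fin S.card := Fin.castLE hs.le
    refine decomposable_of_windows (h := m * k)
      (fun i => T * (e (c i) : ℕ) + o (Fin.rev i)) ?_ ?_ ?_
    · intro i j hij
      have h1 : (e (c i) : ℕ) + 1 ≤ e (c j) := by
        have : e (c i) < e (c j) := e.strictMono (by simpa [c] using hij)
        exact this
      have h2 : T * ((e (c i) : ℕ) + 1) ≤ T * (e (c j) : ℕ) := Nat.mul_le_mul_left _ h1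
      have h3 := ho' (Fin.rev i)
      rw [Nat.mul_succ] at h2
      omega
    · intro i
      have h1 := hseg (e (c i))
      have h3 := ho' (Fin.rev i)
      show T * (e (c i) : ℕ) + o (Fin.rev i) + m * k ≤ _
      omega
    · intro i j hij
      simp only [hdrop]
      refine LexLt.of_lt ?_ (by rw [hwinlen, hwinlen])
      rw [ho, ho]
      exact v.strictMono (Fin.rev_lt_rev.2 hij)
  · right
    obtain ⟨a, b, hab, hlt⟩ : ∃ a b : Fin m, win a = win b ∧ a < b := by
      simp only [Function.Injective, not_forall] at hinj
      obtain ⟨a, b, h, hne⟩ := hinj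
      rcases lt_or_gt_of_ne hne with h1 | h1
      · exact ⟨a, b, h, h1⟩
      · exact ⟨b, a, h.symm, h1⟩
    have hSpos : 0 < S.card := lt_of_le_of_lt (Nat.zero_le _) hs
    let i : Fin S.card := ⟨0, hSpos⟩
    have hb := b.2
    have hlt' : (a : ℕ) < b := hlt
    set q := (b : ℕ) - a with hq
    set x := w.drop (T * (e i : ℕ) + a) with hx
    have hxlen : m * k + q ≤ x.length := by
      have := hseg (e i)
      rw [hx, List.length_drop]
      omega
    have hqk : q * k ≤ m * k := Nat.mul_le_mul_right _ (by omega)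
    have hxx : x.take (m * k) = (x.drop q).take (m * k) := by
      rw [hx, List.drop_drop, hdrop i a, hab, ← hdrop i b]
      congr 2
      omega
    obtain ⟨t, ht⟩ := exists_power q k x (by omega) (by
      have := congrArg (List.take (q * k)) hxx
      rwa [List.take_take, List.take_take, min_eq_left hqk] at this)
    have hul : (x.take q).length = q := by rw [List.length_take]; omega
    refine ⟨w.take (T * (e i : ℕ) + a), x.take q, t, ?_, ?_, ?_⟩
    · intro h0
      rw [h0] at hul
      simp at hul
      omega
    · omega
    · rw [List.append_assoc, ← ht, hx, List.take_append_drop]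

end RelFree

namespace RelFree

/-! ### Strongly nilpotent elements -/

section Nil

variable {A : Type*} [Ring A]

/-- An element `z` is strongly nilpotent if for some `k` all products `z a₁ z a₂ ⋯ z a_k` vanish,
that is, if it generates a nilpotent two-sided ideal. -/
def SN (z : A) : Prop := ∃ k : ℕ, ∀ l : List A, l.length = k → (l.map (z * ·)).prod = 0

variable (A) in
/-- The strongly nilpotent elements of `A` are uniformly nilpotent: for some `q` every product of
`q` of them vanishes. -/
def NB : Prop := ∃ q : ℕ, ∀ l : List A, l.length = q → (∀ z ∈ l, SN z) → l.prod = 0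

lemma SN.map {B : Type*} [Ring B] {f : A →+* B} (hf : Function.Surjective f) {z : A} (hz : SN z) :
    SN (f z) := by
  obtain ⟨k, hk⟩ := hz
  refine ⟨k, fun l hl => ?_⟩
  obtain ⟨l', rfl⟩ : ∃ l' : List A, l'.map f = l := by
    refine ⟨l.map (Function.surjInv hf), ?_⟩
    simp [List.map_map, Function.comp_def, Function.surjInv_eq hf]
  have := congrArg f (hk l' (by simpa using hl))
  rw [map_list_prod, map_zero] at this
  rw [← this]
  congr 1
  simp [List.map_map, Function.comp_def]

lemma SN.mul_left {z : A} (hz : SN z) (a : A) : SN (a * z) := by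
  obtain ⟨k, hk⟩ := hz
  refine ⟨k + 1, fun l hl => ?_⟩
  -- regroup `(a z) b₁ (a z) b₂ ⋯` as `a · z (b₁ a) z (b₂ a) ⋯`
  have key : ∀ (l : List A) (c : A), ((l ++ [c]).map (a * z * ·)).prod
      = a * ((l.map (· * a)).map (z * ·)).prod * (z * c) := by
    intro l
    induction l with
    | nil => intro c; simp [mul_assoc]
    | cons x l ih =>
      intro c
      rw [List.cons_append, List.map_cons, List.prod_cons, ih]
      simp [mul_assoc]
  obtain ⟨l', c, rfl⟩ : ∃ l' c, l = l' ++ [c] := by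
    rcases List.eq_nil_or_concat l with rfl | ⟨l', c, h⟩
    · simp at hl
    · exact ⟨l', c, by simpa using h⟩
  rw [key, hk _ (by simpa using hl)]
  simp

lemma NB.lift {B : Type*} [Ring B] {f : A →+* B} (hf : Function.Surjective f) (hB : NB B) :
    ∃ q : ℕ, ∀ l : List A, l.length = q → (∀ z ∈ l, SN z) → f l.prod = 0 := by
  obtain ⟨q, hq⟩ := hB
  refine ⟨q, fun l hl hz => ?_⟩
  rw [map_list_prod]
  refine hq _ (by simpa using hl) fun z hz' => ?_
  obtain ⟨z, h, rfl⟩ := List.mem_map.1 hz'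
  exact (hz z h).map hf

/-- If products of `k₁` strongly nilpotent elements have property `P`, those of `k₂` have
property `Q`, and `P · Q = 0`, then `NB A`. -/
lemma NB.of_mul {P Q : A → Prop} (hPQ : ∀ a b, P a → Q b → a * b = 0)
    (hP : ∃ q : ℕ, ∀ l : List A, l.length = q → (∀ z ∈ l, SN z) → P l.prod)
    (hQ : ∃ q : ℕ, ∀ l : List A, l.length = q → (∀ z ∈ l, SN z) → Q l.prod) : NB A := by
  obtain ⟨p, hp⟩ := hP
  obtain ⟨q, hq⟩ := hQ
  refine ⟨p + q, fun l hl hz => ?_⟩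
  rw [← List.take_append_drop p l, List.prod_append]
  exact hPQ _ _ (hp _ (by simp [hl]) fun z h => hz z (List.mem_of_mem_take h))
    (hq _ (by simp [hl]) fun z h => hz z (List.mem_of_mem_drop h))

lemma NB.of_subsingleton [Subsingleton A] : NB A := ⟨0, fun _ _ _ => Subsingleton.elim _ _⟩

/-- A product in which a strongly nilpotent `z` occurs often enough vanishes. -/
lemma SN.prod_eq_zero {z : A} (hz : SN z) :
    ∃ k : ℕ, ∀ {ι : Type} [DecidableEq ι] (x : ι → A) (i : ι) (_ : x i = z) (l : List ι),
      k ≤ l.count i → (l.map x).prod = 0 := by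
  obtain ⟨k, hk⟩ := hz
  refine ⟨k, fun {ι} _ x i hi l => ?_⟩
  have key : ∀ (l : List ι), ∃ (b : A) (c : List A), c.length = l.count i ∧
      (l.map x).prod = b * (c.map (z * ·)).prod := by
    intro l
    induction l with
    | nil => exact ⟨1, [], rfl, by simp⟩
    | cons j l ih =>
      obtain ⟨b, c, hc, h⟩ := ih
      by_cases hj : j = i
      · refine ⟨1, b :: c, by simp [hj, hc], ?_⟩
        simp [h, hj, hi, mul_assoc]
      · refine ⟨x j * b, c, by simp [hc, hj], ?_⟩
        simp [h, mul_assoc]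
  intro hl
  obtain ⟨b, c, hc, h⟩ := key l
  rw [h, ← List.take_append_drop k c, List.map_append, List.prod_append, hk _ (by simp; omega)]
  simp

end Nil

/-! ### Generalized monomials and Capelli identities -/

section Capelli

variable {A : Type*} [Ring A]

/-- The value of a word whose letters are either elements of `A` or variables from `ι`. -/
def ev {ι : Type*} (x : ι → A) (l : List (A ⊕ ι)) : A := (l.map (Sum.elim id x)).prod

/-- The variables of a word, from left to right. -/
def vars {ι : Type*} (l : List (A ⊕ ι)) : List ι := l.filterMap Sum.getRight?

/-- A word with variables `e 0, e 1, …` can be written `b x_{e 0} y₀ x_{e 1} y₁ ⋯`. -/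
lemma ev_eq {ι : Type*} (l : List (A ⊕ ι)) : ∃ (b : A) (c : List (ι × A)),
    c.map Prod.fst = vars l ∧ ∀ x : ι → A, ev x l = b * (c.map fun p => x p.1 * p.2).prod := by
  induction l with
  | nil => exact ⟨1, [], rfl, fun x => by simp [ev]⟩
  | cons s l ih =>
    obtain ⟨b, c, hc, h⟩ := ih
    rcases s with a | i
    · refine ⟨a * b, c, hc, fun x => ?_⟩
      have := h x
      simp only [ev] at this
      simp [ev, this, mul_assoc]
    · refine ⟨1, (i, b) :: c, by simpa [vars] using hc, fun x => ?_⟩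
      have := h x
      simp only [ev] at this
      simp [ev, this, mul_assoc]

/-- A word in which each of `n` variables occurs exactly once. -/
lemma ev_eq_perm {n : ℕ} (l : List (A ⊕ Fin n)) (hl : (vars l).Perm (List.finRange n)) :
    ∃ (b : A) (π : Equiv.Perm (Fin n)) (y : Fin n → A), ∀ x : Fin n → A,
      ev x l = b * (List.ofFn fun j => x (π j) * y j).prod := by
  obtain ⟨b, c, hc, h⟩ := ev_eq l
  have hlen : c.length = n := by
    have := hl.length_eq
    rw [← hc] at this
    simpa using this
  obtain ⟨g, rfl⟩ : ∃ g : Fin n → Fin n × A, c = List.ofFn g :=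
    ⟨fun j => c.get (j.cast hlen.symm), List.ext_getElem (by simp [hlen]) (by simp)⟩
  have hinj : Function.Injective fun j : Fin n => (g j).1 := by
    have hnd : ((List.ofFn g).map Prod.fst).Nodup := by
      rw [hc]
      exact hl.nodup_iff.2 (List.nodup_finRange _)
    rw [List.map_ofFn] at hnd
    exact List.nodup_ofFn.1 hnd
  refine ⟨b, Equiv.ofBijective _ (Finite.injective_iff_bijective.1 hinj), fun j => (g j).2,
    fun x => ?_⟩
  rw [h x, List.map_ofFn]
  rfl

/-- The Capelli polynomial `∑ sign(σ) x_{σ 0} y₀ x_{σ 1} y₁ ⋯`. -/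
def cap {n : ℕ} (y x : Fin n → A) : A :=
  ∑ σ : Equiv.Perm (Fin n), (Equiv.Perm.sign σ : ℤ) • (List.ofFn fun j => x (σ j) * y j).prod

variable (A) in
/-- `A` satisfies the `n`-th Capelli identity. -/
def Cap (n : ℕ) : Prop := ∀ x y : Fin n → A, cap y x = 0

/-- The alternating sum over the variables of any word multilinear in `n` variables vanishes. -/
lemma Cap.sum_ev {n : ℕ} (h : Cap A n) (l : List (A ⊕ Fin n)) (hl : (vars l).Perm (List.finRange n))
    (x : Fin n → A) :
    ∑ σ : Equiv.Perm (Fin n), (Equiv.Perm.sign σ : ℤ) • ev (x ∘ σ) l = 0 := by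
  obtain ⟨b, π, y, hb⟩ := ev_eq_perm l hl
  have h1 : ∀ σ : Equiv.Perm (Fin n), (Equiv.Perm.sign σ : ℤ) • ev (x ∘ σ) l =
      (Equiv.Perm.sign π : ℤ) • (b * ((Equiv.Perm.sign (σ * π) : ℤ) •
        (List.ofFn fun j => x ((σ * π) j) * y j).prod)) := by
    intro σ
    rw [hb, Equiv.Perm.sign_mul, mul_smul_comm, smul_smul]
    congr 1
    rw [Units.val_mul, mul_comm (Equiv.Perm.sign σ : ℤ), ← mul_assoc]
    simp
  simp only [h1]
  have h2 := Equiv.sum_comp (Equiv.mulRight π)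
    (fun σ => (Equiv.Perm.sign σ : ℤ) • (List.ofFn fun j => x (σ j) * y j).prod)
  simp only [Equiv.coe_mulRight] at h2
  have h3 := h x y
  rw [cap] at h3
  rw [← Finset.smul_sum, ← Finset.mul_sum, h2, h3, mul_zero, smul_zero]

lemma cap_mul_right {n : ℕ} (y x : Fin (n + 1) → A) (a : A) :
    cap y x * a = cap (Function.update y (Fin.last n) (y (Fin.last n) * a)) x := by
  rw [cap, cap, Finset.sum_mul]
  refine Finset.sum_congr rfl fun σ _ => ?_
  rw [smul_mul_assoc]
  congr 1
  rw [List.ofFn_succ', List.ofFn_succ']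
  simp [mul_assoc, Function.update_of_ne, Fin.castSucc_ne_last]

/-- The exchange identity: expansion of a Capelli polynomial along the place of the extra
variable `z`. -/
lemma Cap.exchange {n : ℕ} (h : Cap A (n + 1)) (z b : A) (y x : Fin n → A) :
    z * b * cap y x = ∑ i, x i * b * cap y (Function.update x i z) := by
  have h0 := h (Fin.cons z x) (Fin.cons b y)
  rw [cap, Fintype.sum_equiv Equiv.Perm.decomposeFin _
    (fun p : Fin (n + 1) × Equiv.Perm (Fin n) =>
      (Equiv.Perm.sign (Equiv.Perm.decomposeFin.symm p) : ℤ) •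
        (List.ofFn fun j => (Fin.cons z x : Fin (n + 1) → A)
          (Equiv.Perm.decomposeFin.symm p j) * (Fin.cons b y : Fin (n + 1) → A) j).prod)
    (fun σ => by simp), Fintype.sum_prod_type, Fin.sum_univ_succ] at h0
  have h1 : ∀ σ : Equiv.Perm (Fin n),
      (Equiv.Perm.sign (Equiv.Perm.decomposeFin.symm (0, σ)) : ℤ) •
        (List.ofFn fun j => (Fin.cons z x : Fin (n + 1) → A)
          (Equiv.Perm.decomposeFin.symm (0, σ) j) * (Fin.cons b y : Fin (n + 1) → A) j).prod =
      z * b * ((Equiv.Perm.sign σ : ℤ) • (List.ofFn fun j => x (σ j) * y j).prod) := by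
    intro σ
    rw [List.ofFn_succ]
    simp [Equiv.Perm.decomposeFin.symm_sign, -zsmul_eq_mul]
  have h2 : ∀ (i : Fin n) (σ : Equiv.Perm (Fin n)),
      (Equiv.Perm.sign (Equiv.Perm.decomposeFin.symm (i.succ, σ)) : ℤ) •
        (List.ofFn fun j => (Fin.cons z x : Fin (n + 1) → A)
          (Equiv.Perm.decomposeFin.symm (i.succ, σ) j) *
            (Fin.cons b y : Fin (n + 1) → A) j).prod =
      -(x i * b * ((Equiv.Perm.sign σ : ℤ) •
        (List.ofFn fun j => Function.update x i z (σ j) * y j).prod)) := by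
    intro i σ
    have h3 : ∀ j : Fin n, (Fin.cons z x : Fin (n + 1) → A)
        (Equiv.swap 0 i.succ (σ j).succ) = Function.update x i z (σ j) := by
      intro j
      by_cases hj : σ j = i
      · simp [hj]
      · rw [Equiv.swap_apply_of_ne_of_ne (Fin.succ_ne_zero _) (by simpa using hj)]
        simp [hj]
    rw [List.ofFn_succ]
    simp [Equiv.Perm.decomposeFin.symm_sign, -zsmul_eq_mul, h3, Fin.succ_ne_zero]
  simp only [h1, h2, ← Finset.mul_sum, Finset.sum_neg_distrib] at h0
  simpa [cap] using add_neg_eq_zero.1 h0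

end Capelli

end RelFree

namespace RelFree

/-! ### Bounded height and the Noetherian argument -/

/-- The value of the word `w` at `r`. -/
def mon {ℓ : ℕ} {A : Type*} [Monoid A] (r : Fin ℓ → A) (w : List (Fin ℓ)) : A := (w.map r).prod

section

variable {A : Type*} [Ring A]

@[simp] lemma mon_append {ℓ : ℕ} (r : Fin ℓ → A) (u v : List (Fin ℓ)) :
    mon r (u ++ v) = mon r u * mon r v := by simp [mon]

lemma mon_flatten {ℓ : ℕ} (r : Fin ℓ → A) (B : List (List (Fin ℓ))) :
    mon r B.flatten = (B.map (mon r)).prod := by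
  induction B with
  | nil => simp [mon]
  | cons b B ih => simp [ih]

lemma mon_flatten_replicate {ℓ : ℕ} (r : Fin ℓ → A) (u : List (Fin ℓ)) (k : ℕ) :
    mon r (List.replicate k u).flatten = mon r u ^ k := by
  rw [mon_flatten]; simp

/-- Shirshov's height theorem in the form needed below: `ψ(A)` lies in a finitely generated
module over a commutative ring `R` acting centrally, if `A` satisfies a standard identity and if
the images of short words are integral over `R`. -/
lemma exists_height {R E : Type*} [CommRing R] [Ring E] [Algebra R E] {ℓ : ℕ} (r : Fin ℓ → A)
    (ψ : A →+* E) (m k : ℕ)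
    (hstd : ∀ x : Fin m → A, ∑ σ : Equiv.Perm (Fin m),
      (Equiv.Perm.sign σ : ℤ) • (List.ofFn (x ∘ σ)).prod = 0)
    (hinteg : ∀ u : List (Fin ℓ), u ≠ [] → u.length < m → ∃ c : ℕ → R,
      ψ (mon r u) ^ k = ∑ j ∈ Finset.range k, c j • ψ (mon r u) ^ j) :
    ∃ L : ℕ, ∀ w : List (Fin ℓ), ψ (mon r w) ∈
      Submodule.span R ((fun w => ψ (mon r w)) '' {w : List (Fin ℓ) | w.length < L}) := by
  classical
  obtain ⟨L, hL⟩ := shirshov_word ℓ m k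
  refine ⟨L, fun w => ?_⟩
  have hwf : WellFounded (List.Shortlex (· < · : Fin ℓ → Fin ℓ → Prop)) :=
    List.Shortlex.wf wellFounded_lt
  induction w using hwf.induction with
  | h w ih =>
  by_cases hw : w.length < L
  · exact Submodule.subset_span ⟨w, hw, rfl⟩
  rcases hL w (not_lt.1 hw) with ⟨u, B, hu, hB⟩ | ⟨v₁, u, v₂, hu, hum, rfl⟩
  · have h0 := hstd fun j => mon r (B j)
    rw [← Finset.add_sum_erase _ _ (Finset.mem_univ (1 : Equiv.Perm (Fin m)))] at h0
    have h1 : ∀ σ : Equiv.Perm (Fin m), (List.ofFn ((fun j => mon r (B j)) ∘ σ)).prod =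
        mon r (List.ofFn (B ∘ σ)).flatten := by
      intro σ
      rw [mon_flatten, List.map_ofFn]
      rfl
    simp only [h1, Equiv.Perm.sign_one, Units.val_one, one_smul] at h0
    have h2 : mon r w = -∑ σ ∈ Finset.univ.erase (1 : Equiv.Perm (Fin m)),
        (Equiv.Perm.sign σ : ℤ) • mon r (u ++ (List.ofFn (B ∘ σ)).flatten) := by
      rw [hu, mon_append, show List.ofFn B = List.ofFn (B ∘ (1 : Equiv.Perm (Fin m))) from rfl,
        eq_neg_of_add_eq_zero_left h0, mul_neg, Finset.mul_sum]
      simp [-zsmul_eq_mul]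
    rw [h2, map_neg, map_sum]
    refine Submodule.neg_mem _ (Submodule.sum_mem _ fun σ hσ => ?_)
    rw [map_zsmul]
    refine zsmul_mem (ih _ ((hB σ (Finset.ne_of_mem_erase hσ)).shortlex ?_)) _
    have : ((List.ofFn (B ∘ σ)).map List.length).sum = ((List.ofFn B).map List.length).sum :=
      ((Equiv.Perm.ofFn_comp_perm σ B).map _).sum_eq
    rw [hu, List.length_append, List.length_append, List.length_flatten, List.length_flatten, this]
  · obtain ⟨c, hc⟩ := hinteg u hu hum
    have h2 : ψ (mon r (v₁ ++ (List.replicate k u).flatten ++ v₂)) = ∑ j ∈ Finset.range k,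
        c j • ψ (mon r (v₁ ++ (List.replicate j u).flatten ++ v₂)) := by
      simp only [mon_append, mon_flatten_replicate, map_mul, map_pow, hc, Finset.mul_sum,
        Finset.sum_mul, mul_smul_comm, smul_mul_assoc]
    rw [h2]
    refine Submodule.sum_mem _ fun j hj => Submodule.smul_mem _ _ (ih _ ?_)
    rw [List.shortlex_def]
    left
    have h3 := List.length_pos_iff.2 hu
    have h4 : j < k := Finset.mem_range.1 hj
    simp only [List.length_append, List.length_flatten, List.map_replicate, List.sum_replicate,
      smul_eq_mul]
    have := Nat.mul_lt_mul_of_pos_right h4 h3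
    omega

open Pointwise in
/-- In the situation of `exists_height`, if `R` is Noetherian, then the span of the images of the
strongly nilpotent elements is generated by finitely many of them, and a long word in finitely many
strongly nilpotent elements vanishes. -/
lemma exists_prod_eq_zero {C R E : Type*} [CommRing C] [Algebra C A] [CommRing R]
    [IsNoetherianRing R] [Ring E] [Algebra R E] {ℓ : ℕ} (r : Fin ℓ → A)
    (hr : Submodule.span C (Set.range (mon r)) = ⊤)
    (ψ : A →+* E) (hψ : ∀ (c : C) (a : A), ∃ ρ : R, ψ (c • a) = ρ • ψ a) (m k : ℕ)
    (hstd : ∀ x : Fin m → A, ∑ σ : Equiv.Perm (Fin m),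
      (Equiv.Perm.sign σ : ℤ) • (List.ofFn (x ∘ σ)).prod = 0)
    (hinteg : ∀ u : List (Fin ℓ), u ≠ [] → u.length < m → ∃ c : ℕ → R,
      ψ (mon r u) ^ k = ∑ j ∈ Finset.range k, c j • ψ (mon r u) ^ j) :
    ∃ q : ℕ, ∀ l : List A, l.length = q → (∀ z ∈ l, SN z) → ψ l.prod = 0 := by
  classical
  obtain ⟨L, hL⟩ := exists_height (R := R) r ψ m k hstd hinteg
  set P := Submodule.span R ((fun w => ψ (mon r w)) '' {w : List (Fin ℓ) | w.length < L}) with hP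
  have hPfg : P.FG := Submodule.fg_span ((List.finite_length_lt (Fin ℓ) L).image _)
  have hmem : ∀ a : A, ψ a ∈ P := by
    intro a
    have ha : a ∈ Submodule.span C (Set.range (mon r)) := by rw [hr]; trivial
    induction ha using Submodule.span_induction with
    | mem x hx => obtain ⟨w, rfl⟩ := hx; exact hL w
    | zero => simp
    | add x y _ _ hx hy => rw [map_add]; exact P.add_mem hx hy
    | smul c x _ hx => obtain ⟨ρ, hρ⟩ := hψ c x; rw [hρ]; exact P.smul_mem _ hx
  have := isNoetherian_of_fg_of_noetherian P hPfg
  have hSfg : (Submodule.span R (ψ '' {z | SN z})).FG := by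
    have hle : Submodule.span R (ψ '' {z | SN z}) ≤ P := by
      rw [Submodule.span_le]
      rintro _ ⟨z, -, rfl⟩
      exact hmem z
    exact Submodule.FG.of_le hPfg hle
  obtain ⟨s, hs, hspan⟩ := (Submodule.fg_span_iff_fg_span_finset_subset _).1 hSfg
  let e := s.equivFin
  choose! f hf using fun x (hx : x ∈ s) => hs hx
  let z : Fin s.card → A := fun i => f (e.symm i).1
  have hzψ : ∀ i, ψ (z i) = (e.symm i).1 := fun i => (hf _ (e.symm i).2).2
  have hz : ∀ i, SN (z i) := fun i => (hf _ (e.symm i).2).1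
  choose K hK using fun i => (hz i).prod_eq_zero
  refine ⟨∑ i, K i + 1, fun l hl hlz => ?_⟩
  have hpow : ∀ l : List A, (∀ z ∈ l, SN z) →
      ψ l.prod ∈ Submodule.span R (s : Set E) ^ l.length := by
    intro l
    induction l with
    | nil => intro _; simpa using ⟨1, map_one _⟩
    | cons x l ih =>
      intro h
      rw [List.prod_cons, map_mul, List.length_cons, pow_succ']
      refine Submodule.mul_mem_mul ?_ (ih fun z hz => h z (by simp [hz]))
      rw [← hspan]
      exact Submodule.subset_span ⟨x, h x (by simp), rfl⟩
  have h1 := hpow l hlz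
  rw [Submodule.span_pow, hl] at h1
  have h2 : (s : Set E) ^ (∑ i, K i + 1) ⊆ {0} := by
    intro x hx
    obtain ⟨g, rfl⟩ := Set.mem_pow.1 hx
    let v : List (Fin s.card) := List.ofFn fun i => e (g i)
    have hv : (List.ofFn fun i => ((g i : s) : E)).prod = ψ (v.map z).prod := by
      rw [map_list_prod, List.map_map, List.map_ofFn]
      congr 2
      funext i
      simp [hzψ]
    obtain ⟨i, hi⟩ : ∃ i, K i ≤ v.count i := by
      by_contra! hcon
      have h3 : ∑ i, v.count i = v.length := by
        have := Multiset.sum_count_eq_card (s := Finset.univ) (m := (v : Multiset (Fin s.card)))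
          (by simp)
        simpa using this
      have h4 : v.length = ∑ i, K i + 1 := by simp [v]
      have h5 : ∑ i, v.count i ≤ ∑ i, K i := Finset.sum_le_sum fun i _ => (hcon i).le
      omega
    rw [hv, hK i z i rfl v hi]
    simp
  have h3 := Submodule.span_mono (R := R) h2 h1
  simpa using h3

end

end RelFree

namespace RelFree

/-! ### Consequences of the Capelli identities -/

section CapelliConsequences

variable {A : Type*} [Ring A]

/-- Multiplying on the right by `a` the variables in `S`, summed over the `S` of size `k`, amounts to
multiplying the coefficients `y` on the left. -/
lemma cap_shift {n : ℕ} (k : ℕ) (a : A) (y x : Fin n → A) :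
    ∑ S ∈ Finset.univ.powersetCard k, cap y (S.piecewise (fun i => x i * a) x) =
      ∑ S ∈ Finset.univ.powersetCard k, cap (S.piecewise (fun i => a * y i) y) x := by
  simp only [cap]
  rw [Finset.sum_comm, Finset.sum_comm (s := Finset.univ.powersetCard k)]
  refine Finset.sum_congr rfl fun σ _ => ?_
  refine Finset.sum_equiv σ.symm.finsetCongr ?_ ?_
  · intro S
    simp [Finset.mem_powersetCard]
  · intro S _
    congr 3
    funext j
    by_cases hj : σ j ∈ S <;> simp [Finset.piecewise, hj, mul_assoc]

/-- The Cayley–Hamilton identity: a Capelli polynomial in `n` variables is killed by the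
characteristic polynomial of `a`, whose coefficients are the shift operators. -/
lemma Cap.cayley_hamilton {n : ℕ} (h : Cap A (n + 1)) (a b : A) (y x : Fin n → A) :
    ∑ k ∈ Finset.range (n + 1), (-1 : ℤ) ^ k • (a ^ (n - k) * b *
      ∑ S ∈ Finset.univ.powersetCard k, cap y (S.piecewise (fun i => x i * a) x)) = 0 := by
  have h1 : ∀ k ∈ Finset.range (n + 1), (-1 : ℤ) ^ k • (a ^ (n - k) * b *
      ∑ S ∈ Finset.univ.powersetCard k, cap y (S.piecewise (fun i => x i * a) x)) =
      ∑ S ∈ Finset.univ.powersetCard k, ∑ i, (-1 : ℤ) ^ S.card • (x i * b *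
        cap y (S.piecewise (fun j => Function.update x i (a ^ (n - S.card)) j * a)
          (Function.update x i (a ^ (n - S.card))))) := by
    intro k _
    rw [cap_shift, Finset.mul_sum]
    simp only [h.exchange (a ^ (n - k))]
    rw [Finset.sum_comm, Finset.smul_sum, Finset.sum_comm (s := Finset.univ.powersetCard k)]
    refine Finset.sum_congr rfl fun i _ => ?_
    rw [← Finset.mul_sum, ← cap_shift, Finset.mul_sum, Finset.smul_sum]
    refine Finset.sum_congr rfl fun S hS => ?_
    rw [(Finset.mem_powersetCard.1 hS).2]
  rw [Finset.sum_congr rfl h1]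
  have h2 := Finset.sum_powerset (Finset.univ : Finset (Fin n)) fun S =>
    ∑ i, (-1 : ℤ) ^ S.card • (x i * b *
        cap y (S.piecewise (fun j => Function.update x i (a ^ (n - S.card)) j * a)
          (Function.update x i (a ^ (n - S.card)))))
  rw [Finset.card_univ, Fintype.card_fin] at h2
  rw [← h2, Finset.sum_comm]
  refine Finset.sum_eq_zero fun i _ => ?_
  -- the terms for `S` and `S ∪ {i}` cancel
  rw [← Finset.insert_erase (Finset.mem_univ i), Finset.sum_powerset_insert (by simp),
    ← Finset.sum_add_distrib]
  refine Finset.sum_eq_zero fun S hS => ?_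
  have hi : i ∉ S := fun hi => by simpa using Finset.mem_powerset.1 hS hi
  have hcard : S.card < n := by
    have := Finset.card_le_card (Finset.mem_powerset.1 hS)
    rw [Finset.card_erase_of_mem (Finset.mem_univ i), Finset.card_univ, Fintype.card_fin] at this
    have := i.2
    omega
  rw [Finset.card_insert_of_notMem hi, pow_succ, mul_neg_one, neg_smul]
  have h3 : n - S.card = n - (S.card + 1) + 1 := by omega
  have h4 : S.piecewise (fun j => Function.update x i (a ^ (n - S.card)) j * a)
      (Function.update x i (a ^ (n - S.card))) =
      (insert i S).piecewise (fun j => Function.update x i (a ^ (n - (S.card + 1))) j * a)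
        (Function.update x i (a ^ (n - (S.card + 1)))) := by
    funext j
    by_cases hj : j = i
    · subst hj
      simp only [Finset.piecewise, hi, Finset.mem_insert_self, if_true, if_false,
        Function.update_self]
      rw [h3, pow_succ]
    · simp [Finset.piecewise, hj, Function.update_of_ne]
  rw [h4, add_neg_cancel]

/-- A sum over a set of permutations stable under left multiplication by the image of `K` vanishes if
all the sums over `K`-orbits do. -/
lemma sum_eq_zero_of_orbit {G K M : Type*} [Group G] [Group K] [Fintype K] [AddCommGroup M]
    (φ : K →* G) (hφ : Function.Injective φ) (F : G → M)
    (hF : ∀ g, ∑ k, F (φ k * g) = 0) (H : Finset G) (hH : ∀ k, ∀ g ∈ H, φ k * g ∈ H) :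
    ∑ g ∈ H, F g = 0 := by
  classical
  induction hc : H.card using Nat.strong_induction_on generalizing H with
  | _ c ih =>
  rcases H.eq_empty_or_nonempty with rfl | ⟨g, hg⟩
  · simp
  let O : Finset G := Finset.univ.image fun k => φ k * g
  have hO : O ⊆ H := by
    intro x hx
    obtain ⟨k, -, rfl⟩ := Finset.mem_image.1 hx
    exact hH k g hg
  have hgO : g ∈ O := Finset.mem_image.2 ⟨1, Finset.mem_univ _, by simp⟩
  rw [← Finset.sum_sdiff hO, ih (H \ O).card ?_ (H \ O) ?_ rfl, zero_add]
  · rw [Finset.sum_image fun k _ k' _ hk => hφ (mul_right_cancel hk)]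
    exact hF g
  · rw [← hc]
    exact Finset.card_lt_card (Finset.sdiff_ssubset hO ⟨g, hgO⟩)
  · intro k x hx
    rw [Finset.mem_sdiff] at hx ⊢
    refine ⟨hH k x hx.1, fun hk => hx.2 ?_⟩
    obtain ⟨k', -, hk'⟩ := Finset.mem_image.1 hk
    refine Finset.mem_image.2 ⟨k⁻¹ * k', Finset.mem_univ _, ?_⟩
    rw [map_mul, mul_assoc]
    rw [hk', map_inv, inv_mul_cancel_left]

/-- The alternating sum over permutations of any `n` of the variables of a multilinear word
vanishes. -/
lemma Cap.sum_orbit {n : ℕ} (h : Cap A n) {X : Type*} [Fintype X] [DecidableEq X]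
    (ι : Fin n ↪ X) (z : X → A) (l : List (A ⊕ X)) (hnd : (vars l).Nodup) (hl : ∀ i, i ∈ vars l)
    (ρ : Equiv.Perm X) :
    ∑ κ : Equiv.Perm (Fin n), (Equiv.Perm.sign (κ.viaFintypeEmbedding ι * ρ) : ℤ) •
      ev (z ∘ (κ.viaFintypeEmbedding ι * ρ)) l = 0 := by
  classical
  -- treat the variables outside the range of `ι` as coefficients
  let g : X → A ⊕ Fin n := fun s =>
    if hs : ρ s ∈ Set.range ι then Sum.inr hs.choose else Sum.inl (z (ρ s))
  have hg : ∀ s i, ρ s = ι i → g s = Sum.inr i := by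
    intro s i hs
    have h1 : ρ s ∈ Set.range ι := ⟨i, hs.symm⟩
    have h2 : h1.choose = i := ι.injective (h1.choose_spec.trans hs)
    simp only [g, dif_pos h1, h2]
  have hg' : ∀ s, ρ s ∉ Set.range ι → g s = Sum.inl (z (ρ s)) := fun s hs => dif_neg hs
  let l' : List (A ⊕ Fin n) := l.map (Sum.elim Sum.inl g)
  have hev : ∀ κ : Equiv.Perm (Fin n), ev (z ∘ (κ.viaFintypeEmbedding ι * ρ)) l =
      ev ((z ∘ ι) ∘ κ) l' := by
    intro κ
    simp only [ev, l', List.map_map]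
    congr 2
    funext s
    rcases s with a | s
    · simp
    · by_cases hs : ρ s ∈ Set.range ι
      · obtain ⟨i, hi⟩ := hs
        simp [hg s i hi.symm, ← hi]
      · simp [hg' s hs, hs, Equiv.Perm.viaFintypeEmbedding_apply_notMem_range]
  have hvars : vars l' = (vars l).filterMap fun s => (g s).getRight? := by
    simp only [vars, l']
    rw [List.filterMap_map, List.filterMap_filterMap]
    congr 1
    funext s
    rcases s with a | s <;> simp
  have hperm : (vars l').Perm (List.finRange n) := by
    refine (List.perm_ext_iff_of_nodup ?_ (List.nodup_finRange n)).2 ?_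
    · rw [hvars]
      refine hnd.filterMap fun s s' i hi hi' => ?_
      have key : ∀ s, i ∈ (g s).getRight? → ρ s = ι i := by
        intro s hs
        by_cases h1 : ρ s ∈ Set.range ι
        · obtain ⟨j, hj⟩ := h1
          rw [hg s j hj.symm] at hs
          simp at hs
          rw [← hj, hs]
        · simp [hg' s h1] at hs
      exact ρ.injective ((key s hi).trans (key s' hi').symm)
    · intro i
      simp only [List.mem_finRange, iff_true]
      rw [hvars, List.mem_filterMap]
      exact ⟨ρ.symm (ι i), hl _, by rw [hg _ i (by simp)]; rfl⟩
  have h0 := h.sum_ev l' hperm (z ∘ ι)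
  have h1 : ∀ κ : Equiv.Perm (Fin n),
      (Equiv.Perm.sign (κ.viaFintypeEmbedding ι * ρ) : ℤ) •
        ev (z ∘ (κ.viaFintypeEmbedding ι * ρ)) l =
      (Equiv.Perm.sign ρ : ℤ) • ((Equiv.Perm.sign κ : ℤ) • ev ((z ∘ ι) ∘ κ) l') := by
    intro κ
    rw [hev, smul_smul, Equiv.Perm.sign_mul, Equiv.Perm.viaFintypeEmbedding_sign, Units.val_mul,
      mul_comm]
  rw [Finset.sum_congr rfl fun κ _ => h1 κ, ← Finset.smul_sum, h0, smul_zero]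

/-- The word `b x₀ y₀ x₁ y₁ ⋯ x'₀ y'₀ x'₁ y'₁ ⋯` in the variables `x` and `x'`. -/
def doubleWord {n : ℕ} (b : A) (y y' : Fin n → A) : List (A ⊕ (Fin n ⊕ Fin n)) :=
  Sum.inl b :: ((List.ofFn fun j => [Sum.inr (Sum.inl j), Sum.inl (y j)]).flatten ++
    (List.ofFn fun j => [Sum.inr (Sum.inr j), Sum.inl (y' j)]).flatten)

lemma ev_doubleWord {n : ℕ} (b : A) (y y' : Fin n → A) (z : Fin n ⊕ Fin n → A) :
    ev z (doubleWord b y y') = b * (List.ofFn fun j => z (Sum.inl j) * y j).prod *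
      (List.ofFn fun j => z (Sum.inr j) * y' j).prod := by
  simp [ev, doubleWord, List.map_flatten, List.prod_flatten, List.map_ofFn, Function.comp_def,
    mul_assoc]

lemma vars_doubleWord {n : ℕ} (b : A) (y y' : Fin n → A) :
    vars (doubleWord b y y') = List.ofFn Sum.inl ++ List.ofFn Sum.inr := by
  have h : ∀ (f : Fin n → Fin n ⊕ Fin n) (y : Fin n → A),
      (List.ofFn fun j => [Sum.inr (f j), Sum.inl (y j)]).flatten.filterMap
        (Sum.getRight? (α := A)) = List.ofFn f := by
    intro f y
    rw [List.filterMap_flatten, List.map_ofFn,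
      show ((List.filterMap (Sum.getRight? (α := A))) ∘ fun j => [Sum.inr (f j), Sum.inl (y j)])
        = fun j => [f j] from rfl]
    rw [show (List.ofFn fun j => [f j]) = (List.ofFn f).map fun x => [x] by
      rw [List.map_ofFn]; rfl]
    induction List.ofFn f with
    | nil => rfl
    | cons a l ih => simpa using ih
  have h1 : vars (doubleWord b y y') = List.filterMap Sum.getRight?
      ((List.ofFn fun j => [Sum.inr (Sum.inl j), Sum.inl (y j)]).flatten ++
        (List.ofFn fun j => [Sum.inr (Sum.inr j), Sum.inl (y' j)]).flatten) := rfl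
  rw [h1, List.filterMap_append, h, h]

lemma sign_sumComm (n : ℕ) :
    (Equiv.Perm.sign (Equiv.sumComm (Fin n) (Fin n) : Equiv.Perm (Fin n ⊕ Fin n)) : ℤ) =
      (-1) ^ n := by
  have h := Equiv.Perm.sign_eq_sign_of_equiv
    (Equiv.sumComm (Fin n) (Fin n) : Equiv.Perm (Fin n ⊕ Fin n))
    (Equiv.prodCongrLeft fun _ : Fin n => Equiv.swap false true)
    (Equiv.boolProdEquivSum (Fin n)).symm (by rintro (i | i) <;> simp)
  rw [h, Equiv.Perm.sign_prodCongrLeft]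
  simp

/-- Summing a word over the permutations preserving the two blocks of variables gives a product of
two Capelli polynomials. -/
lemma sum_doubleWord {n : ℕ} (b : A) (y y' : Fin n → A) (z : Fin n ⊕ Fin n → A) :
    ∑ p : Equiv.Perm (Fin n) × Equiv.Perm (Fin n),
      (Equiv.Perm.sign (Equiv.Perm.sumCongr p.1 p.2) : ℤ) •
        ev (z ∘ Equiv.Perm.sumCongr p.1 p.2) (doubleWord b y y') =
      b * cap y (z ∘ Sum.inl) * cap y' (z ∘ Sum.inr) := by
  rw [Fintype.sum_prod_type, cap, Finset.mul_sum, Finset.sum_mul]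
  refine Finset.sum_congr rfl fun σ _ => ?_
  rw [cap, Finset.mul_sum]
  refine Finset.sum_congr rfl fun τ _ => ?_
  rw [ev_doubleWord, Equiv.Perm.sign_sumCongr, Units.val_mul, mul_smul_comm, mul_smul_comm,
    smul_mul_assoc, smul_smul, mul_comm (Equiv.Perm.sign τ : ℤ)]
  rfl

/-- In a product of two Capelli polynomials in `n` variables, the two blocks of variables can be
interchanged when the Capelli identity of degree `n + 1` holds.

The alternating sum of the word over all permutations `π` that keep a given proper subset of the
first block inside the places of the first block vanishes, since `n + 1` other variables may be
permuted freely. By inclusion and exclusion, the sum over the permutations placing none of the first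
block in the first block is `(-1) ^ n` times the sum over those placing all of it there. -/
lemma Cap.swap {n : ℕ} (h : Cap A (n + 1)) (b : A) (y y' x x' : Fin n → A) :
    b * cap y x * cap y' x' = b * cap y x' * cap y' x := by
  classical
  let X := Fin n ⊕ Fin n
  let z : X → A := Sum.elim x x'
  let F : Equiv.Perm X → A := fun π =>
    (Equiv.Perm.sign π : ℤ) • ev (z ∘ π) (doubleWord b y y')
  let K : Equiv.Perm X → Finset (Fin n) := fun π =>
    Finset.univ.filter fun i => ∃ j, π (Sum.inl j) = Sum.inl i
  have hK : ∀ π i, i ∈ K π ↔ ∃ j, π (Sum.inl j) = Sum.inl i := by simp [K]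
  have hzero : ∀ S : Finset (Fin n), S ≠ Finset.univ →
      ∑ π with S ⊆ K π, F π = 0 := by
    intro S hS
    have hcard : n + 1 ≤ Fintype.card {s : X // ∀ i ∈ S, s ≠ Sum.inl i} := by
      have h1 : Fintype.card {s : X // ∀ i ∈ S, s ≠ Sum.inl i} =
          (Finset.univ \ S.map Function.Embedding.inl : Finset X).card := by
        rw [Fintype.card_subtype]
        congr 1
        ext s
        simp only [Finset.mem_filter, Finset.mem_univ, true_and, Finset.mem_sdiff,
          Finset.mem_map, not_exists, not_and]
        exact ⟨fun h i hi e => h i hi e.symm, fun h i hi e => h i hi e.symm⟩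
      have h2 : S.card < n := by
        have := Finset.card_lt_card (Finset.ssubset_univ_iff.2 hS)
        simpa using this
      rw [h1, Finset.card_sdiff_of_subset (Finset.subset_univ _), Finset.card_map,
        Finset.card_univ, Fintype.card_sum, Fintype.card_fin]
      omega
    obtain ⟨ι'⟩ : Nonempty (Fin (n + 1) ↪ {s : X // ∀ i ∈ S, s ≠ Sum.inl i}) :=
      Function.Embedding.nonempty_of_card_le (by simpa using hcard)
    let ι : Fin (n + 1) ↪ X := ι'.trans (Function.Embedding.subtype _)
    have hι : ∀ i ∈ S, (Sum.inl i : X) ∉ Set.range ι := by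
      rintro i hi ⟨k, hk⟩
      exact (ι' k).2 i hi hk
    refine sum_eq_zero_of_orbit (Equiv.Perm.extendDomainHom ι.toEquivRange)
      (Equiv.Perm.extendDomainHom_injective _) F (fun ρ => ?_) _ ?_
    · refine h.sum_orbit ι z (doubleWord b y y') ?_ ?_ ρ
      · rw [vars_doubleWord]
        refine List.Nodup.append (List.nodup_ofFn.2 Sum.inl_injective)
          (List.nodup_ofFn.2 Sum.inr_injective) ?_
        intro s h1 h2
        obtain ⟨i, rfl⟩ := (List.mem_ofFn' _ _).1 h1
        simp at h2
      · intro s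
        rw [vars_doubleWord]
        rcases s with i | i <;> simp
    · intro κ ρ hρ
      rw [Finset.mem_filter] at hρ ⊢
      refine ⟨Finset.mem_univ _, fun i hi => ?_⟩
      obtain ⟨j, hj⟩ := (hK _ _).1 (hρ.2 hi)
      refine (hK _ _).2 ⟨j, ?_⟩
      rw [Equiv.Perm.mul_apply, hj]
      exact Equiv.Perm.viaFintypeEmbedding_apply_notMem_range κ ι (hι i hi)
  have hIE : ∑ π with K π = ∅, F π = (-1 : ℤ) ^ n • ∑ π with K π = Finset.univ, F π := by
    have h1 : ∑ π with K π = ∅, F π =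
        ∑ π, ∑ S ∈ (Finset.univ : Finset (Finset (Fin n))),
          if S ⊆ K π then (-1 : ℤ) ^ S.card • F π else 0 := by
      rw [Finset.sum_filter]
      refine Finset.sum_congr rfl fun π _ => ?_
      have h2 := Finset.sum_powerset_neg_one_pow_card (x := K π)
      rw [← Finset.sum_filter, ← Finset.sum_smul]
      have h3 : Finset.univ.filter (fun S => S ⊆ K π) = (K π).powerset := by
        ext S; simp
      rw [h3, h2]
      split_ifs <;> simp
    rw [h1, Finset.sum_comm, Finset.sum_eq_single Finset.univ]
    · rw [← Finset.sum_filter, Finset.smul_sum, Finset.card_univ, Fintype.card_fin]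
      simp only [Finset.univ_subset_iff]
    · intro S _ hS
      rw [← Finset.sum_filter, ← Finset.smul_sum, hzero S hS, smul_zero]
    · simp
  have hinl : ∑ π with K π = Finset.univ, F π = b * cap y x * cap y' x' := by
    have h0 := sum_doubleWord b y y' z
    rw [show z ∘ Sum.inl = x from rfl, show z ∘ Sum.inr = x' from rfl] at h0
    rw [← h0]
    symm
    refine Finset.sum_bij (fun p _ => Equiv.Perm.sumCongr p.1 p.2) ?_ ?_ ?_ ?_
    · rintro ⟨σ, τ⟩ -
      simp only [Finset.mem_filter, Finset.mem_univ, true_and]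
      ext i
      simp only [hK, Finset.mem_univ, iff_true]
      exact ⟨σ.symm i, congrArg Sum.inl (σ.apply_symm_apply i)⟩
    · rintro p - p' - hpp
      exact Equiv.Perm.sumCongrHom_injective hpp
    · intro π hπ
      have h1 : Set.MapsTo π.symm (Set.range (Sum.inl : Fin n → X)) (Set.range Sum.inl) := by
        rintro _ ⟨i, rfl⟩
        have : i ∈ K π := by rw [(Finset.mem_filter.1 hπ).2]; simp
        obtain ⟨j, hj⟩ := (hK _ _).1 this
        exact ⟨j, by rw [← hj]; simp⟩
      obtain ⟨p, hp⟩ := Equiv.Perm.mem_sumCongrHom_range_of_perm_mapsTo_inl (σ := π⁻¹) h1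
      refine ⟨p⁻¹, Finset.mem_univ _, ?_⟩
      have : Equiv.Perm.sumCongrHom (Fin n) (Fin n) p⁻¹ = π := by rw [map_inv, hp, inv_inv]
      exact this
    · intro p _
      rfl
  have hinr : ∑ π with K π = ∅, F π = (-1 : ℤ) ^ n • (b * cap y x' * cap y' x) := by
    have h0 := sum_doubleWord b y y' (z ∘ Equiv.sumComm _ _)
    rw [show (z ∘ Equiv.sumComm _ _) ∘ Sum.inl = x' from rfl,
      show (z ∘ Equiv.sumComm _ _) ∘ Sum.inr = x from rfl] at h0
    rw [← h0, ← sign_sumComm, Finset.smul_sum]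
    symm
    refine Finset.sum_bij (fun p _ => (Equiv.sumComm _ _ : Equiv.Perm X) *
      Equiv.Perm.sumCongr p.1 p.2) ?_ ?_ ?_ ?_
    · rintro ⟨σ, τ⟩ -
      simp only [Finset.mem_filter, Finset.mem_univ, true_and]
      refine Finset.eq_empty_of_forall_notMem fun i hi => ?_
      obtain ⟨j, hj⟩ := (hK _ _).1 hi
      exact Sum.inr_ne_inl hj
    · rintro p - p' - hpp
      exact Equiv.Perm.sumCongrHom_injective (mul_left_cancel hpp)
    · intro π hπ
      have h1 : Set.MapsTo ((Equiv.sumComm (Fin n) (Fin n) : Equiv.Perm X)⁻¹ * π)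
          (Set.range (Sum.inl : Fin n → X)) (Set.range Sum.inl) := by
        rintro _ ⟨j, rfl⟩
        rcases hj : π (Sum.inl j) with i | i
        · have : i ∈ K π := (hK _ _).2 ⟨j, hj⟩
          rw [(Finset.mem_filter.1 hπ).2] at this
          simp at this
        · refine ⟨i, ?_⟩
          rw [Equiv.Perm.mul_apply, hj]
          rfl
      obtain ⟨p, hp⟩ := Equiv.Perm.mem_sumCongrHom_range_of_perm_mapsTo_inl h1
      refine ⟨p, Finset.mem_univ _, ?_⟩
      have : (Equiv.sumComm (Fin n) (Fin n) : Equiv.Perm X) *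
        Equiv.Perm.sumCongrHom (Fin n) (Fin n) p = π := by rw [hp, mul_inv_cancel_left]
      exact this
    · intro p _
      simp only [F]
      rw [smul_smul, Equiv.Perm.sign_mul, Units.val_mul]
      rfl
  rw [hinl, hinr] at hIE
  have hunit : ((-1 : ℤ) ^ n) * (-1) ^ n = 1 := by rw [← mul_pow]; simp
  have := congrArg (fun a => (-1 : ℤ) ^ n • a) hIE
  simpa only [smul_smul, hunit, one_smul] using this.symm

end CapelliConsequences

end RelFree

namespace RelFree

/-! ### Algebras satisfying a Capelli identity -/

section CapelliAlgebras

variable {C : Type*} [CommRing C] {A : Type*} [Ring A] [Algebra C A]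

/-- The version of `exists_prod_eq_zero` for a representation of `A` by `R`-linear endomorphisms. -/
lemma exists_prod_eq_zero_of_module {R M : Type*} [CommRing R] [IsNoetherianRing R]
    [AddCommGroup M] [Module C M] [Module R M] {ℓ : ℕ} (r : Fin ℓ → A)
    (hr : Submodule.span C (Set.range (mon r)) = ⊤) (ψ : A →ₐ[C] Module.End C M)
    (hRψ : ∀ (ρ : R) a v, ψ a (ρ • v) = ρ • ψ a v) (hC : ∀ c : C, ∃ ρ : R, ∀ v : M, c • v = ρ • v)
    (m k : ℕ)
    (hstd : ∀ x : Fin m → A, ∑ σ : Equiv.Perm (Fin m),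
      (Equiv.Perm.sign σ : ℤ) • (List.ofFn (x ∘ σ)).prod = 0)
    (hinteg : ∀ u : List (Fin ℓ), u ≠ [] → u.length < m → ∃ c : ℕ → R, ∀ v : M,
      (ψ (mon r u) ^ k) v = ∑ j ∈ Finset.range k, c j • (ψ (mon r u) ^ j) v) :
    ∃ q : ℕ, ∀ l : List A, l.length = q → (∀ z ∈ l, SN z) → ψ l.prod = 0 := by
  let ψ' : A →+* Module.End R M :=
    { toFun := fun a =>
        { toFun := ψ a
          map_add' := map_add _
          map_smul' := fun ρ v => hRψ ρ a v }
      map_one' := by ext v; simp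
      map_mul' := fun a b => by ext v; simp
      map_zero' := by ext v; simp
      map_add' := fun a b => by ext v; simp }
  have hψ' : ∀ a v, ψ' a v = ψ a v := fun a v => rfl
  have hpow : ∀ a j v, (ψ' a ^ j) v = (ψ a ^ j) v := by
    intro a j v
    rw [← map_pow, ← map_pow, hψ']
  obtain ⟨q, hq⟩ := exists_prod_eq_zero (C := C) (R := R) r hr ψ' (fun c a => by
      obtain ⟨ρ, hρ⟩ := hC c
      refine ⟨ρ, ?_⟩
      ext v
      rw [hψ', map_smul]
      exact hρ _) m k hstd (fun u hu hum => by
      obtain ⟨c, h⟩ := hinteg u hu hum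
      refine ⟨c, ?_⟩
      ext v
      rw [hpow, h, LinearMap.sum_apply]
      refine Finset.sum_congr rfl fun j _ => ?_
      rw [LinearMap.smul_apply, hpow])
  refine ⟨q, fun l hl hz => ?_⟩
  ext v
  rw [← hψ', hq l hl hz]
  rfl

/-- The version of `exists_prod_eq_zero` for a representation of `A` on a module `M`, with `R`
generated by finitely many commuting endomorphisms of `M`. -/
lemma exists_prod_eq_zero_of_commuting [IsNoetherianRing C] {M : Type*} [AddCommGroup M]
    [Module C M] {ℓ : ℕ} (r : Fin ℓ → A) (hr : Submodule.span C (Set.range (mon r)) = ⊤)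
    (ψ : A →ₐ[C] Module.End C M) (D : Set (Module.End C M)) (hfin : D.Finite)
    (hDD : ∀ d ∈ D, ∀ d' ∈ D, d * d' = d' * d) (hDψ : ∀ d ∈ D, ∀ a, ψ a * d = d * ψ a)
    (m k : ℕ)
    (hstd : ∀ x : Fin m → A, ∑ σ : Equiv.Perm (Fin m),
      (Equiv.Perm.sign σ : ℤ) • (List.ofFn (x ∘ σ)).prod = 0)
    (hinteg : ∀ u : List (Fin ℓ), u ≠ [] → u.length < m → ∃ c : ℕ → Module.End C M,
      (∀ j, c j ∈ Algebra.adjoin C D) ∧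
        ψ (mon r u) ^ k = ∑ j ∈ Finset.range k, c j * ψ (mon r u) ^ j) :
    ∃ q : ℕ, ∀ l : List A, l.length = q → (∀ z ∈ l, SN z) → ψ l.prod = 0 := by
  let R := Algebra.adjoin C D
  have hcomm := (Algebra.isMulCommutative_adjoin C hDD).is_comm.comm
  let _ : CommRing R := { (inferInstance : Ring R) with mul_comm := hcomm }
  have hft : Algebra.FiniteType C R :=
    R.fg_iff_finiteType.1 (Subalgebra.fg_def.2 ⟨D, hfin, rfl⟩)
  have hnoeth : IsNoetherianRing R := Algebra.FiniteType.isNoetherianRing C R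
  have hRψ : ∀ ρ ∈ R, ∀ a, ψ a * ρ = ρ * ψ a := by
    intro ρ hρ a
    have hle : R ≤ Subalgebra.centralizer C {ψ a} := by
      refine Algebra.adjoin_le fun d hd => ?_
      rw [SetLike.mem_coe, Subalgebra.mem_centralizer_iff]
      rintro _ rfl
      exact hDψ d hd a
    exact (Subalgebra.mem_centralizer_iff C).1 (hle hρ) _ rfl
  refine exists_prod_eq_zero_of_module (R := R) r hr ψ
    (fun ρ a v => LinearMap.congr_fun (hRψ ρ.1 ρ.2 a) v)
    (fun c => ⟨algebraMap C R c, fun v => rfl⟩) m k hstd fun u hu hum => ?_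
  obtain ⟨c, hc, h⟩ := hinteg u hu hum
  refine ⟨fun j => ⟨c j, hc j⟩, fun v => ?_⟩
  rw [h, LinearMap.sum_apply]
  rfl

variable (A) in
/-- Functions of two blocks of `n` variables. -/
abbrev Fun₂ (n : ℕ) : Type _ := (Fin n → A) → (Fin n → A) → A

variable (C A) in
/-- The space spanned by the functions `(x, x') ↦ b · cap(x; y) · cap(x'; y')`. -/
def capSpace (n : ℕ) : Submodule C (Fun₂ A n) :=
  Submodule.span C {T | ∃ (b : A) (y y' : Fin n → A), T = fun x x' => b * cap y x * cap y' x'}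

variable (C) in
/-- Left multiplication of the values by `a`. -/
def leftOp (n : ℕ) (a : A) : Fun₂ A n →ₗ[C] Fun₂ A n where
  toFun T x x' := a * T x x'
  map_add' T T' := by funext x x'; simp [mul_add]
  map_smul' c T := by funext x x'; simp

variable (C) in
/-- The shift operator `δ_k^a`: multiply `k` of the variables of the first block on the right
by `a`, in all possible ways. -/
def shiftOp (n k : ℕ) (a : A) : Fun₂ A n →ₗ[C] Fun₂ A n where
  toFun T x x' := ∑ S ∈ Finset.univ.powersetCard k, T (S.piecewise (fun i => x i * a) x) x'
  map_add' T T' := by funext x x'; simp [Finset.sum_add_distrib]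
  map_smul' c T := by funext x x'; simp [Finset.smul_sum]

lemma leftOp_mem {n : ℕ} (a : A) {T : Fun₂ A n} (hT : T ∈ capSpace C A n) :
    leftOp C n a T ∈ capSpace C A n := by
  refine Submodule.span_induction (p := fun T _ => leftOp C n a T ∈ capSpace C A n)
    ?_ ?_ ?_ ?_ hT
  · rintro _ ⟨b, y, y', rfl⟩
    refine Submodule.subset_span ⟨a * b, y, y', ?_⟩
    funext x x'
    simp [leftOp, mul_assoc]
  · simp
  · intro T T' _ _ h h'
    rw [map_add]
    exact Submodule.add_mem _ h h'
  · intro c T _ h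
    rw [map_smul]
    exact Submodule.smul_mem _ _ h

lemma shiftOp_mem {n : ℕ} (k : ℕ) (a : A) {T : Fun₂ A n} (hT : T ∈ capSpace C A n) :
    shiftOp C n k a T ∈ capSpace C A n := by
  refine Submodule.span_induction (p := fun T _ => shiftOp C n k a T ∈ capSpace C A n)
    ?_ ?_ ?_ ?_ hT
  · rintro _ ⟨b, y, y', rfl⟩
    have : shiftOp C n k a (fun x x' => b * cap y x * cap y' x') =
        ∑ S ∈ Finset.univ.powersetCard k,
          fun x x' => b * cap (S.piecewise (fun i => a * y i) y) x * cap y' x' := by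
      funext x x'
      simp only [shiftOp, LinearMap.coe_mk, AddHom.coe_mk, Finset.sum_apply]
      rw [← Finset.sum_mul, ← Finset.mul_sum, cap_shift, Finset.mul_sum, Finset.sum_mul]
    rw [this]
    exact Submodule.sum_mem _ fun S _ => Submodule.subset_span ⟨b, _, y', rfl⟩
  · simp
  · intro T T' _ _ h h'
    rw [map_add]
    exact Submodule.add_mem _ h h'
  · intro c T _ h
    rw [map_smul]
    exact Submodule.smul_mem _ _ h

lemma capSpace_swap {n : ℕ} (h : Cap A (n + 1)) {T : Fun₂ A n} (hT : T ∈ capSpace C A n)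
    (x x' : Fin n → A) : T x x' = T x' x := by
  refine Submodule.span_induction (p := fun T _ => T x x' = T x' x) ?_ ?_ ?_ ?_ hT
  · rintro _ ⟨b, y, y', rfl⟩
    exact h.swap b y y' x x'
  · rfl
  · intro T T' _ _ h h'
    rw [Pi.add_apply, Pi.add_apply, Pi.add_apply, Pi.add_apply, h, h']
  · intro c T _ h
    rw [Pi.smul_apply, Pi.smul_apply, Pi.smul_apply, Pi.smul_apply, h]

/-- By the symmetry of the two blocks, one of two shifts can be made to act on the second block;
hence shifts commute. -/
lemma shiftOp_comm {n : ℕ} (h : Cap A (n + 1)) (k l : ℕ) (a c : A) {T : Fun₂ A n}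
    (hT : T ∈ capSpace C A n) :
    shiftOp C n k a (shiftOp C n l c T) = shiftOp C n l c (shiftOp C n k a T) := by
  funext x x'
  rw [capSpace_swap h (shiftOp_mem l c (shiftOp_mem k a hT)) x x']
  simp only [shiftOp, LinearMap.coe_mk, AddHom.coe_mk]
  have h1 : ∀ (k l : ℕ) (a c : A) (x x' : Fin n → A) (S : Finset (Fin n)),
      ∑ S' ∈ Finset.univ.powersetCard l, T (S'.piecewise (fun i =>
        S.piecewise (fun i => x i * a) x i * c) (S.piecewise (fun i => x i * a) x)) x' =
      ∑ S' ∈ Finset.univ.powersetCard l, T (S'.piecewise (fun i => x' i * c) x')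
        (S.piecewise (fun i => x i * a) x) := by
    intro k l a c x x' S
    exact capSpace_swap h (shiftOp_mem l c hT) _ _
  simp only [h1 k l, h1 l k]
  rw [Finset.sum_comm]
  refine Finset.sum_congr rfl fun S' _ => Finset.sum_congr rfl fun S _ => ?_
  exact capSpace_swap h hT _ _

lemma leftOp_cayley_hamilton {n : ℕ} (h : Cap A (n + 1)) (a : A) {T : Fun₂ A n}
    (hT : T ∈ capSpace C A n) :
    ∑ k ∈ Finset.range (n + 1), (-1 : ℤ) ^ k • shiftOp C n k a (leftOp C n (a ^ (n - k)) T) = 0 := by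
  refine Submodule.span_induction (p := fun T _ => ∑ k ∈ Finset.range (n + 1),
    (-1 : ℤ) ^ k • shiftOp C n k a (leftOp C n (a ^ (n - k)) T) = 0) ?_ ?_ ?_ ?_ hT
  · rintro _ ⟨b, y, y', rfl⟩
    funext x x'
    have := congrArg (· * cap y' x') (h.cayley_hamilton a b y x)
    simp only [zero_mul, Finset.sum_mul] at this
    rw [Finset.sum_apply, Finset.sum_apply]
    refine Eq.trans (Finset.sum_congr rfl fun k _ => ?_) this
    rw [smul_mul_assoc, Pi.smul_apply, Pi.smul_apply]
    congr 1
    simp only [shiftOp, leftOp, LinearMap.coe_mk, AddHom.coe_mk]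
    rw [Finset.mul_sum, Finset.sum_mul]
    simp only [mul_assoc]
  · simp
  · intro T T' _ _ h h'
    simp only [map_add, smul_add, Finset.sum_add_distrib, h, h', add_zero]
  · intro c T _ h
    simp only [map_smul, smul_comm _ c, ← Finset.smul_sum, h, smul_zero]

/-- Products of many strongly nilpotent elements kill all products of two Capelli polynomials. -/
lemma exists_prod_mul_cap_eq_zero [IsNoetherianRing C] {ℓ : ℕ} (r : Fin ℓ → A)
    (hr : Submodule.span C (Set.range (mon r)) = ⊤) {n : ℕ} (h : Cap A (n + 1)) :
    ∃ q : ℕ, ∀ l : List A, l.length = q → (∀ z ∈ l, SN z) →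
      ∀ (b : A) (y y' x x' : Fin n → A), l.prod * (b * cap y x * cap y' x') = 0 := by
  let V := capSpace C A n
  let ψ : A →ₐ[C] Module.End C V := AlgHom.ofLinearMap
    { toFun := fun a => (leftOp C n a).restrict fun T hT => leftOp_mem a hT
      map_add' := fun a b => by ext T x x'; simp [leftOp, add_mul]
      map_smul' := fun c a => by ext T x x'; simp [leftOp] }
    (by ext T x x'; simp [leftOp]) (fun a b => by ext T x x'; simp [leftOp, mul_assoc])
  let δ : ℕ → A → Module.End C V := fun k a =>
    (shiftOp C n k a).restrict fun T hT => shiftOp_mem k a hT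
  have hψ : ∀ a (T : V), ((ψ a T : V) : Fun₂ A n) = leftOp C n a T := fun a T => rfl
  have hδ : ∀ k a (T : V), ((δ k a T : V) : Fun₂ A n) = shiftOp C n k a T := fun k a T => rfl
  let D : Set (Module.End C V) := (fun p : ℕ × List (Fin ℓ) => δ p.1 (mon r p.2)) ''
    (Set.Iio (n + 1) ×ˢ {w | w.length < n + 1})
  have hD : ∀ k < n + 1, ∀ w : List (Fin ℓ), w.length < n + 1 → δ k (mon r w) ∈ D :=
    fun k hk w hw => ⟨(k, w), ⟨hk, hw⟩, rfl⟩
  suffices key : ∃ q : ℕ, ∀ l : List A, l.length = q → (∀ z ∈ l, SN z) → ψ l.prod = 0 by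
    obtain ⟨q, hq⟩ := key
    refine ⟨q, fun l hl hz b y y' x x' => ?_⟩
    let T : V := ⟨fun x x' => b * cap y x * cap y' x', Submodule.subset_span ⟨b, y, y', rfl⟩⟩
    have h1 := congrArg (fun T : V => (T : Fun₂ A n) x x') (LinearMap.congr_fun (hq l hl hz) T)
    exact h1
  refine exists_prod_eq_zero_of_commuting r hr ψ D
    (((Set.finite_Iio _).prod (List.finite_length_lt _ _)).image _) ?_ ?_ (n + 1) n ?_ ?_
  · rintro _ ⟨⟨k, w⟩, -, rfl⟩ _ ⟨⟨k', w'⟩, -, rfl⟩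
    ext T : 2
    exact shiftOp_comm h k k' _ _ T.2
  · rintro _ ⟨⟨k, w⟩, -, rfl⟩ a
    ext T x x'
    simp only [Module.End.mul_apply, hψ, hδ]
    simp only [shiftOp, leftOp, LinearMap.coe_mk, AddHom.coe_mk, Finset.mul_sum]
  · intro x
    have := h x fun _ => 1
    simpa [cap, Function.comp_def] using this
  · intro u _ hu
    set a := mon r u with ha
    refine ⟨fun j => if j < n then (-(-1 : ℤ) ^ (n - j)) • δ (n - j) a else 0, fun j => ?_, ?_⟩
    · dsimp only
      split_ifs with hj
      · exact Subalgebra.zsmul_mem _ (Algebra.subset_adjoin (hD _ (by omega) u hu)) _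
      · exact zero_mem _
    · ext T : 2
      have h1 := leftOp_cayley_hamilton h a T.2
      rw [Finset.sum_range_succ'] at h1
      have h0 : shiftOp C n 0 a (leftOp C n (a ^ (n - 0)) T) = leftOp C n (a ^ n) T := by
        funext x x'
        simp [shiftOp]
      rw [h0, pow_zero, one_smul, ← Finset.sum_range_reflect] at h1
      rw [← map_pow, hψ, eq_neg_of_add_eq_zero_right h1, LinearMap.sum_apply,
        AddSubmonoidClass.coe_finsetSum, ← Finset.sum_neg_distrib]
      refine Finset.sum_congr rfl fun j hj => ?_
      have hj' : j < n := Finset.mem_range.1 hj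
      beta_reduce
      rw [if_pos hj', Module.End.mul_apply, LinearMap.smul_apply, ← map_pow]
      have e1 : n - 1 - j + 1 = n - j := by omega
      have e2 : n - (n - j) = j := by omega
      rw [e1, e2, neg_smul]
      rfl

end CapelliAlgebras

end RelFree

namespace RelFree

section CapelliInduction

universe u

lemma span_mon_map {C A B : Type*} [CommRing C] [Ring A] [Algebra C A] [Ring B] [Algebra C B]
    {ℓ : ℕ} {r : Fin ℓ → A} (hr : Submodule.span C (Set.range (mon r)) = ⊤) (f : A →ₐ[C] B)
    (hf : Function.Surjective f) : Submodule.span C (Set.range (mon (f ∘ r))) = ⊤ := by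
  have h1 : Set.range (mon (f ∘ r)) = f.toLinearMap '' Set.range (mon r) := by
    rw [← Set.range_comp]
    congr 1
    funext w
    simp [mon, map_list_prod]
  rw [h1, ← Submodule.map_span, hr, Submodule.map_top, LinearMap.range_eq_top]
  exact hf

lemma map_cap {A B : Type*} [Ring A] [Ring B] (f : A →+* B) {n : ℕ} (y x : Fin n → A) :
    f (cap y x) = cap (f ∘ y) (f ∘ x) := by
  rw [cap, cap, map_sum]
  refine Finset.sum_congr rfl fun σ _ => ?_
  rw [map_zsmul, map_list_prod, List.map_ofFn]
  congr 3
  funext j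
  simp

variable {C : Type*} [CommRing C] [IsNoetherianRing C]

/-- In an affine algebra over a Noetherian ring that satisfies a Capelli identity, the strongly
nilpotent elements are uniformly nilpotent. The induction on `n` divides out the ideal generated by
the values of the Capelli polynomial with one variable less. -/
lemma NB.of_cap {ℓ : ℕ} (n : ℕ) : ∀ {A : Type u} [Ring A] [Algebra C A] (r : Fin ℓ → A),
    Submodule.span C (Set.range (mon r)) = ⊤ → Cap A n → NB A := by
  induction n with
  | zero =>
    intro A _ _ r _ h
    have h0 := h Fin.elim0 Fin.elim0
    simp only [cap, List.ofFn_zero, List.prod_nil] at h0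
    have : (1 : A) = 0 := by simpa using h0
    have := subsingleton_of_zero_eq_one this.symm
    exact NB.of_subsingleton
  | succ n ih =>
    intro A _ _ r hr h
    rcases n with _ | n
    · have h0 := h 1 1
      have : (1 : A) = 0 := by simpa [cap] using h0
      have := subsingleton_of_zero_eq_one this.symm
      exact NB.of_subsingleton
    let E : Ideal A := Ideal.span (Set.range fun p : (Fin (n + 1) → A) × (Fin (n + 1) → A) =>
      cap p.1 p.2)
    have hE : ∀ y x : Fin (n + 1) → A, cap y x ∈ E := fun y x => Ideal.subset_span ⟨(y, x), rfl⟩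
    have hE2 : E.IsTwoSided := by
      refine ⟨fun {a} b ha => ?_⟩
      refine Submodule.span_induction (p := fun a _ => a * b ∈ E) ?_ ?_ ?_ ?_ ha
      · rintro _ ⟨⟨y, x⟩, rfl⟩
        dsimp only
        rw [cap_mul_right]
        exact hE _ _
      · simp
      · intro u v _ _ hu hv
        rw [add_mul]
        exact add_mem hu hv
      · intro c u _ hu
        rw [smul_eq_mul, mul_assoc]
        exact E.mul_mem_left c hu
    have hsurj : Function.Surjective (Ideal.Quotient.mkₐ C E) := Ideal.Quotient.mk_surjective
    have hcap : Cap (A ⧸ E) (n + 1) := by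
      intro x y
      obtain ⟨x, rfl⟩ := hsurj.comp_left x
      obtain ⟨y, rfl⟩ := hsurj.comp_left y
      exact (map_cap (Ideal.Quotient.mk E) y x).symm.trans
        (Ideal.Quotient.eq_zero_iff_mem.2 (hE y x))
    have hB : NB (A ⧸ E) := ih _ (span_mon_map hr _ hsurj) hcap
    obtain ⟨k, hk⟩ := hB.lift (f := Ideal.Quotient.mk E) Ideal.Quotient.mk_surjective
    refine NB.of_mul (P := fun a => ∀ (b : A) (y y' x x' : Fin (n + 1) → A),
        a * (b * cap y x * cap y' x') = 0) (Q := fun a => ∃ u ∈ E, ∃ v ∈ E, a = u * v) ?_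
      (exists_prod_mul_cap_eq_zero r hr h) ⟨k + k, fun l hl hz => ?_⟩
    · rintro a _ ha ⟨u, hu, v, hv, rfl⟩
      have h1 : ∀ u ∈ E, ∀ (b : A) (y' x' : Fin (n + 1) → A),
          a * (u * (b * cap y' x')) = 0 := by
        intro u hu b y' x'
        refine Submodule.span_induction
          (p := fun u _ => ∀ b, a * (b * u * cap y' x') = 0) ?_ ?_ ?_ ?_
            (E.mul_mem_left 1 (hE2.mul_mem_of_left b hu)) 1 |> fun h => by simpa [mul_assoc] using h
        · rintro _ ⟨⟨y, x⟩, rfl⟩ b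
          exact ha b y y' x x'
        · simp
        · intro u v _ _ hu hv b
          simp [mul_add, add_mul, hu, hv]
        · intro c u _ hu b
          rw [smul_eq_mul, ← mul_assoc b]
          exact hu _
      refine Submodule.span_induction
        (p := fun v _ => ∀ b, a * (u * (b * v)) = 0) ?_ ?_ ?_ ?_ hv 1 |> fun h => by simpa using h
      · rintro _ ⟨⟨y, x⟩, rfl⟩ b
        exact h1 u hu b y x
      · simp
      · intro u v _ _ hu hv b
        simp [mul_add, hu, hv]
      · intro c u _ hu b
        rw [smul_eq_mul, ← mul_assoc b]
        exact hu _
    · refine ⟨(l.take k).prod, ?_, (l.drop k).prod, ?_, ?_⟩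
      · exact Ideal.Quotient.eq_zero_iff_mem.1
          (hk _ (by simp [hl]) fun z h => hz z (List.mem_of_mem_take h))
      · exact Ideal.Quotient.eq_zero_iff_mem.1
          (hk _ (by simp [hl]) fun z h => hz z (List.mem_of_mem_drop h))
      · rw [← List.prod_append, List.take_append_drop]

end CapelliInduction

end RelFree

namespace RelFree

/-! ### Multilinearization -/

section Multilinear

variable {C : Type*} [CommRing C] {A : Type*} [Ring A] [Algebra C A]

/-- Inclusion–exclusion: substituting `∑_{j ∉ S, w₀ j = i} z j` for the `i`-th variable and taking
the alternating sum over `S` keeps exactly the terms that contain all the `z j`. -/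
lemma sum_neg_one_pow_mon {ℓ D k : ℕ} (w₀ : Fin D → Fin ℓ) (z : Fin D → A) (v : Fin k → Fin ℓ) :
    ∑ S : Finset (Fin D), (-1 : ℤ) ^ S.card • mon (fun i => ∑ j ∈ Sᶜ with w₀ j = i, z j)
      (List.ofFn v) = ∑ h : Fin k → Fin D with (∀ t, w₀ (h t) = v t) ∧ Function.Surjective h,
        (List.ofFn (z ∘ h)).prod := by
  have h1 : ∀ S : Finset (Fin D), mon (fun i => ∑ j ∈ Sᶜ with w₀ j = i, z j) (List.ofFn v) =
      ∑ h : Fin k → Fin D, if (∀ t, w₀ (h t) = v t) ∧ ∀ t, h t ∈ Sᶜ then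
        (List.ofFn (z ∘ h)).prod else 0 := by
    intro S
    have h2 := (MultilinearMap.mkPiAlgebraFin ℤ k A).map_sum_finset (fun _ j => z j)
      (fun t => {j ∈ Sᶜ | w₀ j = v t})
    simp only [MultilinearMap.mkPiAlgebraFin_apply] at h2
    rw [mon, List.map_ofFn]
    refine h2.trans ?_
    rw [← Finset.sum_filter]
    refine Finset.sum_congr ?_ fun _ _ => rfl
    ext h
    simp only [Fintype.mem_piFinset, Finset.mem_filter, Finset.mem_univ, true_and]
    rw [forall_and, and_comm]
  simp only [h1, Finset.smul_sum]
  rw [Finset.sum_comm, Finset.sum_filter]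
  refine Finset.sum_congr rfl fun h _ => ?_
  by_cases hc : ∀ t, w₀ (h t) = v t
  swap
  · simp [hc]
  have h3 : ∀ S : Finset (Fin D), (∀ t, h t ∈ Sᶜ) ↔ S ∈ ((Finset.univ.image h)ᶜ).powerset := by
    intro S
    rw [Finset.mem_powerset, Finset.subset_compl_comm]
    simp [Finset.subset_iff]
  have h4 : (Finset.univ.image h)ᶜ = ∅ ↔ Function.Surjective h := by
    rw [Finset.compl_eq_empty_iff, Finset.eq_univ_iff_forall]
    simp [Function.Surjective]
  simp only [hc, implies_true, true_and, h3, smul_ite, smul_zero]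
  rw [← Finset.sum_filter, Finset.filter_mem_eq_inter, Finset.univ_inter, ← Finset.sum_smul,
    Finset.sum_powerset_neg_one_pow_card]
  simp only [h4]
  split_ifs <;> simp

/-- A polynomial identity with a coefficient outside the ideal `𝔞` annihilating `A` yields a
multilinear identity whose leading coefficient is outside `𝔞`. -/
lemma exists_multilinear {ℓ : ℕ} (𝔞 : Ideal C) (h𝔞 : ∀ c ∈ 𝔞, ∀ a : A, c • a = 0)
    (f : List (Fin ℓ) →₀ C) (hf : ∀ a : Fin ℓ → A, (f.sum fun w c => c • mon a w) = 0)
    (hne : ∃ w, f w ∉ 𝔞) :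
    ∃ (D : ℕ) (g : Equiv.Perm (Fin D) → C), g 1 ∉ 𝔞 ∧
      ∀ z : Fin D → A, ∑ σ, g σ • (List.ofFn (z ∘ σ)).prod = 0 := by
  classical
  -- a longest word `w` with coefficient outside `𝔞` is linearized
  obtain ⟨w, hw, hmax⟩ : ∃ w ∈ {w ∈ f.support | f w ∉ 𝔞}, ∀ v ∈ {w ∈ f.support | f w ∉ 𝔞},
      v.length ≤ w.length := by
    refine Finset.exists_max_image _ _ ?_
    obtain ⟨w, hw⟩ := hne
    refine ⟨w, Finset.mem_filter.2 ⟨?_, hw⟩⟩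
    rw [Finsupp.mem_support_iff]
    intro h0
    exact hw (h0 ▸ zero_mem _)
  have hw' : f w ∉ 𝔞 := (Finset.mem_filter.1 hw).2
  have hmax' : ∀ v, w.length < v.length → f v ∈ 𝔞 := by
    intro v hv
    by_contra hv'
    have h0 : f v ≠ 0 := fun h0 => hv' (h0 ▸ zero_mem _)
    have := hmax v (Finset.mem_filter.2 ⟨Finsupp.mem_support_iff.2 h0, hv'⟩)
    omega
  set D := w.length with hD
  obtain ⟨w₀, hw₀⟩ : ∃ w₀ : Fin D → Fin ℓ, w = List.ofFn w₀ :=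
    ⟨w.get, (List.ofFn_get w).symm⟩
  refine ⟨D, fun σ => f (List.ofFn (w₀ ∘ σ)), by simpa [← hw₀] using hw', fun z => ?_⟩
  have key : ∀ v : List (Fin ℓ), f v • ∑ S : Finset (Fin D),
      (-1 : ℤ) ^ S.card • mon (fun i => ∑ j ∈ Sᶜ with w₀ j = i, z j) v =
      ∑ σ : Equiv.Perm (Fin D), if v = List.ofFn (w₀ ∘ σ) then
        f v • (List.ofFn (z ∘ σ)).prod else 0 := by
    intro v
    obtain ⟨k, v, rfl⟩ : ∃ (k : ℕ) (v' : Fin k → Fin ℓ), v = List.ofFn v' :=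
      ⟨_, v.get, (List.ofFn_get v).symm⟩
    rw [sum_neg_one_pow_mon]
    clear_value D
    rcases lt_trichotomy k D with hk | rfl | hk
    · -- shorter words do not contain all the `z j`
      rw [Finset.filter_false_of_mem, Finset.sum_empty, smul_zero, Finset.sum_eq_zero]
      · intro σ _
        rw [if_neg]
        intro h
        have := congrArg List.length h
        simp at this
        omega
      · rintro h - ⟨-, h2⟩
        have := Fintype.card_le_of_surjective h h2
        simp at this
        omega
    · rw [Finset.smul_sum, ← Finset.sum_filter]
      refine (Finset.sum_of_injOn (fun σ : Equiv.Perm (Fin k) => (σ : Fin k → Fin k))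
        (fun σ _ τ _ h => DFunLike.coe_injective h) ?_ ?_ fun σ _ => rfl).symm
      · intro σ hσ
        have h2 := List.ofFn_injective (Finset.mem_filter.1 hσ).2
        exact Finset.mem_filter.2 ⟨Finset.mem_univ _, fun t => (congrFun h2 t).symm, σ.surjective⟩
      · intro h hh hh'
        obtain ⟨-, h2, h3⟩ := Finset.mem_filter.1 hh
        refine absurd ⟨Equiv.ofBijective h (Finite.surjective_iff_bijective.1 h3), ?_, rfl⟩ hh'
        refine Finset.mem_filter.2 ⟨Finset.mem_univ _, congrArg _ ?_⟩
        funext t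
        exact (h2 t).symm
    · -- longer words have coefficients in `𝔞`
      rw [h𝔞 _ (hmax' _ (by simpa using hk)), Finset.sum_eq_zero]
      intro σ _
      rw [if_neg]
      intro h
      have := congrArg List.length h
      simp at this
      omega
  have h1 : ∑ S : Finset (Fin D), (-1 : ℤ) ^ S.card •
      (f.sum fun v c => c • mon (fun i => ∑ j ∈ Sᶜ with w₀ j = i, z j) v) = 0 := by
    simp [hf]
  simp only [Finsupp.sum, Finset.smul_sum] at h1
  rw [Finset.sum_comm] at h1
  simp only [smul_comm _ (f _), ← Finset.smul_sum, key] at h1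
  rw [Finset.sum_comm] at h1
  rw [← h1]
  refine Finset.sum_congr rfl fun σ _ => ?_
  rw [Finset.sum_ite_eq']
  split_ifs with h
  · rfl
  · beta_reduce
    rw [Finsupp.notMem_support_iff.1 h, zero_smul]

end Multilinear

end RelFree

namespace RelFree

/-! ### Codimension growth -/

section Coloring

/-- If `π` has no decreasing subsequence of length `m`, then the positions can be coloured by `m`
colours so that `π` increases on each colour class: colour a position by the length of the longest
decreasing subsequence ending there. -/
lemma exists_coloring {n m : ℕ} (π : Fin n → Fin n) (hinj : Function.Injective π)
    (h : ¬∃ p : Fin m → Fin n, StrictMono p ∧ StrictAnti (π ∘ p)) :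
    ∃ c : Fin n → Fin m, ∀ j k, j < k → c j = c k → π j < π k := by
  classical
  let T : Fin n → Finset (Finset (Fin n)) := fun j =>
    {t | j ∈ t ∧ (∀ i ∈ t, i ≤ j) ∧ StrictAntiOn π t}
  have hT : ∀ j, (T j).Nonempty := fun j => ⟨{j}, by simp [T]⟩
  have hlt : ∀ j, (T j).sup Finset.card < m := by
    intro j
    obtain ⟨t, ht, hc⟩ := Finset.exists_mem_eq_sup _ (hT j) Finset.card
    rw [hc]
    by_contra! hm
    obtain ⟨t', ht', hcard⟩ := Finset.exists_subset_card_eq hm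
    refine h ⟨t'.orderEmbOfFin hcard, (t'.orderEmbOfFin hcard).strictMono, fun a b hab => ?_⟩
    refine (Finset.mem_filter.1 ht).2.2.2 (ht' (Finset.orderEmbOfFin_mem _ _ _))
      (ht' (Finset.orderEmbOfFin_mem _ _ _)) ((t'.orderEmbOfFin hcard).strictMono hab)
  refine ⟨fun j => ⟨_, hlt j⟩, fun j k hjk hc => ?_⟩
  by_contra! hπ
  have hπ' : π k < π j := lt_of_le_of_ne hπ fun e => hjk.ne (hinj e).symm
  have hc' : (T j).sup Finset.card = (T k).sup Finset.card := congrArg Fin.val hc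
  obtain ⟨t, ht, hcard⟩ := Finset.exists_mem_eq_sup _ (hT j) Finset.card
  obtain ⟨-, hjt, hle, hanti⟩ := Finset.mem_filter.1 ht
  have hk : k ∉ t := fun hk => absurd (hle k hk) (not_le.2 hjk)
  have hmem : insert k t ∈ T k := by
    refine Finset.mem_filter.2 ⟨Finset.mem_univ _, Finset.mem_insert_self _ _, ?_, ?_⟩
    · intro i hi
      rcases Finset.mem_insert.1 hi with rfl | hi
      · exact le_rfl
      · exact (hle i hi).trans hjk.le
    · intro a ha b hb hab
      rw [Finset.coe_insert] at ha hb
      rcases ha with rfl | ha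
      · rcases hb with rfl | hb
        · exact absurd hab (lt_irrefl _)
        · exact absurd ((hle b hb).trans_lt hjk) (not_lt.2 hab.le)
      · rcases hb with rfl | hb
        · refine hπ'.trans_le ?_
          rcases (hle a ha).eq_or_lt with rfl | haj
          · exact le_rfl
          · exact (hanti ha hjt haj).le
        · exact hanti ha hb hab
  have := Finset.le_sup (f := Finset.card) hmem
  rw [Finset.card_insert_of_notMem hk] at this
  omega

/-- A permutation is determined by the colours of the positions and of the values. -/
lemma perm_eq_of_coloring {n m : ℕ} {π π' : Equiv.Perm (Fin n)} {c c' : Fin n → Fin m}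
    (h : ∀ j k, j < k → c j = c k → π j < π k) (h' : ∀ j k, j < k → c' j = c' k → π' j < π' k)
    (h1 : c = c') (h2 : c ∘ π.symm = c' ∘ π'.symm) : π = π' := by
  subst h1
  ext j
  congr 1
  induction j using WellFoundedLT.induction with
  | _ j ih =>
  have key : ∀ {π π' : Equiv.Perm (Fin n)}, (∀ j k, j < k → c j = c k → π' j < π' k) →
      c ∘ π.symm = c ∘ π'.symm → (∀ k < j, π k = π' k) → ¬ π j < π' j := by
    intro π π' h' h2 ih hlt
    have hc : c (π'.symm (π j)) = c j := by
      simpa using (congrFun h2 (π j)).symm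
    rcases lt_trichotomy (π'.symm (π j)) j with hk | hk | hk
    · have := ih _ hk
      rw [Equiv.apply_symm_apply, EmbeddingLike.apply_eq_iff_eq] at this
      exact hk.ne this
    · rw [Equiv.symm_apply_eq] at hk
      exact hlt.ne hk
    · have := h' _ _ hk hc.symm
      rw [Equiv.apply_symm_apply] at this
      exact lt_asymm hlt this
  exact le_antisymm (not_lt.1 (key h h2.symm fun k hk => (ih k hk).symm)) (not_lt.1 (key h' h2 ih))

lemma exists_perm_of_perm {n : ℕ} {l : List (Fin n)} (hl : l.Perm (List.finRange n)) :
    ∃ π : Equiv.Perm (Fin n), l = List.ofFn π := by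
  have hlen : l.length = n := by simpa using hl.length_eq
  obtain ⟨g, rfl⟩ : ∃ g : Fin n → Fin n, l = List.ofFn g :=
    ⟨fun j => l.get (j.cast hlen.symm), List.ext_getElem (by simp [hlen]) (by simp)⟩
  have hinj : Function.Injective g :=
    List.nodup_ofFn.1 (hl.nodup_iff.2 (List.nodup_finRange _))
  exact ⟨Equiv.ofBijective g (Finite.injective_iff_bijective.1 hinj), rfl⟩

lemma ofFn_perm_finRange {n : ℕ} (π : Equiv.Perm (Fin n)) :
    (List.ofFn π).Perm (List.finRange n) := by
  rw [List.perm_ext_iff_of_nodup (List.nodup_ofFn.2 π.injective) (List.nodup_finRange _)]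
  intro a
  simp only [List.mem_ofFn, List.mem_finRange, iff_true]
  exact π.surjective a

open Classical in
/-- The permutations of `n` letters whose word is not `m`-decomposable. -/
noncomputable def good (m n : ℕ) : Finset (Equiv.Perm (Fin n)) :=
  {π | ¬ Decomposable m (List.ofFn π)}

lemma card_good_le (m n : ℕ) : (good m n).card ≤ m ^ (2 * n) := by
  classical
  have key : ∀ π : good m n, ∃ c : Fin n → Fin m, ∀ j k, j < k → c j = c k → π.1 j < π.1 k := by
    rintro ⟨π, hπ⟩
    refine exists_coloring π π.injective ?_
    rintro ⟨p, hp, hp'⟩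
    refine (Finset.mem_filter.1 hπ).2
      (decomposable_of_windows (h := 1) (fun i => (p i : ℕ)) ?_ ?_ ?_)
    · intro i j hij
      exact hp hij
    · intro i
      rw [List.length_ofFn]
      exact (p i).2
    · intro i j hij
      have h1 : ∀ a : Fin n, ((List.ofFn π).drop a).take 1 = [π a] := by
        intro a
        rw [List.drop_eq_getElem_cons (by simp)]
        simp
      rw [h1, h1]
      exact ⟨[], _, _, [], [], hp' hij, rfl, rfl⟩
  choose c hc using key
  have hinj : Function.Injective fun π : good m n => (c π, c π ∘ (π : Equiv.Perm (Fin n)).symm) := by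
    intro π π' h
    exact Subtype.ext (perm_eq_of_coloring (hc π) (hc π') (Prod.ext_iff.1 h).1 (Prod.ext_iff.1 h).2)
  have := Fintype.card_le_of_injective _ hinj
  rw [Fintype.card_coe] at this
  refine this.trans ?_
  simp [two_mul, pow_add]

lemma exists_card_good_lt (m : ℕ) : ∃ d : ℕ, (good m (d + d)).card ^ 2 < d.factorial := by
  have h := FloorSemiring.tendsto_pow_div_factorial_atTop ((m : ℝ) ^ 8)
  obtain ⟨d, hd⟩ := (h.eventually (gt_mem_nhds one_pos)).exists
  refine ⟨d, ?_⟩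
  rw [div_lt_one (by positivity)] at hd
  have hd' : (m ^ 8) ^ d < d.factorial := by exact_mod_cast hd
  refine lt_of_le_of_lt ?_ hd'
  refine (Nat.pow_le_pow_left (card_good_le m (d + d)) 2).trans (le_of_eq ?_)
  rw [← pow_mul, ← pow_mul]
  congr 1
  ring

end Coloring

end RelFree

namespace RelFree

section Strong

variable {C : Type*} [CommRing C] {A : Type*} [Ring A] [Algebra C A]

/-- The elements of a module that are carried into `W` by some scalar outside the prime `𝔞`. -/
def saturation {M : Type*} [AddCommGroup M] [Module C M] (𝔞 : Ideal C) [h𝔞 : 𝔞.IsPrime]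
    (W : Submodule C M) : Submodule C M where
  carrier := {F | ∃ s ∉ 𝔞, s • F ∈ W}
  zero_mem' := ⟨1, fun h => h𝔞.ne_top ((Ideal.eq_top_iff_one _).2 h), by simp⟩
  add_mem' := by
    rintro F F' ⟨s, hs, h⟩ ⟨s', hs', h'⟩
    refine ⟨s * s', fun hm => (h𝔞.mem_or_mem hm).elim hs hs', ?_⟩
    rw [smul_add]
    refine add_mem ?_ ?_
    · rw [mul_comm, mul_smul]
      exact W.smul_mem _ h
    · rw [mul_smul]
      exact W.smul_mem _ h'
  smul_mem' := by
    rintro c F ⟨s, hs, h⟩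
    refine ⟨s, hs, ?_⟩
    rw [smul_comm]
    exact W.smul_mem _ h

/-- Modulo a multilinear identity of degree `m`, all multilinear monomials are combinations of
the good ones, up to a denominator outside `𝔞`. -/
lemma exists_reduction (𝔞 : Ideal C) [h𝔞 : 𝔞.IsPrime] {m : ℕ} {g : Equiv.Perm (Fin m) → C}
    (hg1 : g 1 ∉ 𝔞) (hg : ∀ z : Fin m → A, ∑ σ, g σ • (List.ofFn (z ∘ σ)).prod = 0) (n : ℕ) :
    ∃ s ∉ 𝔞, ∃ b : Equiv.Perm (Fin n) → Equiv.Perm (Fin n) → C,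
      ∀ (π : Equiv.Perm (Fin n)) (x : Fin n → A),
      s • mon x (List.ofFn π) = ∑ γ ∈ good m n, b π γ • mon x (List.ofFn γ) := by
  classical
  let F : List (Fin n) → (Fin n → A) → A := fun w x => mon x w
  let W := Submodule.span C ((fun γ : Equiv.Perm (Fin n) => F (List.ofFn γ)) '' (good m n))
  have key : ∀ w : List (Fin n), w.Perm (List.finRange n) → F w ∈ saturation 𝔞 W := by
    intro w
    induction w using (List.Shortlex.wf (r := ((· < ·) : Fin n → Fin n → Prop))
      wellFounded_lt).induction with
    | _ w ih =>
    intro hw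
    by_cases hd : Decomposable m w
    · -- the identity, applied to the blocks, expresses `w` by smaller words
      obtain ⟨u, B, hu, hB⟩ := hd
      let v : Equiv.Perm (Fin m) → List (Fin n) := fun σ => u ++ (List.ofFn (B ∘ σ)).flatten
      have hperm : ∀ σ, (v σ).Perm w := by
        intro σ
        rw [hu]
        refine List.Perm.append_left _ (List.Perm.flatten ?_)
        exact σ.ofFn_comp_perm B
      have hsum : ∑ σ, g σ • F (v σ) = 0 := by
        funext x
        have h1 := congrArg (mon x u * ·) (hg (fun j => mon x (B j)))
        simp only [mul_zero, Finset.mul_sum, mul_smul_comm] at h1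
        simp only [Finset.sum_apply, Pi.smul_apply, Pi.zero_apply]
        rw [← h1]
        refine Finset.sum_congr rfl fun σ _ => ?_
        simp only [F, v, mon_append, mon_flatten, List.map_ofFn]
        rfl
      have hv1 : v 1 = w := by simp [v, hu]
      have hmem : g 1 • F w ∈ saturation 𝔞 W := by
        rw [← Finset.add_sum_erase _ _ (Finset.mem_univ 1), hv1] at hsum
        rw [eq_neg_of_add_eq_zero_left hsum]
        refine neg_mem (sum_mem fun σ hσ => Submodule.smul_mem _ _ ?_)
        exact ih _ ((hB σ (Finset.ne_of_mem_erase hσ)).shortlex (hperm σ).length_eq)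
          ((hperm σ).trans hw)
      obtain ⟨s, hs, h⟩ := hmem
      refine ⟨s * g 1, fun hm => (h𝔞.mem_or_mem hm).elim hs hg1, ?_⟩
      rwa [mul_smul]
    · obtain ⟨π, rfl⟩ := exists_perm_of_perm hw
      refine ⟨1, fun h => h𝔞.ne_top ((Ideal.eq_top_iff_one _).2 h), ?_⟩
      rw [one_smul]
      exact Submodule.subset_span ⟨π, by simpa [good] using hd, rfl⟩
  choose s hs hW using fun π : Equiv.Perm (Fin n) => key _ (ofFn_perm_finRange π)
  have hW' : ∀ π : Equiv.Perm (Fin n), (∏ τ, s τ) • F (List.ofFn π) ∈ W := by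
    intro π
    rw [← Finset.prod_erase_mul _ _ (Finset.mem_univ π), mul_smul]
    exact W.smul_mem _ (hW π)
  have hb : ∀ π : Equiv.Perm (Fin n), ∃ b : Equiv.Perm (Fin n) → C,
      (∏ τ, s τ) • F (List.ofFn π) = ∑ γ ∈ good m n, b γ • F (List.ofFn γ) := by
    intro π
    obtain ⟨b, hb⟩ := (Submodule.mem_span_image_finset_iff_exists_fun' C).1 (hW' π)
    exact ⟨b, hb.symm⟩
  choose b hb using hb
  refine ⟨∏ τ, s τ, fun h => ?_, b, fun π x => ?_⟩
  · obtain ⟨τ, -, hτ⟩ := (h𝔞.prod_mem_iff).1 h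
    exact hs τ hτ
  · have := congrFun (hb π) x
    simpa [F] using this

/-- The family `α` gives identities `∑ α_ρ ∏ⱼ x_{ρ π j} yⱼ` of `A` for all `π`. -/
def StrongId (A : Type*) [Ring A] [Algebra C A] {d : ℕ} (α : Equiv.Perm (Fin d) → C) : Prop :=
  ∀ (π : Equiv.Perm (Fin d)) (x y : Fin d → A),
    ∑ ρ, α ρ • (List.ofFn fun j => x (ρ (π j)) * y j).prod = 0

/-- The permutation of the letters `x₀, …, y₀, …` that permutes the `x`-letters by `ρ`. -/
def extPerm {d : ℕ} (ρ : Equiv.Perm (Fin d)) : Equiv.Perm (Fin (d + d)) :=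
  finSumFinEquiv.symm.trans ((Equiv.sumCongr ρ 1).trans finSumFinEquiv)

/-- An algebra with a polynomial identity satisfies a strong identity: there are more permutations
of the `x`-letters than pairs of good words. -/
lemma exists_strongId (𝔞 : Ideal C) [h𝔞 : 𝔞.IsPrime] (hA : ∀ c ∈ 𝔞, ∀ a : A, c • a = 0) {m : ℕ}
    {g : Equiv.Perm (Fin m) → C} (hg1 : g 1 ∉ 𝔞)
    (hg : ∀ z : Fin m → A, ∑ σ, g σ • (List.ofFn (z ∘ σ)).prod = 0) :
    ∃ (d : ℕ) (α : Equiv.Perm (Fin d) → C), StrongId A α ∧ ∃ ρ, α ρ ∉ 𝔞 := by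
  classical
  obtain ⟨d, hd⟩ := exists_card_good_lt m
  obtain ⟨s, hs, b, hb⟩ := exists_reduction 𝔞 hg1 hg (d + d)
  -- a dependency between these vectors over `C ⧸ 𝔞` gives the coefficients of the identity
  let V : Equiv.Perm (Fin d) → (good m (d + d) × good m (d + d)) → C ⧸ 𝔞 := fun ρ p =>
    Ideal.Quotient.mk 𝔞 (b (extPerm ρ * p.1.1) p.2.1)
  have hdep : ¬ LinearIndependent (C ⧸ 𝔞) V := by
    intro h
    have := h.fintype_card_le_finrank
    rw [Module.finrank_fintype_fun_eq_card, Fintype.card_prod, Fintype.card_coe,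
      Fintype.card_perm, Fintype.card_fin] at this
    rw [pow_two] at hd
    omega
  obtain ⟨β, hβ, ρ₀, hρ₀⟩ := Fintype.not_linearIndependent_iff.1 hdep
  obtain ⟨α, rfl⟩ := (Ideal.Quotient.mk_surjective (I := 𝔞)).comp_left β
  have hα : ∀ γ ∈ good m (d + d), ∀ γ' ∈ good m (d + d), ∑ ρ, α ρ * b (extPerm ρ * γ) γ' ∈ 𝔞 := by
    intro γ hγ γ' hγ'
    have := congrFun hβ (⟨γ, hγ⟩, ⟨γ', hγ'⟩)
    rw [← Ideal.Quotient.eq_zero_iff_mem, map_sum]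
    simpa [V] using this
  have hmon : ∀ (ρ : Equiv.Perm (Fin d)) (π : Equiv.Perm (Fin (d + d))) (x : Fin (d + d) → A),
      mon x (List.ofFn (extPerm ρ * π)) = mon (x ∘ extPerm ρ) (List.ofFn π) := by
    intro ρ π x
    simp only [mon, List.map_ofFn]
    rfl
  have key : ∀ (π : Equiv.Perm (Fin (d + d))) (x : Fin (d + d) → A),
      ∑ ρ, (s * s * α ρ) • mon (x ∘ extPerm ρ) (List.ofFn π) = 0 := by
    intro π x
    -- reduce `π` to good words `γ`, permute the letters, and reduce again
    have h1 : ∀ ρ, (s * s * α ρ) • mon (x ∘ extPerm ρ) (List.ofFn π) =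
        ∑ γ ∈ good m (d + d), b π γ • ∑ γ' ∈ good m (d + d),
          (α ρ * b (extPerm ρ * γ) γ') • mon x (List.ofFn γ') := by
      intro ρ
      rw [show s * s * α ρ = α ρ * s * s by ring, mul_smul, hb, Finset.smul_sum]
      refine Finset.sum_congr rfl fun γ _ => ?_
      rw [← hmon, smul_comm, mul_smul, hb, Finset.smul_sum]
      simp only [mul_smul]
    simp only [h1]
    rw [Finset.sum_comm]
    refine Finset.sum_eq_zero fun γ hγ => ?_
    rw [← Finset.smul_sum, Finset.sum_comm, Finset.sum_eq_zero, smul_zero]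
    intro γ' hγ'
    rw [← Finset.sum_smul]
    exact hA _ (hα γ hγ γ' hγ') _
  refine ⟨d, fun ρ => s * s * α ρ, fun π x y => ?_, ρ₀, fun h => ?_⟩
  · -- the word `x_{π 0} y₀ x_{π 1} y₁ ⋯`
    let l : List (Fin (d + d)) :=
      (List.ofFn fun j => [Fin.castAdd d (π j), Fin.natAdd d j]).flatten
    have hl : l.Perm (List.finRange (d + d)) := by
      rw [List.perm_ext_iff_of_nodup ?_ (List.nodup_finRange _)]
      · intro a
        simp only [List.mem_finRange, iff_true, l, List.mem_flatten, List.mem_ofFn]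
        refine Fin.addCases (fun i => ?_) (fun i => ?_) a
        · exact ⟨_, ⟨π.symm i, rfl⟩, by simp⟩
        · exact ⟨_, ⟨i, rfl⟩, by simp⟩
      · rw [List.nodup_flatten]
        refine ⟨?_, ?_⟩
        · intro t ht
          obtain ⟨j, rfl⟩ := (List.mem_ofFn' _ _).1 ht
          have h3 := (π j).2
          simp only [List.nodup_cons, List.mem_cons, List.not_mem_nil, or_false, Fin.ext_iff,
            Fin.val_castAdd, Fin.val_natAdd, not_false_eq_true, List.nodup_nil, and_true]
          omega
        · rw [List.pairwise_ofFn]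
          intro i j hij
          have h1 : ((π i : Fin d) : ℕ) ≠ π j := fun h => hij.ne (π.injective (Fin.ext h))
          have h2 : (i : ℕ) ≠ j := fun h => hij.ne (Fin.ext h)
          have h3 := (π i).2
          have h4 := (π j).2
          intro a ha hb
          simp only [List.mem_cons, List.not_mem_nil, or_false, Fin.ext_iff, Fin.val_castAdd,
            Fin.val_natAdd] at ha hb
          omega
    obtain ⟨τ, hτ⟩ := exists_perm_of_perm hl
    have h1 := key τ (Fin.append x y)
    rw [← h1]
    refine Finset.sum_congr rfl fun ρ _ => ?_
    rw [← hτ, mon_flatten, List.map_ofFn]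
    congr 3
    funext j
    have h2 : extPerm ρ (Fin.castAdd d (π j)) = Fin.castAdd d (ρ (π j)) := by simp [extPerm]
    have h3 : extPerm ρ (Fin.natAdd d j) = Fin.natAdd d j := by
      rw [extPerm, Equiv.trans_apply, finSumFinEquiv_symm_apply_natAdd]
      rfl
    simp only [Function.comp_apply, mon, List.map_cons, List.map_nil, List.prod_cons,
      List.prod_nil, mul_one, h2, h3, Fin.append_left, Fin.append_right]
  · rcases h𝔞.mem_or_mem h with h | h
    · exact (h𝔞.mem_or_mem h).elim hs hs
    · exact hρ₀ (Ideal.Quotient.eq_zero_iff_mem.2 h)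

end Strong

end RelFree

namespace RelFree

/-! ### From strong identities to Capelli identities -/

section StrongToCapelli

variable {C : Type*} [CommRing C] {A : Type*} [Ring A] [Algebra C A]

variable (C A) in
/-- The coefficients occurring in strong identities of degree `d`; it suffices to record the
coefficient of the identity permutation, see `StrongId.mem_strongIdeal`. -/
def strongIdeal (d : ℕ) : Ideal C where
  carrier := {c | ∃ α : Equiv.Perm (Fin d) → C, StrongId A α ∧ α 1 = c}
  zero_mem' := ⟨0, fun π x y => by simp, rfl⟩
  add_mem' := by
    rintro _ _ ⟨α, hα, rfl⟩ ⟨β, hβ, rfl⟩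
    refine ⟨α + β, fun π x y => ?_, rfl⟩
    simp only [Pi.add_apply, add_smul, Finset.sum_add_distrib, hα π x y, hβ π x y, add_zero]
  smul_mem' := by
    rintro c _ ⟨α, hα, rfl⟩
    refine ⟨c • α, fun π x y => ?_, rfl⟩
    simp only [Pi.smul_apply, smul_assoc, ← Finset.smul_sum, hα π x y, smul_zero]

lemma StrongId.mem_strongIdeal {d : ℕ} {α : Equiv.Perm (Fin d) → C} (hα : StrongId A α)
    (τ : Equiv.Perm (Fin d)) : α τ ∈ strongIdeal C A d := by
  refine ⟨fun ρ => α (ρ * τ), fun π x y => ?_, by simp⟩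
  have h1 := Equiv.sum_comp (Equiv.mulRight τ)
    (fun ρ => α ρ • (List.ofFn fun j => x (ρ ((τ⁻¹ * π) j)) * y j).prod)
  rw [hα (τ⁻¹ * π) x y] at h1
  simpa using h1

/-- A strong identity may be applied inside a Capelli polynomial: `d` of its arguments are
factored as `P k * Q k`, and the right factors are permuted. -/
lemma StrongId.sum_cap {d n : ℕ} {α : Equiv.Perm (Fin d) → C} (hα : StrongId A α)
    (e : Fin d ↪ Fin n) (X : Fin n → A) (P Q : Fin d → A) (y : Fin n → A) :
    ∑ ρ, α ρ • cap y (fun i =>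
      (Function.partialInv e i).elim (X i) fun k => P k * Q (ρ k)) = 0 := by
  have hκ := e.injective.isPartialInv
  set κ := Function.partialInv e with hκdef
  simp only [cap, Finset.smul_sum]
  rw [Finset.sum_comm]
  refine Finset.sum_eq_zero fun σ _ => ?_
  let l : List (A ⊕ Fin d) := (List.ofFn fun j : Fin n =>
    (κ (σ j)).elim [Sum.inl (X (σ j))] (fun k => [Sum.inl (P k), Sum.inr k]) ++
      [Sum.inl (y j)]).flatten
  have hl : ∀ x : Fin d → A, ev x l = (List.ofFn fun j =>
      ((κ (σ j)).elim (X (σ j)) fun k => P k * x k) * y j).prod := by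
    intro x
    rw [ev, List.map_flatten, List.prod_flatten, List.map_ofFn, List.map_ofFn]
    congr 2
    funext j
    rcases h : κ (σ j) with _ | k <;> simp [h, mul_assoc]
  have hvars : vars l = (List.ofFn σ).filterMap κ := by
    rw [vars, List.filterMap_flatten, List.map_ofFn, List.filterMap_eq_flatMap_toList,
      List.flatMap_def, List.map_ofFn]
    congr 2
    funext j
    rcases h : κ (σ j) with _ | k <;> simp [h, List.filterMap_cons]
  have hperm : (vars l).Perm (List.finRange d) := by
    rw [hvars, List.perm_ext_iff_of_nodup ?_ (List.nodup_finRange _)]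
    · intro k
      simp only [List.mem_finRange, iff_true, List.mem_filterMap, List.mem_ofFn]
      exact ⟨e k, ⟨σ.symm (e k), by simp⟩, (hκ _ _).2 rfl⟩
    · refine List.Nodup.filterMap (fun a a' b hb hb' => ?_) (List.nodup_ofFn.2 σ.injective)
      exact ((hκ _ _).1 hb).symm.trans ((hκ _ _).1 hb')
  obtain ⟨b, π, z, hb⟩ := ev_eq_perm l hperm
  have h1 := congrArg (b * ·) (hα π Q z)
  simp only [Finset.mul_sum, mul_smul_comm, mul_zero] at h1
  have h2 : ∀ ρ : Equiv.Perm (Fin d), (List.ofFn fun j =>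
      ((κ (σ j)).elim (X (σ j)) fun k => P k * Q (ρ k)) * y j).prod =
      b * (List.ofFn fun j => Q (ρ (π j)) * z j).prod := by
    intro ρ
    rw [← hl (fun k => Q (ρ k)), hb]
  simp only [h2, smul_comm (α _), ← Finset.smul_sum, h1, smul_zero]

variable (C) in
/-- The Capelli polynomial as an alternating map. -/
noncomputable def capAlt {n : ℕ} (y : Fin n → A) : A [⋀^Fin n]→ₗ[C] A :=
  MultilinearMap.alternatization
    ((MultilinearMap.mkPiAlgebraFin C n A).compLinearMap fun j => LinearMap.mulRight C (y j))

lemma capAlt_apply {n : ℕ} (y x : Fin n → A) : capAlt C y x = cap y x := by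
  rw [capAlt, MultilinearMap.alternatization_apply, cap]
  refine Finset.sum_congr rfl fun σ _ => ?_
  rw [Units.smul_def]
  simp [MultilinearMap.domDomCongr_apply, -zsmul_eq_mul]

lemma multilinear_eq_zero {n : ℕ} (f : MultilinearMap C (fun _ : Fin n => A) A) {S : Set A}
    (hS : Submodule.span C S = ⊤) (hf : ∀ x : Fin n → A, (∀ i, x i ∈ S) → f x = 0)
    (x : Fin n → A) : f x = 0 := by
  classical
  suffices h : ∀ (T : Finset (Fin n)) (x : Fin n → A), (∀ i ∉ T, x i ∈ S) → f x = 0 from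
    h Finset.univ x (by simp)
  intro T
  induction T using Finset.induction_on with
  | empty => exact fun x hx => hf x fun i => hx i (Finset.notMem_empty i)
  | insert i T hi ih =>
    intro x hx
    suffices h : ∀ a : A, f (Function.update x i a) = 0 by simpa using h (x i)
    intro a
    have ha : a ∈ Submodule.span C S := hS ▸ Submodule.mem_top
    induction ha using Submodule.span_induction with
    | mem a ha =>
      refine ih _ fun j hj => ?_
      by_cases hji : j = i
      · subst hji
        simpa using ha
      · simpa [hji] using hx j (by simp [hji, hj])
    | zero => exact f.map_coord_zero i (by simp)
    | add a b _ _ ha hb => rw [f.map_update_add, ha, hb, add_zero]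
    | smul c a _ ha => rw [f.map_update_smul, ha, smul_zero]

/-- Rearrangement: attaching strictly shrinking tails to strictly growing heads makes the sum of
squares of the lengths minimal, strictly. -/
lemma sum_sq_lt {d : ℕ} {p q : Fin d → ℕ} (hp : StrictMono p) (hq : StrictAnti q)
    {ρ : Equiv.Perm (Fin d)} (hρ : ρ ≠ 1) :
    ∑ k, (p k + q k) ^ 2 < ∑ k, (p k + q (ρ k)) ^ 2 := by
  have h1 : Antivary p q := fun i j hij => (hp (hq.lt_iff_gt.1 hij)).le
  have h2 : ∑ k, p k * q k < ∑ k, p k * q (ρ k) := by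
    refine h1.sum_mul_lt_sum_mul_comp_perm_iff.2 fun h3 => ?_
    refine hρ (Equiv.ext fun k => ?_)
    have hmono : StrictMono ρ := by
      refine Monotone.strictMono_of_injective (fun i j hij => ?_) ρ.injective
      by_contra! hlt
      have := h3 (i := i) (j := j) (hq hlt)
      rcases hij.eq_or_lt with rfl | hij
      · exact lt_irrefl _ hlt
      · exact absurd (hp hij) (not_lt.2 this)
    have := Subsingleton.elim (hmono.orderIsoOfSurjective ρ ρ.surjective) (OrderIso.refl _)
    exact congrArg (fun f : Fin d ≃o Fin d => f k) this
  have h3 : ∑ k, q (ρ k) ^ 2 = ∑ k, q k ^ 2 := Equiv.sum_comp ρ fun k => q k ^ 2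
  simp only [add_sq, Finset.sum_add_distrib, mul_assoc, ← Finset.mul_sum, h3]
  omega

/-- A strong coefficient kills the Capelli polynomial at words, if there are enough of them. If `d`
of the words have length at least `d`, cut off tails of lengths `d - 1, …, 0` in the order of
growing length; a strong identity replaces the given value by those with permuted tails, where the
total length is the same and the sum of squared lengths is larger. Otherwise two short words
coincide. -/
lemma strongIdeal_smul_cap_mon {ℓ d : ℕ} (r : Fin ℓ → A) {n : ℕ}
    (hn : d + (List.finite_length_lt (Fin ℓ) d).toFinset.card ≤ n) (y : Fin n → A)
    (w : Fin n → List (Fin ℓ)) : ∀ c ∈ strongIdeal C A d, c • cap y (fun i => mon r (w i)) = 0 := by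
  classical
  induction hK : (∑ i, (w i).length) ^ 2 - ∑ i, (w i).length ^ 2 using Nat.strong_induction_on
    generalizing w with
  | _ K ih =>
  by_cases hI : d ≤ (Finset.univ.filter fun i => d ≤ (w i).length).card
  · -- rearrange the tails of `d` long words
    rintro _ ⟨α, hα, rfl⟩
    obtain ⟨I, hI', hcard⟩ := Finset.exists_subset_card_eq hI
    let e₀ : Fin d ↪ Fin n := (I.orderEmbOfFin hcard).toEmbedding
    let τ := Tuple.sort fun k => (w (e₀ k)).length
    let e : Fin d ↪ Fin n := τ.toEmbedding.trans e₀
    have hmono : Monotone fun k => (w (e k)).length :=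
      Tuple.monotone_sort fun k => (w (e₀ k)).length
    have hlong : ∀ k, d ≤ (w (e k)).length := fun k =>
      (Finset.mem_filter.1 (hI' (Finset.orderEmbOfFin_mem I hcard _))).2
    let p : Fin d → List (Fin ℓ) := fun k => (w (e k)).take ((w (e k)).length - (d - 1 - k))
    let q : Fin d → List (Fin ℓ) := fun k => (w (e k)).drop ((w (e k)).length - (d - 1 - k))
    have hpq : ∀ k, w (e k) = p k ++ q k := fun k => (List.take_append_drop _ _).symm
    have hp : ∀ k, (p k).length = (w (e k)).length - (d - 1 - k) := fun k => by simp [p]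
    have hq : ∀ k, (q k).length = d - 1 - k := fun k => by
      have := hlong k
      simp [q]
      omega
    have hκ := e.injective.isPartialInv
    -- the words with the tails permuted by `ρ`
    let w' : Equiv.Perm (Fin d) → Fin n → List (Fin ℓ) := fun ρ i =>
      (Function.partialInv e i).elim (w i) fun k => p k ++ q (ρ k)
    have hw'e : ∀ ρ k, w' ρ (e k) = p k ++ q (ρ k) := fun ρ k => by
      simp only [w', (hκ k (e k)).2 rfl, Option.elim_some]
    have hw'n : ∀ ρ, ∀ i ∈ (Finset.univ.map e)ᶜ, w' ρ i = w i := fun ρ i hi => by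
      have : Function.partialInv e i = none := by
        rcases h : Function.partialInv e i with _ | k
        · rfl
        · rw [Finset.mem_compl, Finset.mem_map] at hi
          exact absurd ⟨k, Finset.mem_univ _, (hκ _ _).1 h⟩ hi
      simp only [w', this, Option.elim_none]
    have hw'1 : w' 1 = w := by
      funext i
      by_cases hi : i ∈ (Finset.univ.map e)ᶜ
      · exact hw'n 1 i hi
      · rw [Finset.mem_compl, not_not, Finset.mem_map] at hi
        obtain ⟨k, -, rfl⟩ := hi
        rw [hw'e, hpq k]
        rfl
    have hsum : ∀ (F : List (Fin ℓ) → ℕ) (ρ : Equiv.Perm (Fin d)), ∑ i, F (w' ρ i) =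
        ∑ k, F (p k ++ q (ρ k)) + ∑ i ∈ (Finset.univ.map e)ᶜ, F (w i) := by
      intro F ρ
      rw [← Finset.sum_add_sum_compl (Finset.univ.map e), Finset.sum_map]
      simp only [hw'e]
      congr 1
      exact Finset.sum_congr rfl fun i hi => by rw [hw'n ρ i hi]
    have hdec : ∀ ρ, ρ ≠ 1 → (∑ i, (w' ρ i).length) ^ 2 - ∑ i, (w' ρ i).length ^ 2 < K := by
      intro ρ hρ
      have h1 : ∑ i, (w' ρ i).length = ∑ i, (w i).length := by
        conv_rhs => rw [← hw'1]
        rw [hsum List.length, hsum List.length]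
        simp only [List.length_append, Finset.sum_add_distrib, Equiv.Perm.one_apply]
        rw [Equiv.sum_comp ρ fun k => (q k).length]
      have h2 : ∑ i, (w i).length ^ 2 < ∑ i, (w' ρ i).length ^ 2 := by
        conv_lhs => rw [← hw'1]
        rw [hsum fun v => v.length ^ 2, hsum fun v => v.length ^ 2]
        simp only [List.length_append, Equiv.Perm.one_apply]
        gcongr ?_ + _
        refine sum_sq_lt (fun i j hij => ?_) (fun i j hij => ?_) hρ
        · have h3 := hmono hij.le
          have h4 := hlong i
          have h5 := j.2
          simp only [hp] at h3 ⊢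
          omega
        · have h5 := j.2
          simp only [hq]
          omega
      have h3 : ∑ i, (w' ρ i).length ^ 2 ≤ (∑ i, (w' ρ i).length) ^ 2 := by
        rw [pow_two, Finset.sum_mul]
        refine Finset.sum_le_sum fun i hi => ?_
        rw [pow_two]
        exact Nat.mul_le_mul_left _
          (Finset.single_le_sum (f := fun i => (w' ρ i).length) (fun _ _ => Nat.zero_le _) hi)
      rw [h1] at h3 ⊢
      omega
    have h1 := hα.sum_cap e (fun i => mon r (w i)) (fun k => mon r (p k)) (fun k => mon r (q k)) y
    have h2 : ∀ ρ : Equiv.Perm (Fin d), (fun i => (Function.partialInv e i).elim (mon r (w i))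
        fun k => mon r (p k) * mon r (q (ρ k))) = fun i => mon r (w' ρ i) := by
      intro ρ
      funext i
      rcases h : Function.partialInv e i with _ | k <;> simp [w', h]
    simp only [h2] at h1
    rw [← Finset.add_sum_erase _ _ (Finset.mem_univ 1), hw'1, Finset.sum_eq_zero, add_zero] at h1
    · exact h1
    · intro ρ hρ
      exact ih _ (hdec ρ (Finset.ne_of_mem_erase hρ)) _ rfl _ (hα.mem_strongIdeal ρ)
  · -- two of the words coincide
    intro c _
    have hcard : (List.finite_length_lt (Fin ℓ) d).toFinset.card <
        (Finset.univ.filter fun i => ¬ d ≤ (w i).length).card := by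
      have := Finset.card_filter_add_card_filter_not (s := (Finset.univ : Finset (Fin n)))
        (fun i => d ≤ (w i).length)
      rw [Finset.card_univ, Fintype.card_fin] at this
      omega
    obtain ⟨i, hi, j, hj, hij, hw⟩ := Finset.exists_ne_map_eq_of_card_lt_of_maps_to hcard
      (f := w) (fun i hi => by simpa using hi)
    rw [← capAlt_apply (C := C), (capAlt C y).map_eq_zero_of_eq _ (by rw [hw]) hij, smul_zero]

/-- The strong coefficients annihilate the values of a Capelli polynomial. -/
lemma exists_strongIdeal_smul_cap {ℓ : ℕ} (r : Fin ℓ → A)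
    (hr : Submodule.span C (Set.range (mon r)) = ⊤) (d : ℕ) :
    ∃ n : ℕ, ∀ c ∈ strongIdeal C A d, ∀ y x : Fin n → A, c • cap y x = 0 := by
  refine ⟨d + (List.finite_length_lt (Fin ℓ) d).toFinset.card, fun c hc y x => ?_⟩
  rw [← capAlt_apply (C := C)]
  refine multilinear_eq_zero (c • (capAlt C y).toMultilinearMap) hr (fun x hx => ?_) x
  choose w hw using hx
  obtain rfl : (fun i => mon r (w i)) = x := funext hw
  have := strongIdeal_smul_cap_mon (C := C) r le_rfl y w c hc
  rwa [← capAlt_apply (C := C)] at this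

end StrongToCapelli

end RelFree

namespace RelFree

/-! ### Noetherian induction on the scalars -/

section Main

universe u

variable {C : Type*} [CommRing C]

/-- The ideal `𝔟A` generated by an ideal `𝔟` of scalars. -/
def scalarIdeal (A : Type*) [Ring A] [Algebra C A] (𝔟 : Ideal C) : Ideal A where
  carrier := {a | a ∈ (𝔟 • (⊤ : Submodule C A) : Submodule C A)}
  zero_mem' := zero_mem (𝔟 • (⊤ : Submodule C A) : Submodule C A)
  add_mem' := fun hx hy => Submodule.add_mem (𝔟 • (⊤ : Submodule C A) : Submodule C A) hx hy
  smul_mem' := fun a x hx => by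
    refine Submodule.smul_induction_on
      (p := fun x => a * x ∈ (𝔟 • (⊤ : Submodule C A) : Submodule C A)) hx ?_ ?_
    · intro c hc n _
      rw [mul_smul_comm]
      exact Submodule.smul_mem_smul hc Submodule.mem_top
    · intro x y hx hy
      rw [mul_add]
      exact add_mem hx hy

/-- The elements of `A` killed by all scalars in `𝔠`. -/
def scalarAnnihilator (A : Type*) [Ring A] [Algebra C A] (𝔠 : Ideal C) : Ideal A where
  carrier := {a | ∀ c ∈ 𝔠, c • a = 0}
  zero_mem' := fun c _ => smul_zero c
  add_mem' := fun {a b} ha hb c hc => by rw [smul_add, ha c hc, hb c hc, add_zero]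
  smul_mem' := fun b a ha c hc => by rw [smul_eq_mul, ← mul_smul_comm, ha c hc, mul_zero]

/-- Every relation between the generators `r` is an identity of `A`. -/
def RF (C : Type*) [CommRing C] {A : Type*} [Ring A] [Algebra C A] {ℓ : ℕ} (r : Fin ℓ → A) : Prop :=
  ∀ f : List (Fin ℓ) →₀ C, (f.sum fun w c => c • mon r w) = 0 →
    ∀ a : Fin ℓ → A, (f.sum fun w c => c • mon a w) = 0

section

variable {A : Type*} [Ring A] [Algebra C A]

lemma mem_scalarIdeal {𝔟 : Ideal C} {a : A} :
    a ∈ scalarIdeal A 𝔟 ↔ a ∈ (𝔟 • (⊤ : Submodule C A) : Submodule C A) := Iff.rfl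

lemma smul_mem_scalarIdeal {𝔟 : Ideal C} {c : C} (hc : c ∈ 𝔟) (a : A) :
    c • a ∈ scalarIdeal A 𝔟 :=
  mem_scalarIdeal.2 (Submodule.smul_mem_smul hc Submodule.mem_top)

lemma scalarIdeal_induction {𝔟 : Ideal C} {p : A → Prop} (hs : ∀ c ∈ 𝔟, ∀ a : A, p (c • a))
    (ha : ∀ x y, p x → p y → p (x + y)) {x : A} (hx : x ∈ scalarIdeal A 𝔟) : p x :=
  Submodule.smul_induction_on (mem_scalarIdeal.1 hx) (fun c hc a _ => hs c hc a) ha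

instance scalarIdeal.isTwoSided (𝔟 : Ideal C) : (scalarIdeal A 𝔟).IsTwoSided := by
  refine ⟨fun {x} a hx => ?_⟩
  refine scalarIdeal_induction (p := fun x => x * a ∈ scalarIdeal A 𝔟) ?_ ?_ hx
  · intro c hc n
    rw [smul_mul_assoc]
    exact smul_mem_scalarIdeal hc _
  · intro x y hx hy
    rw [add_mul]
    exact add_mem hx hy

instance scalarAnnihilator.isTwoSided (𝔠 : Ideal C) : (scalarAnnihilator A 𝔠).IsTwoSided :=
  ⟨fun b ha c hc => by rw [← smul_mul_assoc, ha c hc, zero_mul]⟩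

lemma map_mon {B : Type*} [Ring B] {ℓ : ℕ} (f : A →+* B) (r : Fin ℓ → A) (w : List (Fin ℓ)) :
    f (mon r w) = mon (f ∘ r) w := by
  simp [mon, map_list_prod]

lemma RF.quotient {ℓ : ℕ} {r : Fin ℓ → A} (hr : Submodule.span C (Set.range (mon r)) = ⊤)
    (h : RF C r) (𝔟 : Ideal C) : RF C (Ideal.Quotient.mkₐ C (scalarIdeal A 𝔟) ∘ r) := by
  intro f hf a
  set κ := Ideal.Quotient.mkₐ C (scalarIdeal A 𝔟) with hκ
  have hκ0 : ∀ c ∈ 𝔟, ∀ b : A ⧸ scalarIdeal A 𝔟, c • b = 0 := by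
    intro c hc b
    obtain ⟨b, rfl⟩ := Ideal.Quotient.mkₐ_surjective C (scalarIdeal A 𝔟) b
    rw [← map_smul]
    exact Ideal.Quotient.eq_zero_iff_mem.2 (smul_mem_scalarIdeal hc _)
  obtain ⟨a, rfl⟩ := (Ideal.Quotient.mkₐ_surjective C (scalarIdeal A 𝔟)).comp_left a
  have hmap : ∀ (g : List (Fin ℓ) →₀ C) (a : Fin ℓ → A),
      κ (g.sum fun w c => c • mon a w) = g.sum fun w c => c • mon (κ ∘ a) w := by
    intro g a
    rw [map_finsuppSum]
    refine Finsupp.sum_congr fun w _ => ?_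
    rw [map_smul]
    congr 1
    exact map_mon (κ : A →+* A ⧸ scalarIdeal A 𝔟) a w
  -- a relation modulo `𝔟A` becomes a relation of `A` after changing coefficients modulo `𝔟`
  have hmem : (f.sum fun w c => c • mon r w) ∈ (𝔟 • (⊤ : Submodule C A) : Submodule C A) :=
    mem_scalarIdeal.1 (Ideal.Quotient.eq_zero_iff_mem.1 ((hmap f r).trans hf))
  rw [← hr] at hmem
  obtain ⟨g, hg, hgf⟩ := (Submodule.mem_ideal_smul_span_iff_exists_sum _ _ _).1 hmem
  have hsub : ∀ b : Fin ℓ → A, ((f - g).sum fun w c => c • mon b w) =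
      (f.sum fun w c => c • mon b w) - g.sum fun w c => c • mon b w := fun b =>
    Finsupp.sum_sub_index fun w c c' => sub_smul c c' _
  have h1 := h (f - g) (by rw [hsub, hgf, sub_self]) a
  rw [hsub, sub_eq_zero] at h1
  have h2 := (hmap f a).symm.trans ((congrArg κ h1).trans (hmap g a))
  refine h2.trans (Finset.sum_eq_zero fun w _ => ?_)
  exact hκ0 _ (hg w) _

/-- If all relations are trivial modulo the prime `𝔞`, then `A` has no nilpotent elements, as the
free algebra over a domain has none. -/
lemma eq_zero_of_pow_eq_zero {ℓ : ℕ} {r : Fin ℓ → A}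
    (hr : Submodule.span C (Set.range (mon r)) = ⊤) (𝔞 : Ideal C) [𝔞.IsPrime]
    (hA : ∀ c ∈ 𝔞, ∀ a : A, c • a = 0)
    (htriv : ∀ f : List (Fin ℓ) →₀ C, (f.sum fun w c => c • mon r w) = 0 → ∀ w, f w ∈ 𝔞)
    {z : A} {k : ℕ} (hz : z ^ k = 0) : z = 0 := by
  let Φ := MonoidAlgebra.lift C A (FreeMonoid (Fin ℓ)) (FreeMonoid.lift r)
  have hΦ : ∀ F : MonoidAlgebra C (FreeMonoid (Fin ℓ)),
      Φ F = Finsupp.sum (α := List (Fin ℓ)) F.coeff fun w c => c • mon r w := by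
    intro F
    rw [MonoidAlgebra.lift_apply]
    refine Finsupp.sum_congr fun w _ => ?_
    rw [FreeMonoid.lift_apply]
    rfl
  have hz' : z ∈ Submodule.span C (Set.range (mon r)) := hr ▸ Submodule.mem_top
  obtain ⟨f, hf⟩ := Finsupp.mem_span_range_iff_exists_finsupp.1 hz'
  let F : MonoidAlgebra C (FreeMonoid (Fin ℓ)) := MonoidAlgebra.ofCoeff f
  have hF : Φ F = z := (hΦ F).trans hf
  let q := MonoidAlgebra.mapRingHom (FreeMonoid (Fin ℓ)) (Ideal.Quotient.mk 𝔞)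
  have hq : q F ^ k = 0 := by
    rw [← map_pow]
    have h1 : Φ (F ^ k) = 0 := by rw [map_pow, hF, hz]
    rw [hΦ] at h1
    have h2 := htriv _ h1
    ext w
    rw [MonoidAlgebra.coeff_mapRingHom]
    exact Ideal.Quotient.eq_zero_iff_mem.2 (h2 w)
  have hq0 : q F = 0 := (IsReduced.eq_zero _ ⟨k, hq⟩)
  rw [← hf]
  refine Finset.sum_eq_zero fun w _ => hA _ ?_ _
  have h3 := congrArg (fun G => G.coeff (FreeMonoid.ofList w)) hq0
  exact Ideal.Quotient.eq_zero_iff_mem.1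
    ((MonoidAlgebra.coeff_mapRingHom (Ideal.Quotient.mk 𝔞) F (FreeMonoid.ofList w)).symm.trans h3)

end

/-- The strongly nilpotent elements of a relatively free affine algebra over a Noetherian ring are
uniformly nilpotent. The induction is over the ideals `𝔞` of `C` annihilating the algebra. -/
theorem NB.of_rf [IsNoetherianRing C] {ℓ : ℕ} (𝔞 : Ideal C) : ∀ {A : Type u} [Ring A] [Algebra C A]
    (r : Fin ℓ → A), Submodule.span C (Set.range (mon r)) = ⊤ → RF C r →
      (∀ c ∈ 𝔞, ∀ a : A, c • a = 0) → NB A := by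
  refine IsNoetherian.induction (R := C) (M := C) (P := fun 𝔞 : Ideal C => ∀ {A : Type u} [Ring A]
    [Algebra C A] (r : Fin ℓ → A), Submodule.span C (Set.range (mon r)) = ⊤ → RF C r →
      (∀ c ∈ 𝔞, ∀ a : A, c • a = 0) → NB A) ?_ 𝔞
  clear 𝔞
  intro (𝔞 : Ideal C) ih A _ _ r hr hrf hA
  -- products of many strongly nilpotent elements lie in `𝔟A`
  have hlift : ∀ 𝔟 : Ideal C, 𝔟 > 𝔞 → ∃ q : ℕ, ∀ l : List A, l.length = q → (∀ z ∈ l, SN z) →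
      l.prod ∈ scalarIdeal A 𝔟 := by
    intro 𝔟 h𝔟
    have hB : NB (A ⧸ scalarIdeal A 𝔟) := by
      refine ih 𝔟 h𝔟 _ (span_mon_map hr _ (Ideal.Quotient.mkₐ_surjective C _)) (RF.quotient hr hrf 𝔟) ?_
      intro c hc b
      obtain ⟨b, rfl⟩ := Ideal.Quotient.mkₐ_surjective C (scalarIdeal A 𝔟) b
      rw [← map_smul]
      exact Ideal.Quotient.eq_zero_iff_mem.2 (smul_mem_scalarIdeal hc _)
    obtain ⟨q, hq⟩ := hB.lift (f := Ideal.Quotient.mk (scalarIdeal A 𝔟))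
      Ideal.Quotient.mk_surjective
    exact ⟨q, fun l hl hz => Ideal.Quotient.eq_zero_iff_mem.1 (hq l hl hz)⟩
  by_cases hprime : 𝔞.IsPrime
  swap
  · rcases Ideal.not_isPrime_iff.1 hprime with rfl | ⟨x, hx, y, hy, hxy⟩
    · have : Subsingleton A := ⟨fun a b => by
        rw [← one_smul C a, ← one_smul C b, hA 1 Submodule.mem_top, hA 1 Submodule.mem_top]⟩
      exact NB.of_subsingleton
    · have hgt : ∀ x ∉ 𝔞, 𝔞 ⊔ Ideal.span {x} > 𝔞 := fun x hx =>
        lt_of_le_of_ne le_sup_left fun h => hx (h ▸ Submodule.mem_sup_right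
          (Ideal.mem_span_singleton_self x))
      refine NB.of_mul (P := (· ∈ scalarIdeal A (𝔞 ⊔ Ideal.span {x})))
        (Q := (· ∈ scalarIdeal A (𝔞 ⊔ Ideal.span {y}))) (fun u v hu hv => ?_)
        (hlift _ (hgt x hx)) (hlift _ (hgt y hy))
      have hmul : ∀ c ∈ 𝔞 ⊔ Ideal.span {x}, ∀ c' ∈ 𝔞 ⊔ Ideal.span {y}, c * c' ∈ 𝔞 := by
        intro c hc c' hc'
        obtain ⟨s, hs, t, ht, rfl⟩ := Submodule.mem_sup.1 hc
        obtain ⟨s', hs', t', ht', rfl⟩ := Submodule.mem_sup.1 hc'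
        obtain ⟨e, rfl⟩ := Ideal.mem_span_singleton'.1 ht
        obtain ⟨e', rfl⟩ := Ideal.mem_span_singleton'.1 ht'
        have : (s + e * x) * (s' + e' * y) = s * (s' + e' * y) + (e * x) * s' +
          (e * e') * (x * y) := by ring
        rw [this]
        exact add_mem (add_mem (Ideal.mul_mem_right _ _ hs) (Ideal.mul_mem_left _ _ hs'))
          (Ideal.mul_mem_left _ _ hxy)
      refine scalarIdeal_induction (p := fun u => u * v = 0) ?_ ?_ hu
      · intro c hc a
        refine scalarIdeal_induction (p := fun v => c • a * v = 0) ?_ ?_ hv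
        · intro c' hc' a'
          rw [smul_mul_smul_comm]
          exact hA _ (hmul c hc c' hc') _
        · intro v v' h h'
          rw [mul_add, h, h', add_zero]
      · intro u u' h h'
        rw [add_mul, h, h', add_zero]
  by_cases htriv : ∀ f : List (Fin ℓ) →₀ C, (f.sum fun w c => c • mon r w) = 0 → ∀ w, f w ∈ 𝔞
  · refine ⟨1, fun l hl hz => ?_⟩
    obtain ⟨z, rfl⟩ := List.length_eq_one_iff.1 hl
    obtain ⟨k, hk⟩ := hz z (by simp)
    rw [List.prod_singleton]
    exact eq_zero_of_pow_eq_zero hr 𝔞 hA htriv (k := k) (by simpa using hk (List.replicate k 1))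
  -- now some relation, hence some identity, has a coefficient outside the prime `𝔞`
  push Not at htriv
  obtain ⟨f, hf, hne⟩ := htriv
  obtain ⟨m, g, hg1, hg⟩ := exists_multilinear 𝔞 hA f (hrf f hf) hne
  obtain ⟨d, α, hα, ρ, hρ⟩ := exists_strongId 𝔞 hA hg1 hg
  obtain ⟨n, hn⟩ := exists_strongIdeal_smul_cap (C := C) r hr d
  set 𝔠 := strongIdeal C A d with h𝔠
  have hgt : 𝔞 ⊔ 𝔠 > 𝔞 := lt_of_le_of_ne le_sup_left fun h =>
    hρ (h ▸ Submodule.mem_sup_right (hα.mem_strongIdeal ρ))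
  have hB : NB (A ⧸ scalarAnnihilator A 𝔠) := by
    refine NB.of_cap n _ (span_mon_map hr _
      (Ideal.Quotient.mkₐ_surjective C (scalarAnnihilator A 𝔠))) fun x y => ?_
    obtain ⟨x, rfl⟩ := (Ideal.Quotient.mk_surjective (I := scalarAnnihilator A 𝔠)).comp_left x
    obtain ⟨y, rfl⟩ := (Ideal.Quotient.mk_surjective (I := scalarAnnihilator A 𝔠)).comp_left y
    exact (map_cap (Ideal.Quotient.mk (scalarAnnihilator A 𝔠)) y x).symm.trans
      (Ideal.Quotient.eq_zero_iff_mem.2 fun c hc => hn c hc y x)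
  obtain ⟨q, hq⟩ := hB.lift (f := Ideal.Quotient.mk (scalarAnnihilator A 𝔠))
    Ideal.Quotient.mk_surjective
  refine NB.of_mul (P := (· ∈ scalarAnnihilator A 𝔠)) (Q := (· ∈ scalarIdeal A (𝔞 ⊔ 𝔠)))
    (fun u v hu hv => ?_)
    ⟨q, fun l hl hz => Ideal.Quotient.eq_zero_iff_mem.1 (hq l hl hz)⟩ (hlift _ hgt)
  refine scalarIdeal_induction (p := fun v => u * v = 0) ?_ ?_ hv
  · intro c hc a
    obtain ⟨s, hs, t, ht, rfl⟩ := Submodule.mem_sup.1 hc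
    rw [mul_smul_comm, ← smul_mul_assoc, add_smul, hA s hs, hu t ht, add_zero, zero_mul]
  · intro v v' h h'
    rw [mul_add, h, h', add_zero]

end Main

/-! ### The largest nilpotent T-ideal -/

section Closure

variable {A : Type*} [Ring A]

lemma SN.mul_right {z : A} (hz : SN z) (a : A) : SN (z * a) := by
  obtain ⟨k, hk⟩ := hz
  refine ⟨k, fun l hl => ?_⟩
  have := hk (l.map (a * ·)) (by simpa using hl)
  simpa [List.map_map, Function.comp_def, mul_assoc] using this

/-- Uniform nilpotency extends from strongly nilpotent elements to sums of such. -/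
lemma NB.prod_closure (h : NB A) : ∃ q : ℕ, ∀ l : List A, l.length = q →
    (∀ z ∈ l, z ∈ AddSubgroup.closure {z : A | SN z}) → l.prod = 0 := by
  obtain ⟨q, hq⟩ := h
  have key : ∀ l₂ : List A, (∀ z ∈ l₂, z ∈ AddSubgroup.closure {z : A | SN z}) →
      ∀ l₁ : List A, (∀ z ∈ l₁, SN z) → l₁.length + l₂.length = q → l₁.prod * l₂.prod = 0 := by
    intro l₂
    induction l₂ with
    | nil =>
      intro _ l₁ h₁ hl
      simpa using hq l₁ (by simpa using hl) h₁
    | cons z l₂ ih =>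
      intro h₂ l₁ h₁ hl
      rw [List.prod_cons]
      refine AddSubgroup.closure_induction
        (p := fun z _ => l₁.prod * (z * l₂.prod) = 0) ?_ ?_ ?_ ?_ (h₂ z (by simp))
      · intro z hz
        have := ih (fun z hz => h₂ z (by simp [hz])) (l₁ ++ [z]) ?_ (by simp at hl ⊢; omega)
        · simpa [mul_assoc] using this
        · intro y hy
          rcases List.mem_append.1 hy with hy | hy
          · exact h₁ y hy
          · rw [List.mem_singleton.1 hy]
            exact hz
      · simp
      · intro x y _ _ hx hy
        rw [add_mul, mul_add, hx, hy, add_zero]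
      · intro x _ hx
        rw [neg_mul, mul_neg, hx, neg_zero]
  exact ⟨q, fun l hl hz => by simpa using key l hz [] (by simp) (by simpa using hl)⟩

/-- The ideal of all sums of strongly nilpotent elements. -/
def snIdeal (A : Type*) [Ring A] : TwoSidedIdeal A :=
  TwoSidedIdeal.mk' (AddSubgroup.closure {z : A | SN z}) (zero_mem _) add_mem neg_mem
    (fun {x y} hy => by
      refine AddSubgroup.closure_induction
        (p := fun y _ => x * y ∈ AddSubgroup.closure {z : A | SN z}) ?_ ?_ ?_ ?_ hy
      · exact fun z hz => AddSubgroup.subset_closure (hz.mul_left x)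
      · simp
      · intro a b _ _ ha hb
        rw [mul_add]
        exact add_mem ha hb
      · intro a _ ha
        rw [mul_neg]
        exact neg_mem ha)
    (fun {x y} hx => by
      refine AddSubgroup.closure_induction
        (p := fun x _ => x * y ∈ AddSubgroup.closure {z : A | SN z}) ?_ ?_ ?_ ?_ hx
      · exact fun z hz => AddSubgroup.subset_closure (hz.mul_right y)
      · simp
      · intro a b _ _ ha hb
        rw [add_mul]
        exact add_mem ha hb
      · intro a _ ha
        rw [neg_mul]
        exact neg_mem ha)

lemma mem_snIdeal {z : A} : z ∈ snIdeal A ↔ z ∈ AddSubgroup.closure {z : A | SN z} := by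
  rw [snIdeal, TwoSidedIdeal.mem_mk']
  rfl

end Closure

end RelFree

namespace RelFree

section Presentation

variable {C : Type*} [CommRing C] {ℓ : ℕ} {A : Type*} [Ring A] [Algebra C A]

lemma span_mon_ι : Submodule.span C (Set.range (mon (FreeAlgebra.ι C (X := Fin ℓ)))) = ⊤ := by
  set M := Submodule.span C (Set.range (mon (FreeAlgebra.ι C (X := Fin ℓ)))) with hM
  have hmul : ∀ x ∈ M, ∀ y ∈ M, x * y ∈ M := by
    intro x hx y hy
    have h := Submodule.mul_mem_mul hx hy
    rw [hM, Submodule.span_mul_span] at h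
    refine Submodule.span_mono ?_ h
    rintro _ ⟨_, ⟨u, rfl⟩, _, ⟨v, rfl⟩, rfl⟩
    exact ⟨u ++ v, by simp [mon]⟩
  have hone : (1 : FreeAlgebra C (Fin ℓ)) ∈ M := Submodule.subset_span ⟨[], by simp [mon]⟩
  refine eq_top_iff.2 fun x _ => ?_
  refine FreeAlgebra.induction C (Fin ℓ) (motive := fun x => x ∈ M) ?_ ?_ ?_ ?_ x
  · intro c
    rw [Algebra.algebraMap_eq_smul_one]
    exact M.smul_mem c hone
  · exact fun i => Submodule.subset_span ⟨[i], by simp [mon]⟩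
  · exact fun a b ha hb => hmul a ha b hb
  · exact fun a b ha hb => M.add_mem ha hb

/-- Stability of the kernel of `π` under substitutions says that relations are identities. -/
lemma rf_of_ker (π : FreeAlgebra C (Fin ℓ) →ₐ[C] A) (hsurj : Function.Surjective π)
    (hker : ∀ (φ : FreeAlgebra C (Fin ℓ) →ₐ[C] FreeAlgebra C (Fin ℓ))
      (x : FreeAlgebra C (Fin ℓ)), π x = 0 → π (φ x) = 0) : RF C (π ∘ FreeAlgebra.ι C) := by
  intro f hf a
  obtain ⟨b, rfl⟩ := hsurj.comp_left a
  have hmap : ∀ (θ : FreeAlgebra C (Fin ℓ) →ₐ[C] A),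
      θ (f.sum fun w c => c • mon (FreeAlgebra.ι C) w) =
        f.sum fun w c => c • mon (θ ∘ FreeAlgebra.ι C) w := by
    intro θ
    rw [map_finsuppSum]
    refine Finsupp.sum_congr fun w _ => ?_
    rw [map_smul]
    congr 1
    exact map_mon (θ : FreeAlgebra C (Fin ℓ) →+* A) _ w
  have h := hker (FreeAlgebra.lift C b) _ ((hmap π).trans hf)
  have h' := (hmap (π.comp (FreeAlgebra.lift C b))).symm.trans h
  have hb : (π.comp (FreeAlgebra.lift C b)) ∘ FreeAlgebra.ι C = π ∘ b := by
    funext i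
    simp
  rwa [hb] at h'

lemma le_snIdeal {N : TwoSidedIdeal A} (hN : IsNilpotentTwoSidedIdeal N) : N ≤ snIdeal A := by
  intro z hz
  obtain ⟨m, hm⟩ := hN
  refine mem_snIdeal.2 (AddSubgroup.subset_closure ⟨m, fun l hl => ?_⟩)
  subst hl
  have h := hm ((z * ·) ∘ l.get) fun _ => N.mul_mem_right _ _ hz
  rwa [← List.map_ofFn, List.ofFn_get] at h

end Presentation

end RelFree

/-- Let `A` be the relatively free affine algebra `FreeAlgebra C (Fin ℓ) / I` for a T-ideal
`I` over a commutative Noetherian ring `C`; here `A` is presented as a `C`-algebra together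
with a surjective `C`-algebra homomorphism `π` from the free algebra whose kernel (the
T-ideal `I`) is stable under all endomorphisms of the free algebra.  Then `A` has a unique
maximal nilpotent T-ideal: a nilpotent T-ideal `N` containing every nilpotent T-ideal. -/
theorem stmt18 (C : Type*) [CommRing C] [IsNoetherianRing C] (ℓ : ℕ)
    (A : Type*) [Ring A] [Algebra C A]
    (π : FreeAlgebra C (Fin ℓ) →ₐ[C] A) (hsurj : Function.Surjective π)
    (hker : ∀ (φ : FreeAlgebra C (Fin ℓ) →ₐ[C] FreeAlgebra C (Fin ℓ))
      (x : FreeAlgebra C (Fin ℓ)), π x = 0 → π (φ x) = 0) :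
    ∃ N : TwoSidedIdeal A, IsTIdeal C A N ∧ IsNilpotentTwoSidedIdeal N ∧
      ∀ N' : TwoSidedIdeal A, IsTIdeal C A N' → IsNilpotentTwoSidedIdeal N' → N' ≤ N := by
  classical
  have hNB : RelFree.NB A :=
    RelFree.NB.of_rf (⊥ : Ideal C) (π ∘ FreeAlgebra.ι C)
      (RelFree.span_mon_map RelFree.span_mon_ι π hsurj) (RelFree.rf_of_ker π hsurj hker)
      fun c hc a => by rw [Ideal.mem_bot.1 hc, zero_smul]
  let S : Set (TwoSidedIdeal A) := {N' | IsTIdeal C A N' ∧ IsNilpotentTwoSidedIdeal N'}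
  refine ⟨sSup S, fun φ => ?_, ?_, fun N' h h' => le_sSup (a := N') ⟨h, h'⟩⟩
  · -- the preimage of the supremum under `φ` contains every member of `S`
    have hle : sSup S ≤ TwoSidedIdeal.comap φ (sSup S) := by
      refine sSup_le fun N' hN' x hx => ?_
      rw [TwoSidedIdeal.mem_comap]
      exact le_sSup hN' (hN'.1 φ x hx)
    exact fun x hx => (TwoSidedIdeal.mem_comap φ).1 (hle hx)
  · obtain ⟨q, hq⟩ := hNB.prod_closure
    refine ⟨q, fun f hf => hq _ (List.length_ofFn) fun z hz => ?_⟩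
    obtain ⟨i, rfl⟩ := (List.mem_ofFn' f z).1 hz
    have hle : sSup S ≤ RelFree.snIdeal A := sSup_le fun N' hN' => RelFree.le_snIdeal hN'.2
    exact RelFree.mem_snIdeal.1 (hle (hf i))
end
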